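/- arXiv:1512.09006 — 2 statements merged into one kernel-verified Lean document; each statement's English description precedes it below -/
import Mathlib

section
/- There exists an absolute constant c > 0 such that for all positive integers m and n with m^{1/2} ≤ n ≤ m^2, every set P of m points and every set L of n lines in ℝ² determine at least c · m^{1/5} n^{3/5} distinct point-line distances, i.e., |{d(p,ℓ) : p ∈ P, ℓ ∈ L}| ≥ c · m^{1/5} n^{3/5}. -/
noncomputable section

abbrev Pt2 := EuclideanSpace ℝ (Fin 2)

/-- A line in the plane: the set of points `a + t • v` for a nonzero direction `v`. -/
def IsLine2 (l : Set Pt2) : Prop :=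
  ∃ a v : Pt2, v ≠ 0 ∧ l = {x : Pt2 | ∃ t : ℝ, x = a + t • v}

open Classical in
theorem aux_avg {ι J : Type*} (p w : ℝ) (hp0 : 0 ≤ p) (hp1 : p ≤ 1) (S : Finset J) (A : J → Finset ι)
    (C : Finset ι) : ∀ u : J → ℝ, (∀ j, 0 ≤ u j) →
    ∃ R ⊆ C, w * R.card + ∑ j ∈ S, (if Disjoint R (A j) then u j else 0) ≤
      w * C.card * p + ∑ j ∈ S, u j * (1 - p) ^ ((A j ∩ C).card) := by
  induction C using Finset.induction_on with
  | empty => 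
    intro u hu
    exact ⟨∅, by simp, by simp⟩
  | insert a C ha ih =>
    intro u hu
    obtain ⟨R0, hR0, h0⟩ := ih u hu
    obtain ⟨R1, hR1, h1⟩ := ih (fun j => if a ∈ A j then 0 else u j) (fun j => by
      split_ifs; exacts [le_rfl, hu j])
    set B0 := w * C.card * p + ∑ j ∈ S, u j * (1 - p) ^ ((A j ∩ C).card) with hB0
    set B1 := w * C.card * p + ∑ j ∈ S, (if a ∈ A j then 0 else u j) * (1 - p) ^ ((A j ∩ C).card) with hB1
    have haR1 : a ∉ R1 := fun h => ha (hR1 h)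
    have htar : p * (w + B1) + (1 - p) * B0 = w * (insert a C).card * p
        + ∑ j ∈ S, u j * (1 - p) ^ ((A j ∩ insert a C).card) := by
      rw [hB0, hB1, Finset.card_insert_of_notMem ha]
      have : ∑ j ∈ S, u j * (1 - p) ^ ((A j ∩ insert a C).card) = 
        p * ∑ j ∈ S, (if a ∈ A j then 0 else u j) * (1 - p) ^ ((A j ∩ C).card)
        + (1 - p) * ∑ j ∈ S, u j * (1 - p) ^ ((A j ∩ C).card) := by
        rw [Finset.mul_sum, Finset.mul_sum, ← Finset.sum_add_distrib]
        apply Finset.sum_congr rfl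
        intro j _
        by_cases h : a ∈ A j
        · rw [Finset.inter_insert_of_mem h, Finset.card_insert_of_notMem (by simp [ha]), if_pos h]
          ring
        · rw [Finset.inter_insert_of_notMem h, if_neg h]; ring
      rw [this]; push_cast; ring
    rw [← htar]
    by_cases hc : w + B1 ≤ B0
    · refine ⟨insert a R1, Finset.insert_subset_insert a hR1, ?_⟩
      have : w * (insert a R1).card + ∑ j ∈ S, (if Disjoint (insert a R1) (A j) then u j else 0) ≤ w + B1 := by
        rw [Finset.card_insert_of_notMem haR1]
        have : ∑ j ∈ S, (if Disjoint (insert a R1) (A j) then u j else 0) = 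
          ∑ j ∈ S, (if Disjoint R1 (A j) then (if a ∈ A j then 0 else u j) else 0) := by
          apply Finset.sum_congr rfl
          intro j _
          simp only [Finset.disjoint_insert_left]
          by_cases h : a ∈ A j <;> by_cases h' : Disjoint R1 (A j) <;> simp [h, h']
        rw [this]; push_cast; linarith
      nlinarith
    · refine ⟨R0, hR0.trans (Finset.subset_insert a C), ?_⟩
      push Not at hc
      nlinarith

open Classical in
theorem aux_rank {ι : Type*} (x : ℝ) (hx0 : 0 ≤ x) (hx1 : x ≤ 1) (f : ι → ℝ) (T : Finset ι) :
    ∑ c ∈ T, x ^ (T.filter (fun g => g ≠ c ∧ f g ≤ f c)).card ≤ ∑ j ∈ Finset.range T.card, x ^ j := by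
  induction h : T.card generalizing T with
  | zero => simp [Finset.card_eq_zero.mp h]
  | succ n ih =>
    obtain ⟨c, hc, hmax⟩ := Finset.exists_max_image T f (Finset.card_pos.mp (by omega))
    have h2 : (T.erase c).card = n := by rw [Finset.card_erase_of_mem hc]; omega
    rw [← Finset.add_sum_erase T _ hc, Finset.sum_range_succ, add_comm]
    refine add_le_add (le_trans (Finset.sum_le_sum ?_) (ih _ h2)) ?_
    · intro i hi
      apply pow_le_pow_of_le_one hx0 hx1
      apply Finset.card_le_card
      intro g
      simp only [Finset.mem_filter, Finset.mem_erase]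
      tauto
    · apply le_of_eq
      congr 1
      rw [← h2]
      congr 1
      ext g
      simp only [Finset.mem_filter, Finset.mem_erase]
      exact ⟨fun h => ⟨h.2.1, h.1⟩, fun h => ⟨h.2, h.1, hmax g h.2⟩⟩

theorem aux_geom (q : ℝ) (hq : 1 ≤ q) (n : ℕ) : ∑ j ∈ Finset.range n, (1 - 1/q) ^ j ≤ q := by
  have h : (1/q) * ∑ j ∈ Finset.range n, (1 - 1/q) ^ j = 1 - (1-1/q)^n := by
    have := mul_neg_geom_sum (1 - 1/q) n
    rw [← this]; ring
  have h2 : 0 ≤ (1 - 1/q)^n := by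
    apply pow_nonneg
    rw [sub_nonneg, div_le_one (by linarith)]; exact hq
  have h3 : (1/q) * ∑ j ∈ Finset.range n, (1 - 1/q) ^ j ≤ 1 := by linarith
  rw [one_div, inv_mul_le_iff₀ (by linarith)] at h3
  rw [one_div]
  linarith

abbrev V2 := ℝ × ℝ

/-- consecutive points of `Q` on the curve `c` -/
def IsEdge {ι : Type*} (f : ι → ℝ → ℝ) (C : Finset ι) (Q : Finset V2) (e : V2 × V2 × ι) : Prop :=
  e.1 ∈ Q ∧ e.2.1 ∈ Q ∧ e.2.2 ∈ C ∧ f e.2.2 e.1.1 = e.1.2 ∧ f e.2.2 e.2.1.1 = e.2.1.2 ∧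
    e.1.1 < e.2.1.1 ∧ ∀ z ∈ Q, e.1.1 < z.1 → z.1 < e.2.1.1 → f e.2.2 z.1 ≠ z.2

theorem IsEdge.ext {ι : Type*} {f : ι → ℝ → ℝ} {C : Finset ι} {Q : Finset V2} {e e' : V2 × V2 × ι}
    (h : IsEdge f C Q e) (h' : IsEdge f C Q e') (hc : e.2.2 = e'.2.2)
    (hl : e.1.1 = e'.1.1) : e = e' := by
  obtain ⟨q, r, c⟩ := e
  obtain ⟨q', r', c'⟩ := e'
  obtain ⟨h1, h2, h3, h4, h5, h6, h7⟩ := h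
  obtain ⟨h1', h2', h3', h4', h5', h6', h7'⟩ := h'
  dsimp only at *
  subst hc
  have e1 : q = q' := Prod.ext hl (by rw [← h4, ← h4', hl])
  have e2 : r.1 = r'.1 := by
    rcases lt_trichotomy r.1 r'.1 with h | h | h
    · exact absurd h5 (h7' r h2 (by linarith) h)
    · exact h
    · exact absurd h5' (h7 r' h2' (by linarith) h)
  have e3 : r = r' := Prod.ext e2 (by rw [← h5, ← h5', e2])
  rw [e1, e3]

theorem IsEdge.ext_mem {ι : Type*} {f : ι → ℝ → ℝ} {C : Finset ι} {Q : Finset V2} {e e' : V2 × V2 × ι}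
    (h : IsEdge f C Q e) (h' : IsEdge f C Q e') (hc : e.2.2 = e'.2.2) (x : ℝ)
    (h1 : e.1.1 < x) (h2 : x ≤ e.2.1.1) (h3 : e'.1.1 < x) (h4 : x ≤ e'.2.1.1) : e = e' := by
  apply h.ext h' hc
  rcases lt_trichotomy e.1.1 e'.1.1 with g | g | g
  · exact absurd (hc ▸ h'.2.2.2.1) (h.2.2.2.2.2.2 e'.1 h'.1 g (by linarith))
  · exact g
  · exact absurd (hc ▸ h.2.2.2.1) (h'.2.2.2.2.2.2 e.1 h.1 g (by linarith))

def Killed {ι : Type*} (f : ι → ℝ → ℝ) (R : Finset ι) (e : V2 × V2 × ι) : Prop :=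
  ∃ g ∈ R, g ≠ e.2.2 ∧ ∃ x, e.1.1 ≤ x ∧ x ≤ e.2.1.1 ∧ f g x = f e.2.2 x

open Classical in
theorem aux_killed {ι : Type*} (f : ι → ℝ → ℝ) (C : Finset ι) (Q : Finset V2)
    (hint : ∀ i ∈ C, ∀ j ∈ C, i ≠ j → ∀ S : Finset ℝ, (∀ x ∈ S, f i x = f j x) → S.card ≤ 2)
    (G : Finset (V2 × V2 × ι)) (hG : ∀ e ∈ G, IsEdge f C Q e) (R : Finset ι) (hR : R ⊆ C) :
    (G.filter (Killed f R)).card ≤ 4 * C.card * R.card := by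
  have key : ∀ cg ∈ (C ×ˢ R), 
     (G.filter (fun e => e.2.2 = cg.1 ∧ cg.2 ≠ cg.1 ∧ ∃ x, e.1.1 ≤ x ∧ x ≤ e.2.1.1 ∧ f cg.2 x = f cg.1 x)).card ≤ 4 := by
    rintro ⟨c, g⟩ hcg
    rw [Finset.mem_product] at hcg
    dsimp only at hcg ⊢
    by_cases hne : g = c
    · simp [hne]
    have h2 : ∀ (A : Finset (V2 × V2 × ι)) (φ : V2 × V2 × ι → ℝ), (∀ e ∈ A, f g (φ e) = f c (φ e)) →
        Set.InjOn φ A → A.card ≤ 2 := by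
      intro A φ h1 h2
      rw [← Finset.card_image_of_injOn h2]
      apply hint g (hR hcg.2) c hcg.1 hne
      intro x hx
      obtain ⟨e, he, rfl⟩ := Finset.mem_image.mp hx
      exact h1 e he
    have sub : (G.filter (fun e => e.2.2 = c ∧ g ≠ c ∧ ∃ x, e.1.1 ≤ x ∧ x ≤ e.2.1.1 ∧ f g x = f c x)) ⊆
       (G.filter (fun e => e.2.2 = c ∧ f g e.1.1 = f c e.1.1)) ∪ 
       (G.filter (fun e => e.2.2 = c ∧ ∃ x, e.1.1 < x ∧ x ≤ e.2.1.1 ∧ f g x = f c x)) := by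
      intro e
      simp only [Finset.mem_union, Finset.mem_filter]
      rintro ⟨he, hc, -, x, hx1, hx2, hx⟩
      rcases hx1.lt_or_eq with h | h
      · exact Or.inr ⟨he, hc, x, h, hx2, hx⟩
      · exact Or.inl ⟨he, hc, by rw [h]; exact hx⟩
    refine (Finset.card_le_card sub).trans ((Finset.card_union_le _ _).trans ?_)
    have b1 : (G.filter (fun e => e.2.2 = c ∧ f g e.1.1 = f c e.1.1)).card ≤ 2 := by
      apply h2 _ (fun e => e.1.1)
      · intro e he
        exact (Finset.mem_filter.mp he).2.2
      · intro e he e' he' hee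
        simp only [Finset.coe_filter, Set.mem_ofPred_eq] at he he'
        exact (hG e he.1).ext (hG e' he'.1) (by rw [he.2.1, he'.2.1]) hee
    have b2 : (G.filter (fun e => e.2.2 = c ∧ ∃ x, e.1.1 < x ∧ x ≤ e.2.1.1 ∧ f g x = f c x)).card ≤ 2 := by
      apply h2 _ (fun e => if h : ∃ x, e.1.1 < x ∧ x ≤ e.2.1.1 ∧ f g x = f c x then h.choose else 0)
      · intro e he
        have h := (Finset.mem_filter.mp he).2.2
        rw [dif_pos h]
        exact h.choose_spec.2.2
      · intro e he e' he' hee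
        simp only [Finset.coe_filter, Set.mem_ofPred_eq] at he he'
        dsimp only at hee
        rw [dif_pos he.2.2, dif_pos he'.2.2] at hee
        have s := he.2.2.choose_spec
        have s' := he'.2.2.choose_spec
        rw [← hee] at s'
        exact (hG e he.1).ext_mem (hG e' he'.1) (by rw [he.2.1, he'.2.1]) _ s.1 s.2.1 s'.1 s'.2.1
    omega
  have sub : G.filter (Killed f R) ⊆ (C ×ˢ R).biUnion (fun cg => 
     (G.filter (fun e => e.2.2 = cg.1 ∧ cg.2 ≠ cg.1 ∧ ∃ x, e.1.1 ≤ x ∧ x ≤ e.2.1.1 ∧ f cg.2 x = f cg.1 x))) := by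
    intro e he
    rw [Finset.mem_filter] at he
    obtain ⟨he, g, hg, hgc, hx⟩ := he
    rw [Finset.mem_biUnion]
    refine ⟨(e.2.2, g), Finset.mem_product.mpr ⟨(hG e he).2.2.1, hg⟩, ?_⟩
    rw [Finset.mem_filter]
    exact ⟨he, rfl, hgc, hx⟩
  refine (Finset.card_le_card sub).trans ((Finset.card_biUnion_le_card_mul _ _ 4 key).trans ?_)
  rw [Finset.card_product]
  apply le_of_eq; ring

/-- the curves met by the vertical segment from `z` to the curve `c`. -/
def Blk {ι : Type*} (f : ι → ℝ → ℝ) (z : V2) (c g : ι) : Prop :=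
  g ≠ c ∧ f g z.1 ∈ Set.uIcc z.2 (f c z.1)

open Classical in
theorem aux_vis {ι : Type*} (f : ι → ℝ → ℝ) (C : Finset ι) (Q : Finset V2) (q : ℝ) (hq : 1 ≤ q) (w : ℝ) :
    ∃ R ⊆ C, w * R.card + (((Q ×ˢ C).filter (fun zc => ∀ g ∈ R, ¬ Blk f zc.1 zc.2 g)).card : ℝ) ≤
      w * C.card * (1 / q) + 2 * Q.card * q := by
  have hp0 : 0 ≤ 1 / q := by positivity
  have hp1 : 1 / q ≤ 1 := by rw [div_le_one (by linarith)]; exact hq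
  obtain ⟨R, hR, h⟩ := aux_avg (1/q) w hp0 hp1 (Q ×ˢ C) (fun zc => C.filter (Blk f zc.1 zc.2)) C
    (fun _ => 1) (fun _ => zero_le_one)
  refine ⟨R, hR, ?_⟩
  have e1 : (((Q ×ˢ C).filter (fun zc => ∀ g ∈ R, ¬ Blk f zc.1 zc.2 g)).card : ℝ) = 
     ∑ j ∈ Q ×ˢ C, (if Disjoint R (C.filter (Blk f j.1 j.2)) then (1:ℝ) else 0) := by
    rw [← Finset.sum_filter, Finset.sum_const, nsmul_eq_mul, mul_one]
    congr 2
    ext zc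
    simp only [Finset.mem_filter, Finset.disjoint_left]
    constructor
    · rintro ⟨h1, h2⟩
      exact ⟨h1, fun a ha hb => h2 a ha hb.2⟩
    · rintro ⟨h1, h2⟩
      exact ⟨h1, fun a ha hb => h2 ha ⟨hR ha, hb⟩⟩
  rw [e1]
  refine h.trans (add_le_add le_rfl ?_)
  rw [Finset.sum_product]
  have hz : ∀ z ∈ Q, ∑ c ∈ C, 1 * (1 - 1/q) ^ ((C.filter (Blk f z c)) ∩ C).card ≤ 2 * q := by
    intro z _
    have hx0 : 0 ≤ 1 - 1/q := by linarith
    have hx1 : 1 - 1/q ≤ 1 := by linarith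
    rw [← Finset.sum_filter_add_sum_filter_not C (fun c => z.2 ≤ f c z.1)]
    have u1 : ∑ c ∈ C.filter (fun c => z.2 ≤ f c z.1), 1 * (1 - 1/q) ^ ((C.filter (Blk f z c)) ∩ C).card ≤ q := by
      refine le_trans (Finset.sum_le_sum ?_) ((aux_rank (1-1/q) hx0 hx1 (fun c => f c z.1) _).trans (aux_geom q hq _))
      intro c hc
      rw [one_mul]
      apply pow_le_pow_of_le_one hx0 hx1
      apply Finset.card_le_card
      intro g
      simp only [Finset.mem_filter, Finset.mem_inter, Blk, Set.mem_uIcc] at hc ⊢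
      rintro ⟨⟨h1, h2⟩, h3, h4⟩
      exact ⟨⟨h1, h3, Or.inl ⟨h2, h4⟩⟩, h1⟩
    have u2 : ∑ c ∈ C.filter (fun c => ¬ z.2 ≤ f c z.1), 1 * (1 - 1/q) ^ ((C.filter (Blk f z c)) ∩ C).card ≤ q := by
      refine le_trans (Finset.sum_le_sum ?_) ((aux_rank (1-1/q) hx0 hx1 (fun c => - f c z.1) _).trans (aux_geom q hq _))
      intro c hc
      rw [one_mul]
      apply pow_le_pow_of_le_one hx0 hx1
      apply Finset.card_le_card
      intro g
      simp only [Finset.mem_filter, Finset.mem_inter, Blk, Set.mem_uIcc] at hc ⊢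
      rintro ⟨⟨h1, h2⟩, h3, h4⟩
      exact ⟨⟨h1, h3, Or.inr ⟨by linarith, by linarith⟩⟩, h1⟩
    linarith
  refine (Finset.sum_le_sum hz).trans ?_
  rw [Finset.sum_const, nsmul_eq_mul]
  apply le_of_eq; ring

open Classical in
theorem aux_low {α : Type*} (T : Finset α) (x : α → ℝ) (K : ℕ) :
    (T.filter (fun j => (T.filter (fun i => x i ≤ x j)).card ≤ K)).card ≤ K := by
  set U := T.filter (fun j => (T.filter (fun i => x i ≤ x j)).card ≤ K) with hU
  rcases U.eq_empty_or_nonempty with h | h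
  · simp [h]
  obtain ⟨c, hc, hmax⟩ := Finset.exists_max_image U x h
  refine le_trans (Finset.card_le_card ?_) (Finset.mem_filter.mp hc).2
  intro i hi
  exact Finset.mem_filter.mpr ⟨(Finset.mem_filter.mp hi).1, hmax i hi⟩

theorem aux_ivt (g c d : ℝ → ℝ) (hg : Continuous g) (hc : Continuous c) (hd : Continuous d)
    (a b : ℝ) (hab : a ≤ b) (h0 : c a = d a) (h1 : g b ∈ Set.uIcc (c b) (d b)) :
    ∃ x, a ≤ x ∧ x ≤ b ∧ (g x = c x ∨ g x = d x) := by
  have hcont : ContinuousOn (fun x => (g x - c x) * (g x - d x)) (Set.Icc a b) := by fun_prop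
  have hb : (g b - c b) * (g b - d b) ≤ 0 := by
    rw [Set.mem_uIcc] at h1
    rcases h1 with h | h
    · nlinarith
    · nlinarith
  have ha : 0 ≤ (g a - c a) * (g a - d a) := by rw [h0]; exact mul_self_nonneg _
  obtain ⟨x, hx, hx0⟩ := intermediate_value_Icc' hab hcont ⟨hb, ha⟩
  refine ⟨x, hx.1, hx.2, ?_⟩
  rcases mul_eq_zero.mp hx0 with h | h
  · left; linarith
  · right; linarith

open Classical in
theorem aux_GL {ι : Type*} (f : ι → ℝ → ℝ) (C : Finset ι) (Q : Finset V2)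
    (hcont : ∀ i ∈ C, Continuous (f i))
    (hint : ∀ i ∈ C, ∀ j ∈ C, i ≠ j → ∀ S : Finset ℝ, (∀ x ∈ S, f i x = f j x) → S.card ≤ 2)
    (G : Finset (V2 × V2 × ι)) (hG : ∀ e ∈ G, IsEdge f C Q e) (k : ℕ) (hk : 1 ≤ k)
    (hmul : ∀ q q', ∀ T : Finset ι, (∀ c ∈ T, (q, q', c) ∈ G) → T.card ≤ k) (K : ℕ) (hK : 1 ≤ K) :
    (G.card : ℝ) ≤ 4 * (C.card : ℝ) ^ 2 / (k * K ^ 2) + 3 * Q.card * k * K := by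
  have hk' : (1 : ℝ) ≤ k := by exact_mod_cast hk
  have hK' : (1 : ℝ) ≤ K := by exact_mod_cast hK
  have hK2 : (1 : ℝ) ≤ (K : ℝ) ^ 2 := one_le_pow₀ hK'
  obtain ⟨R, hR, hvis⟩ := aux_vis f C Q (k * K ^ 2) (by nlinarith) (4 * C.card * K)
  set W := (Q ×ˢ C).filter (fun zc => ∀ g ∈ R, ¬ Blk f zc.1 zc.2 g) with hW
  have hkill := aux_killed f C Q hint G hG R hR
  set G' := G.filter (fun e => ¬ Killed f R e) with hG'
  have hsplit : (G.filter (Killed f R)).card + G'.card = G.card :=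
    Finset.card_filter_add_card_filter_not (s := G) (Killed f R)
  let Nb : V2 → Finset V2 := fun q => Q.filter (fun q' => ∃ c, (q, q', c) ∈ G')
  let Z : V2 × V2 × ι → Finset V2 := fun e => (Nb e.1).filter (fun z => z.1 ≤ e.2.1.1)
  have hsmall : (G'.filter (fun e => (Z e).card ≤ K)).card ≤ Q.card * (K * k) := by
    have sub : G'.filter (fun e => (Z e).card ≤ K) ⊆ 
      Q.biUnion (fun q => ((Nb q).filter (fun j => ((Nb q).filter (fun i => i.1 ≤ j.1)).card ≤ K)).biUnion
        (fun q' => (C.filter (fun c => (q, q', c) ∈ G)).image (fun c => (q, q', c)))) := by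
      rintro ⟨q, q', c⟩ he
      rw [Finset.mem_filter] at he
      have he1 := (Finset.mem_filter.mp he.1).1
      have hE := hG _ he1
      simp only [Finset.mem_biUnion]
      refine ⟨q, hE.1, q', ?_, ?_⟩
      · rw [Finset.mem_filter]
        refine ⟨Finset.mem_filter.mpr ⟨hE.2.1, c, he.1⟩, he.2⟩
      · rw [Finset.mem_image]
        exact ⟨c, Finset.mem_filter.mpr ⟨hE.2.2.1, he1⟩, rfl⟩
    refine (Finset.card_le_card sub).trans (Finset.card_biUnion_le_card_mul _ _ _ ?_)
    intro q _
    refine (Finset.card_biUnion_le_card_mul _ _ k ?_).trans 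
      (Nat.mul_le_mul_right k (aux_low (Nb q) (fun z => z.1) K))
    intro q' _
    exact Finset.card_image_le.trans (hmul q q' _ fun c hc => (Finset.mem_filter.mp hc).2)
  have hbig : (G'.filter (fun e => ¬ (Z e).card ≤ K)).card * K ≤ W.card := by
    calc (G'.filter (fun e => ¬ (Z e).card ≤ K)).card * K 
        ≤ ∑ e ∈ G'.filter (fun e => ¬ (Z e).card ≤ K), (Z e).card := by
          rw [← smul_eq_mul]
          apply Finset.card_nsmul_le_sum
          intro e he
          have := (Finset.mem_filter.mp he).2
          omega
      _ = ((G'.filter (fun e => ¬ (Z e).card ≤ K)).sigma Z).card := (Finset.card_sigma _ _).symm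
      _ ≤ W.card := by
          apply Finset.card_le_card_of_injOn (fun ez => (ez.2, ez.1.2.2))
          · rintro ⟨⟨q, q', c⟩, z⟩ hez
            simp only [Finset.coe_sigma, Set.mem_sigma_iff, Finset.mem_coe, Finset.mem_filter, Z, Nb] at hez
            obtain ⟨⟨he, -⟩, ⟨hzQ, c', hc'⟩, hzq⟩ := hez
            rw [hG', Finset.mem_filter] at he hc'
            have hE := hG _ he.1
            have hE' := hG _ hc'.1
            dsimp only
            rw [Finset.mem_coe, hW, Finset.mem_filter]
            refine ⟨Finset.mem_product.mpr ⟨hzQ, hE.2.2.1⟩, ?_⟩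
            rintro g hg ⟨hgc, hgu⟩
            obtain ⟨-, -, h3, h4, h5, h6, h7⟩ := hE
            obtain ⟨-, -, h3', h4', h5', h6', h7'⟩ := hE'
            dsimp only at *
            rw [← h5'] at hgu
            obtain ⟨x, hx1, hx2, hx⟩ := aux_ivt (f g) (f c') (f c) (hcont g (hR hg)) (hcont _ h3') (hcont _ h3)
              q.1 z.1 h6'.le (by rw [h4, h4']) hgu
            by_cases hgc' : g = c'
            · apply he.2
              exact ⟨g, hg, hgc, q.1, le_rfl, h6.le, by dsimp only; rw [hgc', h4, h4']⟩
            rcases hx with hx | hx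
            · exact hc'.2 ⟨g, hg, hgc', x, hx1, hx2, hx⟩
            · exact he.2 ⟨g, hg, hgc, x, hx1, hx2.trans hzq, hx⟩
          · rintro ⟨⟨q, q', c⟩, z⟩ hez ⟨⟨q₁, q₁', c₁⟩, z₁⟩ hez₁ heq
            simp only [Finset.coe_sigma, Set.mem_sigma_iff, Finset.mem_coe, Finset.mem_filter, Z, Nb] at hez hez₁
            obtain ⟨⟨he, -⟩, ⟨hzQ, c', hc'⟩, hzq⟩ := hez
            obtain ⟨⟨he₁, -⟩, ⟨hzQ₁, c₁', hc₁'⟩, hzq₁⟩ := hez₁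
            simp only [Prod.mk.injEq] at heq
            obtain ⟨rfl, rfl⟩ := heq
            rw [hG', Finset.mem_filter] at he hc' he₁ hc₁'
            have hE := hG _ he.1
            have hE' := hG _ hc'.1
            have hE₁ := hG _ he₁.1
            have hE₁' := hG _ hc₁'.1
            have := hE.ext_mem hE₁ rfl z.1 hE'.2.2.2.2.2.1 hzq hE₁'.2.2.2.2.2.1 hzq₁
            rw [this]
  have hsplit2 : (G'.filter (fun e => (Z e).card ≤ K)).card + (G'.filter (fun e => ¬ (Z e).card ≤ K)).card = G'.card :=
    Finset.card_filter_add_card_filter_not (s := G') _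
  set b := (G'.filter (fun e => ¬ (Z e).card ≤ K)).card
  have hN : (G.card : ℝ) ≤ 4 * C.card * R.card + Q.card * (K * k) + b := by
    have : G.card ≤ 4 * C.card * R.card + Q.card * (K * k) + b := by omega
    exact_mod_cast this
  have hb : (b : ℝ) * K ≤ W.card := by exact_mod_cast hbig
  have hfin : (4 * C.card * R.card + b : ℝ) * K ≤ (4 * (C.card : ℝ) ^ 2 / (k * K ^ 2) + 2 * Q.card * k * K) * K := by
    calc (4 * C.card * R.card + b : ℝ) * K ≤ 4 * C.card * K * R.card + W.card := by linarith
      _ ≤ _ := hvis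
      _ = _ := by field_simp
  have := le_of_mul_le_mul_right hfin (by linarith)
  linarith

open Classical in
def Edges {ι : Type*} (f : ι → ℝ → ℝ) (C : Finset ι) (Q : Finset V2) : Finset (V2 × V2 × ι) :=
  (Q ×ˢ (Q ×ˢ C)).filter (IsEdge f C Q)

open Classical in
theorem mem_Edges {ι : Type*} {f : ι → ℝ → ℝ} {C : Finset ι} {Q : Finset V2} {e : V2 × V2 × ι} :
    e ∈ Edges f C Q ↔ IsEdge f C Q e := by
  unfold Edges
  rw [Finset.mem_filter, Finset.mem_product, Finset.mem_product]
  exact ⟨fun h => h.2, fun h => ⟨⟨h.1, h.2.1, h.2.2.1⟩, h⟩⟩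

open Classical in
theorem aux_edges {ι : Type*} (f : ι → ℝ → ℝ) (C : Finset ι) (Q : Finset V2) :
    ∑ c ∈ C, (Q.filter (fun q => f c q.1 = q.2)).card ≤ (Edges f C Q).card + C.card := by
  have hc : ∀ c ∈ C, (Q.filter (fun q => f c q.1 = q.2)).card ≤ 
      ((Edges f C Q).filter (fun e => e.2.2 = c)).card + 1 := by
    intro c hc
    set T := Q.filter (fun q => f c q.1 = q.2) with hT
    rcases T.eq_empty_or_nonempty with h | h
    · simp [h]
    obtain ⟨l, hl, hmax⟩ := Finset.exists_max_image T (fun q => q.1) h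
    rw [← Finset.card_erase_add_one hl]
    refine Nat.add_le_add_right ?_ 1
    refine le_trans (Finset.card_le_card ?_) (Finset.card_image_le (f := fun e => e.1))
    intro q hq
    rw [Finset.mem_erase] at hq
    have hqT := Finset.mem_filter.mp hq.2
    have hlT := Finset.mem_filter.mp hl
    have hlt : q.1 < l.1 := by
      rcases (hmax q hq.2).lt_or_eq with h | h
      · exact h
      · exact absurd (Prod.ext h (by rw [← hqT.2, ← hlT.2]; exact congrArg _ h)) hq.1
    obtain ⟨q', hq', hmin⟩ := Finset.exists_min_image (T.filter (fun z => q.1 < z.1)) (fun q => q.1)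
      ⟨l, Finset.mem_filter.mpr ⟨hl, hlt⟩⟩
    rw [Finset.mem_filter] at hq'
    have hq'T := Finset.mem_filter.mp hq'.1
    rw [Finset.mem_image]
    refine ⟨(q, q', c), ?_, rfl⟩
    rw [Finset.mem_filter, mem_Edges]
    refine ⟨⟨hqT.1, hq'T.1, hc, hqT.2, hq'T.2, hq'.2, ?_⟩, rfl⟩
    intro z hz h1 h2 h3
    have := hmin z (Finset.mem_filter.mpr ⟨Finset.mem_filter.mpr ⟨hz, h3⟩, h1⟩)
    dsimp only at *
    linarith
  refine (Finset.sum_le_sum hc).trans ?_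
  rw [Finset.sum_add_distrib, Finset.sum_const, smul_eq_mul, mul_one]
  refine Nat.add_le_add_right (le_of_eq ?_) _
  symm
  apply Finset.card_eq_sum_card_fiberwise
  intro e he
  exact (mem_Edges.mp he).2.2.1

theorem aux_ceil (x : ℝ) (hx : 0 ≤ x) : ∃ K : ℕ, 1 ≤ K ∧ x ≤ K ∧ (K : ℝ) ≤ x + 2 := by
  refine ⟨⌈x⌉₊ + 1, by omega, ?_, ?_⟩
  · have := Nat.le_ceil x
    push_cast; linarith
  · have := Nat.ceil_lt_add_one hx
    push_cast; linarith

theorem aux_STar (I N m k E : ℝ) (hN0 : 0 ≤ N) (hm0 : 0 ≤ m) (hk2 : 2 ≤ k) (hE' : I ≤ E + N)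
    (hNk' : N * k ≤ I) (hI0 : 0 ≤ I)
    (hGL : ∀ K : ℕ, 1 ≤ K → E ≤ 4 * N ^ 2 / (K : ℝ) ^ 2 + 3 * m * K) :
    I ≤ 2304 * m ^ 2 / k ^ 2 + 48 * m := by
  set u := Real.sqrt I with hu
  have hu0 : 0 ≤ u := Real.sqrt_nonneg _
  have huu : u * u = I := Real.mul_self_sqrt hI0
  have hk0 : 0 < k := by linarith
  obtain ⟨K, hK1, hKl, hKu⟩ := aux_ceil (4 * u / k) (by positivity)
  have hGL := hGL K hK1
  have hKR : (1 : ℝ) ≤ K := by exact_mod_cast hK1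
  have h1 : 4 * N ^ 2 / (K:ℝ) ^ 2 ≤ I / 4 := by
    rw [div_le_iff₀ (by positivity)]
    have h4 : 4 * u ≤ K * k := by rwa [div_le_iff₀ (by linarith)] at hKl
    have h5 : 16 * I ≤ (K * k) ^ 2 := by 
      have := pow_le_pow_left₀ (by positivity) h4 2
      nlinarith
    have h6 : (N * k) ^ 2 ≤ I ^ 2 := by apply pow_le_pow_left₀ (by positivity) hNk'
    have h7 : 16 * N ^ 2 * k ^ 2 ≤ I * K ^ 2 * k ^ 2 := by
      have := mul_le_mul_of_nonneg_left h5 hI0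
      nlinarith
    have := le_of_mul_le_mul_right h7 (by positivity)
    linarith
  have h2 : N ≤ I / 2 := by nlinarith
  have h3 : I ≤ 12 * m * K := by linarith
  have h4 : I ≤ 12 * m * (4 * u / k + 2) := h3.trans (by gcongr)
  have h5 : 48 * (m / k) * u ≤ I / 2 + 1152 * (m / k) ^ 2 := by
    rw [← huu]; nlinarith [sq_nonneg (u - 48 * (m / k))]
  have e1 : 12 * m * (4 * u / k + 2) = 48 * (m / k) * u + 24 * m := by ring
  have e2 : 2304 * m ^ 2 / k ^ 2 = 2304 * (m / k) ^ 2 := by rw [div_pow]; ring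
  rw [e2]
  linarith

open Classical in
theorem aux_ST0 {ι : Type*} (f : ι → ℝ → ℝ) (C : Finset ι) (P : Finset V2)
    (hcont : ∀ i ∈ C, Continuous (f i))
    (hint : ∀ i ∈ C, ∀ j ∈ C, i ≠ j → ∀ S : Finset ℝ, (∀ x ∈ S, f i x = f j x) → S.card ≤ 1)
    (k : ℕ) (hk : 2 ≤ k) (hrich : ∀ c ∈ C, k ≤ (P.filter (fun q => f c q.1 = q.2)).card) :
    (∑ c ∈ C, (P.filter (fun q => f c q.1 = q.2)).card : ℝ) ≤ 
      2304 * (P.card : ℝ) ^ 2 / k ^ 2 + 48 * P.card := by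
  have hk2 : (2 : ℝ) ≤ k := by exact_mod_cast hk
  have hE := aux_edges f C P
  have hNk : C.card * k ≤ ∑ c ∈ C, (P.filter (fun q => f c q.1 = q.2)).card := by
    rw [← smul_eq_mul]; exact Finset.card_nsmul_le_sum _ _ _ hrich
  have hE' : (∑ c ∈ C, (P.filter (fun q => f c q.1 = q.2)).card : ℝ) ≤ (Edges f C P).card + C.card := by
    exact_mod_cast hE
  have hNk' : (C.card : ℝ) * k ≤ (∑ c ∈ C, (P.filter (fun q => f c q.1 = q.2)).card : ℝ) := by
    exact_mod_cast hNk
  refine aux_STar _ C.card P.card k (Edges f C P).card (by positivity) (by positivity) hk2 hE' hNk'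
    (Finset.sum_nonneg fun _ _ => Nat.cast_nonneg _) ?_
  intro K hK1
  have hGL := aux_GL f C P hcont (fun i hi j hj hij S hS => (hint i hi j hj hij S hS).trans (by norm_num))
    (Edges f C P) (fun e he => mem_Edges.mp he) 1 le_rfl ?_ K hK1
  · simpa only [Nat.cast_one, mul_one, one_mul] using hGL
  · intro q q' T hT
    rw [Finset.card_le_one]
    intro c hc c' hc'
    by_contra hne
    have hE := mem_Edges.mp (hT c hc)
    have hE' := mem_Edges.mp (hT c' hc')
    have := hint c hE.2.2.1 c' hE'.2.2.1 hne {q.1, q'.1} (by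
      intro x hx
      rw [Finset.mem_insert, Finset.mem_singleton] at hx
      rcases hx with rfl | rfl
      · exact hE.2.2.2.1.trans hE'.2.2.2.1.symm
      · exact hE.2.2.2.2.1.trans hE'.2.2.2.2.1.symm)
    rw [Finset.card_pair (ne_of_lt hE.2.2.2.2.2.1)] at this
    omega

open Classical in
theorem aux_ST (P : Finset V2) (Λ : Finset (Finset V2)) (k : ℕ) (hk : 2 ≤ k)
    (hΛ : ∀ S ∈ Λ, k ≤ S.card ∧ ∃ A B D : ℝ, (A ≠ 0 ∨ B ≠ 0) ∧ 
      S = P.filter (fun p => A * p.1 + B * p.2 = D)) :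
    (∑ S ∈ Λ, S.card : ℝ) ≤ 2304 * (P.card : ℝ) ^ 2 / k ^ 2 + 49 * P.card := by
  let nv : Finset V2 → Prop := fun S => ∃ ab : ℝ × ℝ, S = P.filter (fun p => ab.1 * p.1 + ab.2 = p.2)
  let f : Finset V2 → ℝ → ℝ := fun S x => if h : nv S then h.choose.1 * x + h.choose.2 else 0
  have hf : ∀ S, (h : nv S) → S = P.filter (fun p => f S p.1 = p.2) := by
    intro S h
    simp only [f, dif_pos h]
    exact h.choose_spec
  rw [← Finset.sum_filter_add_sum_filter_not Λ nv]
  have h1 : (∑ S ∈ Λ.filter nv, S.card : ℝ) ≤ 2304 * (P.card : ℝ) ^ 2 / k ^ 2 + 48 * P.card := by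
    have e : (∑ S ∈ Λ.filter nv, S.card : ℝ) = ∑ S ∈ Λ.filter nv, ((P.filter (fun p => f S p.1 = p.2)).card : ℝ) := by
      apply Finset.sum_congr rfl
      intro S hS
      rw [← hf S (Finset.mem_filter.mp hS).2]
    rw [e]
    apply aux_ST0 f _ P _ _ k hk
    · intro S hS
      rw [← hf S (Finset.mem_filter.mp hS).2]
      exact (hΛ S (Finset.mem_filter.mp hS).1).1
    · intro S hS
      have h := (Finset.mem_filter.mp hS).2
      have : f S = fun x => h.choose.1 * x + h.choose.2 := by
        funext x; simp only [f, dif_pos h]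
      rw [this]; fun_prop
    · intro S hS S' hS' hne X hX
      rw [Finset.card_le_one]
      intro x hx y hy
      by_contra hxy
      apply hne
      have h := (Finset.mem_filter.mp hS).2
      have h' := (Finset.mem_filter.mp hS').2
      have hfS : f S = fun x => h.choose.1 * x + h.choose.2 := by
        funext x; simp only [f, dif_pos h]
      have hfS' : f S' = fun x => h'.choose.1 * x + h'.choose.2 := by
        funext x; simp only [f, dif_pos h']
      have a1 := hX x hx
      have a2 := hX y hy
      have hff : f S = f S' := by
        rw [hfS, hfS'] at a1 a2 ⊢
        dsimp only at a1 a2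
        have : (h.choose.1 - h'.choose.1) * (x - y) = 0 := by linear_combination a1 - a2
        have e1 : h.choose.1 - h'.choose.1 = 0 := 
          (mul_eq_zero.mp this).resolve_right (sub_ne_zero.mpr hxy)
        funext z
        linear_combination a1 + (z - x) * e1
      rw [hf S h, hf S' h', hff]
  have h2 : (∑ S ∈ Λ.filter (fun S => ¬ nv S), S.card : ℝ) ≤ P.card := by
    have hv : ∀ S ∈ Λ.filter (fun S => ¬ nv S), ∃ D : ℝ, S = P.filter (fun p => p.1 = D) := by
      intro S hS
      rw [Finset.mem_filter] at hS
      obtain ⟨-, A, B, D, hAB, hSe⟩ := hΛ S hS.1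
      by_cases hB : B = 0
      · have hA : A ≠ 0 := by tauto
        refine ⟨D / A, ?_⟩
        rw [hSe]
        apply Finset.filter_congr
        intro p _
        rw [hB, eq_div_iff hA]
        constructor <;> intro h <;> linarith
      · exfalso
        apply hS.2
        refine ⟨(-A/B, D/B), ?_⟩
        rw [hSe]
        apply Finset.filter_congr
        intro p _
        dsimp only
        field_simp
        constructor <;> intro h <;> linarith
    have hd : (Λ.filter (fun S => ¬ nv S) : Set (Finset V2)).PairwiseDisjoint id := by
      intro S hS S' hS' hne
      rw [Function.onFun, Finset.disjoint_left]
      intro p hp hp'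
      obtain ⟨D, hD⟩ := hv S hS
      obtain ⟨D', hD'⟩ := hv S' hS'
      apply hne
      dsimp only [id] at hp hp'
      have e1 : p.1 = D := by rw [hD] at hp; exact (Finset.mem_filter.mp hp).2
      have e2 : p.1 = D' := by rw [hD'] at hp'; exact (Finset.mem_filter.mp hp').2
      rw [hD, hD', ← e1, ← e2]
    have := Finset.card_biUnion hd
    have h3 : ((Λ.filter (fun S => ¬ nv S)).biUnion id).card ≤ P.card := by
      apply Finset.card_le_card
      intro p hp
      rw [Finset.mem_biUnion] at hp
      obtain ⟨S, hS, hpS⟩ := hp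
      obtain ⟨D, hD⟩ := hv S hS
      dsimp only [id] at hpS
      rw [hD] at hpS
      exact (Finset.mem_filter.mp hpS).1
    rw [this] at h3
    exact_mod_cast h3
  linarith

def ww (a : ℝ) : ℝ := Real.sqrt (1 + a ^ 2)
theorem ww_pos (a : ℝ) : 0 < ww a := Real.sqrt_pos.mpr (by positivity)
theorem ww_sq (a : ℝ) : ww a ^ 2 = 1 + a ^ 2 := Real.sq_sqrt (by positivity)
theorem ww_cont : Continuous ww := by unfold ww; fun_prop

theorem aux_quad (A B C : ℝ) (h : ¬ (A = 0 ∧ B = 0 ∧ C = 0)) (S : Finset ℝ)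
    (hS : ∀ x ∈ S, A + B * x = C * ww x) : S.card ≤ 2 := by
  by_contra hc
  push Not at hc
  obtain ⟨x, hx, y, hy, z, hz, hxy, hxz, hyz⟩ := Finset.two_lt_card.mp hc
  have key : ∀ x ∈ S, (B ^ 2 - C ^ 2) * x ^ 2 + 2 * A * B * x + (A ^ 2 - C ^ 2) = 0 := by
    intro x hx
    have h1 := hS x hx
    have h2 := ww_sq x
    have : (A + B * x) ^ 2 = C ^ 2 * (1 + x ^ 2) := by rw [h1, mul_pow, h2]
    linarith
  have hxy' := sub_ne_zero.mpr hxy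
  have hxz' := sub_ne_zero.mpr hxz
  have hyz' := sub_ne_zero.mpr hyz
  have k1 : (B ^ 2 - C ^ 2) * (x + y) + 2 * A * B = 0 := by
    apply mul_left_cancel₀ hxy'
    linear_combination key x hx - key y hy
  have k2 : (B ^ 2 - C ^ 2) * (x + z) + 2 * A * B = 0 := by
    apply mul_left_cancel₀ hxz'
    linear_combination key x hx - key z hz
  have k3 : B ^ 2 - C ^ 2 = 0 := by
    apply mul_left_cancel₀ hyz'
    linear_combination k1 - k2
  have k4 : A * B = 0 := by linear_combination k1 / 2 - (x + y) / 2 * k3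
  have k5 : A ^ 2 - C ^ 2 = 0 := by linear_combination key x hx - x ^ 2 * k3 - 2 * x * k4
  apply h
  rcases mul_eq_zero.mp k4 with h | h
  · have hC : C = 0 := by rw [h] at k5; nlinarith
    exact ⟨h, by rw [hC] at k3; nlinarith, hC⟩
  · have hC : C = 0 := by rw [h] at k3; nlinarith
    exact ⟨by rw [hC] at k5; nlinarith, h, hC⟩

theorem aux_rolle (X Y : ℝ) (h : ¬ (X = 0 ∧ Y = 0)) (a b c d : ℝ) (hab : a < b) (hbc : b ≤ c) (hcd : c < d)
    (h1 : (Y - a * X) / ww a = (Y - b * X) / ww b) (h2 : (Y - c * X) / ww c = (Y - d * X) / ww d) : False := by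
  have hder : ∀ x, HasDerivAt (fun x => (Y - x * X) / ww x) (-(X + x * Y) / ww x ^ 3) x := by
    intro x
    have hw : HasDerivAt ww (x / ww x) x := by
      have : HasDerivAt (fun a : ℝ => 1 + a ^ 2) (2 * x) x := by
        simpa using ((hasDerivAt_id x).pow 2).const_add 1
      have h3 : HasDerivAt ww (2 * x / (2 * ww x)) x := this.sqrt (by positivity)
      have h4 : 2 * x / (2 * ww x) = x / ww x := by
        have := ww_pos x
        field_simp
      rwa [h4] at h3
    have hn : HasDerivAt (fun x : ℝ => Y - x * X) (-X) x := by
      simpa using ((hasDerivAt_id x).mul_const X).const_sub Y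
    have h5 := hn.div hw (ww_pos x).ne'
    have hp := ww_pos x
    have hs := ww_sq x
    have h6 : ((-X) * ww x - (Y - x * X) * (x / ww x)) / ww x ^ 2 = -(X + x * Y) / ww x ^ 3 := by
      rw [div_eq_div_iff (by positivity) (by positivity)]
      have : (-X * ww x - (Y - x * X) * (x / ww x)) * ww x ^ 3 =
        ((-X) * ww x ^ 2 - (Y - x * X) * x) * ww x ^ 2 := by
        field_simp
      rw [this, hs]; ring
    rw [h6] at h5
    exact h5
  have hc : Continuous (fun x => (Y - x * X) / ww x) := 
    continuous_iff_continuousAt.mpr fun x => (hder x).continuousAt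
  obtain ⟨x, hx, hx0⟩ := exists_hasDerivAt_eq_zero hab hc.continuousOn h1 (fun x _ => hder x)
  obtain ⟨y, hy, hy0⟩ := exists_hasDerivAt_eq_zero hcd hc.continuousOn h2 (fun x _ => hder x)
  have hxy : x < y := lt_trans hx.2 (lt_of_le_of_lt hbc hy.1)
  have e1 : X + x * Y = 0 := by
    have := (div_eq_zero_iff.mp hx0).resolve_right (pow_ne_zero 3 (ww_pos x).ne'); linarith
  have e2 : X + y * Y = 0 := by
    have := (div_eq_zero_iff.mp hy0).resolve_right (pow_ne_zero 3 (ww_pos y).ne'); linarith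
  have e3 : (y - x) * Y = 0 := by linear_combination e2 - e1
  have hY : Y = 0 := (mul_eq_zero.mp e3).resolve_left (by linarith)
  exact h ⟨by rw [hY] at e1; linarith, hY⟩

def sg (p q : V2) : ℝ := (p.2 - q.1 * p.1 - q.2) / ww q.1

def ff (c : V2 × ℝ) (a : ℝ) : ℝ := c.1.2 - a * c.1.1 - c.2 * ww a

theorem ff_iff (c : V2 × ℝ) (q : V2) : ff c q.1 = q.2 ↔ sg c.1 q = c.2 := by
  unfold ff sg
  rw [div_eq_iff (ww_pos _).ne']
  constructor <;> intro h <;> linarith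

set_option maxHeartbeats 1000000 in
open Classical in
theorem aux_main (P Q : Finset V2) (D : Finset ℝ) (hD : ∀ p ∈ P, ∀ q ∈ Q, sg p q ∈ D)
    (k K : ℕ) (hk : 2 ≤ k) (hK : 1 ≤ K) :
    (P.card * Q.card : ℝ) ≤ P.card * D.card + D.card * (2304 * (P.card : ℝ) ^ 2 / k ^ 2 + 49 * P.card)
      + (4 * (P.card * D.card : ℝ) ^ 2 / (k * K ^ 2) + 3 * Q.card * k * K) := by
  set C := P ×ˢ D with hC
  have hinc : ∑ c ∈ C, (Q.filter (fun q => ff c q.1 = q.2)).card = P.card * Q.card := by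
    rw [hC, Finset.sum_product, ← smul_eq_mul, ← Finset.sum_const]
    apply Finset.sum_congr rfl
    intro p hp
    rw [Finset.card_eq_sum_card_fiberwise (s := Q) (t := D) (f := fun q => sg p q) (fun q hq => hD p hp q hq)]
    apply Finset.sum_congr rfl
    intro s _
    congr 1
    apply Finset.filter_congr
    intro q _
    exact ff_iff (p, s) q
  have hE := aux_edges ff C Q
  rw [hinc] at hE
  let S : V2 → V2 → Finset V2 := fun q q' => P.filter (fun p => sg p q = sg p q')
  set E := Edges ff C Q with hEdef
  have hES : ∀ e ∈ E, e.2.2.1 ∈ S e.1 e.2.1 := by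
    intro e he
    obtain ⟨h1, h2, h3, h4, h5, -⟩ := mem_Edges.mp he
    refine Finset.mem_filter.mpr ⟨(Finset.mem_product.mp h3).1, ?_⟩
    rw [(ff_iff _ _).mp h4, (ff_iff _ _).mp h5]
  let bad : V2 × V2 × (V2 × ℝ) → Prop := fun e => k ≤ (S e.1 e.2.1).card
  have hsplit : (E.filter bad).card + (E.filter (fun e => ¬ bad e)).card = E.card :=
    Finset.card_filter_add_card_filter_not (s := E) _
  have hgood : ((E.filter (fun e => ¬ bad e)).card : ℝ) ≤ 
      4 * (P.card * D.card : ℝ) ^ 2 / (k * K ^ 2) + 3 * Q.card * k * K := by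
    have := aux_GL ff C Q ?_ ?_ (E.filter (fun e => ¬ bad e)) 
      (fun e he => mem_Edges.mp (Finset.mem_filter.mp he).1) k (by omega) ?_ K hK
    · rwa [hC, Finset.card_product, Nat.cast_mul] at this
    · intro c _
      unfold ff
      have := ww_cont
      fun_prop
    · intro i _ j _ hij T hT
      apply aux_quad (i.1.2 - j.1.2) (-(i.1.1 - j.1.1)) (i.2 - j.2) _ T
      · intro x hx
        have := hT x hx
        unfold ff at this
        linarith
      · rintro ⟨h1, h2, h3⟩
        apply hij
        exact Prod.ext (Prod.ext (by linarith) (by linarith)) (by linarith)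
    · intro q q' T hT
      rcases T.eq_empty_or_nonempty with h | ⟨c0, hc0⟩
      · simp [h]
      have hb : ¬ k ≤ (S q q').card := (Finset.mem_filter.mp (hT c0 hc0)).2
      refine le_trans (Finset.card_le_card_of_injOn (t := S q q') (fun c => c.1) ?_ ?_) (by omega)
      · intro c hc
        have h1 := hES (q, q', c) (Finset.mem_filter.mp (hT c (Finset.mem_coe.mp hc))).1
        exact Finset.mem_coe.mpr h1
      · intro c hc c' hc' hcc
        have h1 := (Finset.mem_filter.mp (hT c (Finset.mem_coe.mp hc))).1
        have h2 := (Finset.mem_filter.mp (hT c' (Finset.mem_coe.mp hc'))).1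
        have g1 : sg c.1 q = c.2 := (ff_iff c q).mp (mem_Edges.mp h1).2.2.2.1
        have g2 : sg c'.1 q = c'.2 := (ff_iff c' q).mp (mem_Edges.mp h2).2.2.2.1
        dsimp only at hcc
        exact Prod.ext hcc (by rw [← g1, ← g2, hcc])
  let Λ := (E.filter bad).image (fun e => S e.1 e.2.1)
  have hbad1 : (E.filter bad).card ≤ D.card * ∑ T ∈ Λ, T.card := by
    rw [← Finset.card_sigma, ← Finset.card_product]
    apply Finset.card_le_card_of_injOn (fun e => (e.2.2.2, ⟨S e.1 e.2.1, e.2.2.1⟩))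
    · intro e he
      have he := Finset.mem_coe.mp he
      have heE := (Finset.mem_filter.mp he).1
      rw [Finset.mem_coe, Finset.mem_product, Finset.mem_sigma]
      exact ⟨(Finset.mem_product.mp (mem_Edges.mp heE).2.2.1).2, Finset.mem_image_of_mem _ he, hES e heE⟩
    · have wl : ∀ e ∈ E, ∀ e' ∈ E, bad e → e.2.2 = e'.2.2 → S e.1 e.2.1 = S e'.1 e'.2.1 → e.1.1 < e'.1.1 → False := by
        intro e he e' he' hb hc hS hlt
        have hp := hES e he
        obtain ⟨p', hp', hne⟩ := Finset.exists_mem_ne (show 1 < (S e.1 e.2.1).card from lt_of_lt_of_le (by omega) hb) e.2.2.1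
        have hp'2 := hp'
        rw [hS] at hp'2
        have q1 := (Finset.mem_filter.mp hp').2
        have q2 := (Finset.mem_filter.mp hp'2).2
        obtain ⟨h1, h2, h3, h4, h5, h6, h7⟩ := mem_Edges.mp he
        obtain ⟨h1', h2', h3', h4', h5', h6', h7'⟩ := mem_Edges.mp he'
        rw [← hc] at h4' h5'
        have hle : e.2.1.1 ≤ e'.1.1 := by
          by_contra hcon
          push Not at hcon
          exact h7 e'.1 h1' hlt hcon h4'
        have conv : ∀ q : V2, ff e.2.2 q.1 = q.2 → 
            ((p'.2 - e.2.2.1.2) - q.1 * (p'.1 - e.2.2.1.1)) / ww q.1 = sg p' q - e.2.2.2 := by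
          intro q hq
          unfold sg
          unfold ff at hq
          rw [← hq]
          have := ww_pos q.1
          field_simp
          ring
        apply aux_rolle (p'.1 - e.2.2.1.1) (p'.2 - e.2.2.1.2) _ e.1.1 e.2.1.1 e'.1.1 e'.2.1.1 h6 hle h6'
        · rw [conv _ h4, conv _ h5, q1]
        · rw [conv _ h4', conv _ h5', q2]
        · rintro ⟨g1, g2⟩
          exact hne (Prod.ext (by linarith) (by linarith))
      intro e he e' he' hee
      have he := Finset.mem_filter.mp (Finset.mem_coe.mp he)
      have he' := Finset.mem_filter.mp (Finset.mem_coe.mp he')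
      simp only [Prod.mk.injEq, Sigma.mk.injEq, heq_eq_eq] at hee
      have hc : e.2.2 = e'.2.2 := Prod.ext hee.2.2 hee.1
      rcases lt_trichotomy e.1.1 e'.1.1 with h | h | h
      · exact (wl e he.1 e' he'.1 he.2 hc hee.2.1 h).elim
      · exact (mem_Edges.mp he.1).ext (mem_Edges.mp he'.1) hc h
      · exact (wl e' he'.1 e he.1 he'.2 hc.symm hee.2.1.symm h).elim
  have hST := aux_ST P Λ k hk (by
    intro T hT
    obtain ⟨e, he, rfl⟩ := Finset.mem_image.mp hT
    rw [Finset.mem_filter] at he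
    refine ⟨he.2, -(e.1.1 / ww e.1.1 - e.2.1.1 / ww e.2.1.1), 1 / ww e.1.1 - 1 / ww e.2.1.1, 
      e.1.2 / ww e.1.1 - e.2.1.2 / ww e.2.1.1, ?_, ?_⟩
    · by_contra hcon
      push Not at hcon
      obtain ⟨h1, h2⟩ := hcon
      have hlt := (mem_Edges.mp he.1).2.2.2.2.2.1
      have w1 := ww_pos e.1.1
      have w2 := ww_pos e.2.1.1
      have hw : ww e.1.1 = ww e.2.1.1 := by
        have : 1 / ww e.1.1 = 1 / ww e.2.1.1 := by linarith
        field_simp at this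
        exact this.symm
      rw [hw] at h1
      have : e.1.1 / ww e.2.1.1 = e.2.1.1 / ww e.2.1.1 := by linarith
      rw [div_left_inj' w2.ne'] at this
      linarith
    · apply Finset.filter_congr
      intro p _
      have e1 : ∀ q : V2, sg p q = p.2 * (1 / ww q.1) - p.1 * (q.1 / ww q.1) - q.2 / ww q.1 := by
        intro q; unfold sg; ring
      rw [e1, e1]
      constructor <;> intro h <;> linarith)
  have hb2 : ((E.filter bad).card : ℝ) ≤ D.card * (∑ T ∈ Λ, T.card : ℝ) := by exact_mod_cast hbad1
  have hb3 : ((E.filter bad).card : ℝ) ≤ D.card * (2304 * (P.card : ℝ) ^ 2 / k ^ 2 + 49 * P.card) :=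
    hb2.trans (mul_le_mul_of_nonneg_left hST (Nat.cast_nonneg _))
  have hE2 : (P.card * Q.card : ℝ) ≤ (E.filter bad).card + (E.filter (fun e => ¬ bad e)).card + P.card * D.card := by
    rw [← hsplit, hC, Finset.card_product] at hE
    exact_mod_cast hE
  linarith

theorem aux_arith (m n t T : ℝ) (hm : 1 ≤ m) (hn : 1 ≤ n) (ht : 1 ≤ t) (hT : 0 < T) (hT5 : T ^ 5 = m * n ^ 3)
    (h1 : m ≤ 4 * n ^ 2) (h2 : n ≤ m ^ 2)
    (H : ∀ k K : ℕ, 2 ≤ k → 1 ≤ K → m * n ≤ m * t + t * (2304 * m ^ 2 / (k : ℝ) ^ 2 + 49 * m)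
      + (4 * (m * t) ^ 2 / (k * (K : ℝ) ^ 2) + 3 * n * k * K)) :
    T / 10 ^ 10 < t := by
  by_contra hcon
  push Not at hcon
  have hm0 : 0 < m := by linarith
  have hn0 : 0 < n := by linarith
  have ht0 : 0 < t := by linarith
  have hmn : 0 < m * n := by positivity
  -- m is large
  have hmbig : 192 ≤ m := by
    by_contra hc
    push Not at hc
    have a1 : (10:ℝ) ^ 10 ≤ T := by linarith
    have a2 : ((10:ℝ) ^ 10) ^ 5 ≤ T ^ 5 := pow_le_pow_left₀ (by positivity) a1 5
    have a3 : m * n ^ 3 ≤ m * (m ^ 2) ^ 3 := by gcongr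
    have a4 : m * (m ^ 2) ^ 3 ≤ 192 * (192 ^ 2) ^ 3 := by gcongr
    rw [hT5] at a2
    have := a2.trans (a3.trans a4)
    norm_num at this
  have hT2n : T ≤ 2 * n := by
    apply le_of_pow_le_pow_left₀ (n := 5) (by norm_num) (by positivity)
    rw [hT5]
    calc m * n ^ 3 ≤ 4 * n ^ 2 * n ^ 3 := by gcongr
      _ ≤ (2 * n) ^ 5 := by nlinarith [pow_pos hn0 5]
  have hTT : T ^ 2 ≤ m * n := by
    apply le_of_pow_le_pow_left₀ (n := 5) (by norm_num) (by positivity)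
    have : (T ^ 2) ^ 5 = m ^ 2 * n ^ 6 := by rw [← pow_mul, mul_comm, pow_mul, hT5]; ring
    rw [this]
    calc m ^ 2 * n ^ 6 = m ^ 2 * n ^ 5 * n := by ring
      _ ≤ m ^ 2 * n ^ 5 * m ^ 2 := by gcongr
      _ ≤ m ^ 2 * n ^ 5 * m ^ 2 * m := le_mul_of_one_le_right (by positivity) hm
      _ = (m * n) ^ 5 := by ring
  have htn : t ≤ 2 * n / 10 ^ 10 := hcon.trans (by gcongr)
  have htt : t ^ 2 ≤ m * n / 10 ^ 20 := by
    calc t ^ 2 ≤ (T / 10 ^ 10) ^ 2 := by gcongr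
      _ = T ^ 2 / 10 ^ 20 := by ring
      _ ≤ _ := by gcongr
  set v := Real.sqrt (t * m / n) with hv
  have hv0 : 0 ≤ v := Real.sqrt_nonneg _
  have hvv : v ^ 2 = t * m / n := Real.sq_sqrt (by positivity)
  have hvvn : v ^ 2 * n = t * m := by rw [hvv]; field_simp
  have hvm : v ≤ m / 10 ^ 4 := by
    apply le_of_pow_le_pow_left₀ (n := 2) (by norm_num) (by positivity)
    rw [hvv, div_le_iff₀ hn0]
    calc t * m ≤ 2 * n / 10 ^ 10 * m := by gcongr
      _ ≤ (m / 10 ^ 4) ^ 2 * n := by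
        have : m * n * 192 ≤ m * n * m := by gcongr
        nlinarith
  have httv : t ^ 2 * v ≤ m * n / 10 ^ 25 := by
    apply le_of_pow_le_pow_left₀ (n := 2) (by norm_num) (by positivity)
    have e : (t ^ 2 * v) ^ 2 * n = t ^ 5 * m := by
      calc (t ^ 2 * v) ^ 2 * n = t ^ 4 * (v ^ 2 * n) := by ring
        _ = _ := by rw [hvvn]; ring
    have g : (t ^ 2 * v) ^ 2 * n ≤ (m * n / 10 ^ 25) ^ 2 * n := by
      rw [e]
      calc t ^ 5 * m ≤ (T / 10 ^ 10) ^ 5 * m := by gcongr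
        _ = T ^ 5 * m / 10 ^ 50 := by ring
        _ = (m * n / 10 ^ 25) ^ 2 * n := by rw [hT5]; ring
    exact le_of_mul_le_mul_right g hn0
  obtain ⟨k, -, hk1, hk2⟩ := aux_ceil (136 * v + 2) (by positivity)
  have hk2' : 2 ≤ k := by
    have : (2:ℝ) ≤ k := by linarith
    exact_mod_cast this
  have hk0 : (2:ℝ) ≤ k := by exact_mod_cast hk2'
  have hkm : 24 * (k:ℝ) ≤ m := by linarith
  set K := ⌊m / (24 * k)⌋₊ with hK
  have hx1 : 1 ≤ m / (24 * (k:ℝ)) := by rw [le_div_iff₀ (by positivity)]; linarith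
  have hK1 : 1 ≤ K := Nat.le_floor (by exact_mod_cast hx1)
  have hKu : (K:ℝ) ≤ m / (24 * k) := Nat.floor_le (by positivity)
  have hKl : m / (24 * (k:ℝ)) < K + 1 := Nat.lt_floor_add_one _
  have hK1' : (1:ℝ) ≤ K := by exact_mod_cast hK1
  have hKl2 : m ≤ 48 * k * K := by
    rw [div_lt_iff₀ (by positivity)] at hKl
    nlinarith
  have hKu2 : 24 * k * K ≤ m := by
    rw [le_div_iff₀ (by positivity)] at hKu
    linarith
  have hH := H k K hk2' hK1
  have b1 : 2304 * m ^ 2 / (k:ℝ) ^ 2 * t ≤ m * n / 8 := by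
    rw [div_mul_eq_mul_div, div_le_iff₀ (by positivity)]
    have : (136 * v) ^ 2 ≤ (k:ℝ) ^ 2 := by gcongr; linarith
    calc 2304 * m ^ 2 * t = 2304 * m * (v ^ 2 * n) := by rw [hvvn]; ring
      _ ≤ m * n / 8 * (136 * v) ^ 2 := by nlinarith [mul_nonneg hmn.le (sq_nonneg v)]
      _ ≤ _ := by gcongr
  have b2 : 4 * (m * t) ^ 2 / (k * (K : ℝ) ^ 2) ≤ m * n / 8 := by
    rw [div_le_iff₀ (by positivity)]
    have c1 : t ^ 2 * k ≤ m * n / 10 ^ 10 := by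
      calc t ^ 2 * k ≤ t ^ 2 * (136 * v + 2 + 2) := by gcongr
        _ = 136 * (t ^ 2 * v) + 4 * t ^ 2 := by ring
        _ ≤ 136 * (m * n / 10 ^ 25) + 4 * (m * n / 10 ^ 20) := by gcongr
        _ ≤ _ := by linarith
    calc 4 * (m * t) ^ 2 = 4 * t ^ 2 * m ^ 2 := by ring
      _ ≤ 4 * t ^ 2 * (48 * k * K) ^ 2 := by gcongr
      _ = 9216 * (t ^ 2 * k) * (k * K ^ 2) := by ring
      _ ≤ 9216 * (m * n / 10 ^ 10) * (k * K ^ 2) := by gcongr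
      _ ≤ m * n / 8 * (k * K ^ 2) := by
        gcongr
        linarith
  have b3 : 3 * n * k * K ≤ m * n / 8 := by nlinarith
  have b4 : 50 * (m * t) ≤ m * n / 8 := by
    have : m * t ≤ m * (2 * n / 10 ^ 10) := by gcongr
    linarith
  have : t * (2304 * m ^ 2 / (k : ℝ) ^ 2 + 49 * m) = 2304 * m ^ 2 / (k:ℝ) ^ 2 * t + 49 * (m * t) := by ring
  rw [this] at hH
  linarith

open Classical in
theorem aux_fin (P Q : Finset V2) (D : Finset ℝ) (hD : ∀ p ∈ P, ∀ q ∈ Q, |sg p q| ∈ D) 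
    (hP : 1 ≤ P.card) (hQ : 1 ≤ Q.card) (h1 : (P.card : ℝ) ≤ 4 * (Q.card : ℝ) ^ 2)
    (h2 : (Q.card : ℝ) ≤ (P.card : ℝ) ^ 2) :
    (P.card : ℝ) ^ ((1 : ℝ) / 5) * (Q.card : ℝ) ^ ((3 : ℝ) / 5) / 10 ^ 10 ≤ 2 * D.card := by
  set D' := D ∪ D.image (fun x => -x) with hD'
  have hmem : ∀ p ∈ P, ∀ q ∈ Q, sg p q ∈ D' := by
    intro p hp q hq
    have h := hD p hp q hq
    rw [hD', Finset.mem_union, Finset.mem_image]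
    rcases abs_choice (sg p q) with h' | h'
    · left; rwa [h'] at h
    · right; rw [h'] at h; exact ⟨_, h, by ring⟩
  have hc : (D'.card : ℝ) ≤ 2 * D.card := by
    have : D'.card ≤ D.card + D.card := (Finset.card_union_le _ _).trans (Nat.add_le_add_left Finset.card_image_le _)
    have : D'.card ≤ 2 * D.card := by omega
    exact_mod_cast this
  have hD1 : 1 ≤ D'.card := by
    obtain ⟨p, hp⟩ := Finset.card_pos.mp hP
    obtain ⟨q, hq⟩ := Finset.card_pos.mp hQ
    exact Finset.card_pos.mpr ⟨_, hmem p hp q hq⟩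
  have hP' : (1:ℝ) ≤ P.card := by exact_mod_cast hP
  have hQ' : (1:ℝ) ≤ Q.card := by exact_mod_cast hQ
  refine le_trans (le_of_lt ?_) hc
  refine aux_arith P.card Q.card D'.card _ hP' hQ' (by exact_mod_cast hD1) (by positivity) ?_ h1 h2
    (fun k K hk hK => aux_main P Q D' hmem k K hk hK)
  rw [mul_pow, ← Real.rpow_natCast, ← Real.rpow_natCast, ← Real.rpow_mul (by positivity), ← Real.rpow_mul (by positivity)]
  norm_num

theorem aux_dist (i j : Fin 2) (hd : ∀ x y : Pt2, dist x y ^ 2 = (x i - y i) ^ 2 + (x j - y j) ^ 2)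
    (hex : ∀ u v : ℝ, ∃ x : Pt2, x i = u ∧ x j = v) (p : Pt2) (q : V2) (l : Set Pt2)
    (hl : l = {x : Pt2 | x j = q.1 * x i + q.2}) :
    Metric.infDist p l = |sg (p i, p j) q| := by
  have hw := ww_pos q.1
  have hw2 := ww_sq q.1
  set s := sg (p i, p j) q with hs
  have hse : p j - q.1 * p i - q.2 = s * ww q.1 := by
    rw [hs]; unfold sg; field_simp
  have hle : ∀ x ∈ l, |s| ≤ dist p x := by
    intro x hx
    rw [hl] at hx
    have hx : x j = q.1 * x i + q.2 := hx
    apply abs_le_of_sq_le_sq _ dist_nonneg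
    rw [hd]
    have h1 : (p j - x j) - q.1 * (p i - x i) = s * ww q.1 := by rw [hx]; linarith
    have h2 : s ^ 2 * ww q.1 ^ 2 ≤ ((p i - x i) ^ 2 + (p j - x j) ^ 2) * ww q.1 ^ 2 := by
      rw [← mul_pow, ← h1, hw2]
      nlinarith [sq_nonneg ((p i - x i) + q.1 * (p j - x j))]
    exact le_of_mul_le_mul_right h2 (by positivity)
  obtain ⟨x, hx1, hx2⟩ := hex (p i + q.1 * s / ww q.1) (p j - s / ww q.1)
  have hxl : x ∈ l := by
    rw [hl]
    change x j = q.1 * x i + q.2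
    rw [hx1, hx2]
    have h3 : p j = s * ww q.1 + q.1 * p i + q.2 := by linarith
    rw [h3]
    field_simp
    linear_combination s * hw2
  have hxd : dist p x = |s| := by
    have : dist p x ^ 2 = |s| ^ 2 := by
      rw [hd, hx1, hx2, sq_abs]
      field_simp
      linear_combination -s ^ 2 * hw2
    exact (pow_left_inj₀ dist_nonneg (abs_nonneg s) (by norm_num)).mp this
  apply le_antisymm
  · rw [← hxd]; exact Metric.infDist_le_dist_of_mem hxl
  · exact (Metric.le_infDist ⟨x, hxl⟩).mpr fun y hy => hle y hy

open Classical in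
theorem aux_half (i j : Fin 2) (hd : ∀ x y : Pt2, dist x y ^ 2 = (x i - y i) ^ 2 + (x j - y j) ^ 2)
    (hex : ∀ u v : ℝ, ∃ x : Pt2, x i = u ∧ x j = v) (hinj : ∀ x y : Pt2, x i = y i → x j = y j → x = y)
    (m n : ℕ) (hm : 0 < m) (hn : 0 < n) (h1 : (m : ℝ) ≤ (n : ℝ) ^ 2) (h2 : (n : ℝ) ≤ (m : ℝ) ^ 2)
    (P : Finset Pt2) (L : Finset (Set Pt2)) (hP : P.card = m) (hL : L.card ≤ n) (hL2 : n ≤ 2 * L.card)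
    (hl : ∀ l ∈ L, ∃ q : V2, l = {x : Pt2 | x j = q.1 * x i + q.2})
    (D : Finset ℝ) (hD : ∀ p ∈ P, ∀ l ∈ L, Metric.infDist p l ∈ D) :
    1 / (4 * 10 ^ 10) * (m : ℝ) ^ ((1 : ℝ) / 5) * (n : ℝ) ^ ((3 : ℝ) / 5) ≤ D.card := by
  choose! φ hφ using hl
  have hPc : (P.image (fun p => ((p i, p j) : V2))).card = m := by
    rw [Finset.card_image_of_injective, hP]
    intro x y hxy
    simp only [Prod.mk.injEq] at hxy
    exact hinj x y hxy.1 hxy.2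
  have hQc : (L.image φ).card = L.card := by
    apply Finset.card_image_of_injOn
    intro a ha b hb hab
    rw [hφ a ha, hφ b hb, hab]
  have hLr : (n : ℝ) ≤ 2 * L.card := by exact_mod_cast hL2
  have hLr2 : (L.card : ℝ) ≤ n := by exact_mod_cast hL
  have := aux_fin (P.image (fun p => ((p i, p j) : V2))) (L.image φ) D (by
    intro p0 hp0 q hq
    obtain ⟨p, hp, rfl⟩ := Finset.mem_image.mp hp0
    obtain ⟨l, hl, rfl⟩ := Finset.mem_image.mp hq
    rw [← aux_dist i j hd hex p (φ l) l (hφ l hl)]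
    exact hD p hp l hl) (by omega) (by omega) (by rw [hPc, hQc]; nlinarith) (by rw [hPc, hQc]; linarith)
  rw [hPc, hQc] at this
  have h3 : (n : ℝ) ^ ((3 : ℝ) / 5) ≤ 2 * (L.card : ℝ) ^ ((3 : ℝ) / 5) := by
    calc (n : ℝ) ^ ((3 : ℝ) / 5) ≤ (2 * L.card : ℝ) ^ ((3 : ℝ) / 5) := by gcongr
      _ = 2 ^ ((3 : ℝ) / 5) * (L.card : ℝ) ^ ((3 : ℝ) / 5) := Real.mul_rpow (by norm_num) (by positivity)
      _ ≤ 2 ^ (1 : ℝ) * (L.card : ℝ) ^ ((3 : ℝ) / 5) := by gcongr <;> norm_num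
      _ = _ := by rw [Real.rpow_one]
  calc 1 / (4 * 10 ^ 10) * (m : ℝ) ^ ((1 : ℝ) / 5) * (n : ℝ) ^ ((3 : ℝ) / 5) 
      ≤ 1 / (4 * 10 ^ 10) * (m : ℝ) ^ ((1 : ℝ) / 5) * (2 * (L.card : ℝ) ^ ((3 : ℝ) / 5)) := by gcongr
    _ = ((m : ℝ) ^ ((1 : ℝ) / 5) * (L.card : ℝ) ^ ((3 : ℝ) / 5) / 10 ^ 10) / 2 := by ring
    _ ≤ _ := by linarith

theorem aux_line (l : Set Pt2) (h : IsLine2 l) : (∃ q : V2, l = {x : Pt2 | x 1 = q.1 * x 0 + q.2}) ∨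
    (∃ q : V2, l = {x : Pt2 | x 0 = q.1 * x 1 + q.2}) := by
  obtain ⟨a, v, hv, rfl⟩ := h
  by_cases h0 : v 0 = 0
  · have h1 : v 1 ≠ 0 := by
      intro h1
      apply hv
      ext i
      fin_cases i
      · simpa using h0
      · simpa using h1
    right
    refine ⟨(0, a 0), ?_⟩
    ext x
    constructor
    · rintro ⟨t, rfl⟩
      simp [h0]
    · intro hx
      have hx : x 0 = 0 * x 1 + a 0 := hx
      refine ⟨(x 1 - a 1) / v 1, ?_⟩
      ext i
      fin_cases i
      · simp [h0, hx]
      · simp [h1]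
  · left
    refine ⟨(v 1 / v 0, a 1 - v 1 / v 0 * a 0), ?_⟩
    ext x
    constructor
    · rintro ⟨t, rfl⟩
      change _ = _
      simp
      field_simp
      ring
    · intro hx
      have hx : x 1 = v 1 / v 0 * x 0 + (a 1 - v 1 / v 0 * a 0) := hx
      refine ⟨(x 0 - a 0) / v 0, ?_⟩
      ext i
      fin_cases i
      · simp [h0]
      · simp [hx]
        field_simp
        ring

theorem distinct_point_line_distances :
    ∃ c : ℝ, 0 < c ∧
      ∀ (m n : ℕ), 0 < m → 0 < n →
        (m : ℝ) ^ ((1 : ℝ) / 2) ≤ (n : ℝ) → (n : ℝ) ≤ (m : ℝ) ^ 2 →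
        ∀ (P : Finset Pt2) (L : Finset (Set Pt2)),
          P.card = m → L.card = n → (∀ l ∈ L, IsLine2 l) →
          c * (m : ℝ) ^ ((1 : ℝ) / 5) * (n : ℝ) ^ ((3 : ℝ) / 5) ≤
            (({d : ℝ | ∃ p ∈ P, ∃ l ∈ L, d = Metric.infDist p l}).ncard : ℝ) := by
  classical
  refine ⟨1 / (4 * 10 ^ 10), by positivity, ?_⟩
  intro m n hm hn h1 h2 P L hP hL hlines
  set D : Finset ℝ := (P ×ˢ L).image (fun pl => Metric.infDist pl.1 pl.2) with hD
  have hset : {d : ℝ | ∃ p ∈ P, ∃ l ∈ L, d = Metric.infDist p l} = (D : Set ℝ) := by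
    ext d
    simp only [hD, Finset.coe_image, Set.mem_image, Finset.mem_coe, Finset.mem_product, Prod.exists]
    constructor
    · rintro ⟨p, hp, l, hl, rfl⟩
      exact ⟨p, l, ⟨hp, hl⟩, rfl⟩
    · rintro ⟨p, l, ⟨hp, hl⟩, rfl⟩
      exact ⟨p, hp, l, hl, rfl⟩
  rw [hset, Set.ncard_coe_finset]
  have hmn : (m : ℝ) ≤ (n : ℝ) ^ 2 := by
    have : ((m : ℝ) ^ ((1 : ℝ) / 2)) ^ 2 ≤ (n : ℝ) ^ 2 := by gcongr
    rwa [← Real.rpow_natCast, ← Real.rpow_mul (by positivity), Nat.cast_ofNat, one_div,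
      inv_mul_cancel₀ (by norm_num), Real.rpow_one] at this
  have hdist : ∀ x y : Pt2, dist x y ^ 2 = (x 0 - y 0) ^ 2 + (x 1 - y 1) ^ 2 := by
    intro x y
    rw [EuclideanSpace.dist_eq, Real.sq_sqrt (by positivity), Fin.sum_univ_two, Real.dist_eq, Real.dist_eq,
      sq_abs, sq_abs]
  have hmemD : ∀ p ∈ P, ∀ l ∈ L, Metric.infDist p l ∈ D := fun p hp l hl =>
    Finset.mem_image.mpr ⟨(p, l), Finset.mem_product.mpr ⟨hp, hl⟩, rfl⟩
  let nv : Set Pt2 → Prop := fun l => ∃ q : V2, l = {x : Pt2 | x 1 = q.1 * x 0 + q.2}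
  have hsum : (L.filter nv).card + (L.filter (fun l => ¬ nv l)).card = L.card :=
    Finset.card_filter_add_card_filter_not (s := L) _
  by_cases hc : n ≤ 2 * (L.filter nv).card
  · refine aux_half 0 1 hdist (fun u v => ⟨!₂[u, v], by simp, by simp⟩) ?_ m n hm hn hmn h2 P (L.filter nv) hP
      (by omega) hc (fun l hl => (Finset.mem_filter.mp hl).2) D
      (fun p hp l hl => hmemD p hp l (Finset.mem_filter.mp hl).1)
    intro x y h0 h1
    ext i
    fin_cases i
    · exact h0
    · exact h1
  · refine aux_half 1 0 (fun x y => by rw [hdist, add_comm]) (fun u v => ⟨!₂[v, u], by simp, by simp⟩) ?_ m n hm hn hmn h2 P 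
      (L.filter (fun l => ¬ nv l)) hP
      (by omega) (by omega) (fun l hl => ?_) D
      (fun p hp l hl => hmemD p hp l (Finset.mem_filter.mp hl).1)
    · intro x y h0 h1
      ext i
      fin_cases i
      · exact h1
      · exact h0
    · have h := Finset.mem_filter.mp hl
      exact (aux_line l (hlines l h.1)).resolve_left h.2
end
end

section
/- There exists an absolute constant c > 0 such that for all positive integers m and n with m^{1/2} ≤ n ≤ m^2, for every set P of m points and every set L of n lines in ℝ², there exists a single point p ∈ P such that the number of distinct distances from p to the lines of L satisfies |{d(p,ℓ) : ℓ ∈ L}| ≥ c · m^{1/5} n^{3/5}. -/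
noncomputable section

theorem ivt_between (f g : ℝ → ℝ) (hf : Continuous f) (hg : Continuous g) (a b : ℝ)
    (ha : f a < g a) (hb : g b < f b) : ∃ c, min a b < c ∧ c < max a b ∧ f c = g c := by
  have hc : ∃ c ∈ Set.uIcc a b, f c - g c = 0 := by
    have := intermediate_value_uIcc (a := a) (b := b) (f := fun z => f z - g z)
      ((hf.sub hg).continuousOn)
    have h0 : (0:ℝ) ∈ Set.uIcc (f a - g a) (f b - g b) := by
      rw [Set.mem_uIcc]; left; constructor <;> linarith
    obtain ⟨c, hc, h⟩ := this h0
    exact ⟨c, hc, h⟩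
  obtain ⟨c, hc, h⟩ := hc
  have h1 : c ≠ a := by rintro rfl; linarith
  have h2 : c ≠ b := by rintro rfl; linarith
  refine ⟨c, ?_, ?_, by linarith⟩
  · refine lt_of_le_of_ne hc.1 ?_
    rcases min_choice a b with h | h <;> rw [h] <;> exact fun h' => by first | exact h1 h'.symm | exact h2 h'.symm
  · refine lt_of_le_of_ne hc.2 ?_
    rcases max_choice a b with h | h <;> rw [h] <;> assumption

theorem exists_gap {α : Type*} (x : α → ℝ) (V : Finset α) (a : ℝ) :
    ∃ ξ, a < ξ ∧ ∀ v ∈ V, a < x v → ξ < x v := by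
  classical
  induction V using Finset.induction_on with
  | empty => exact ⟨a + 1, by linarith, by simp⟩
  | insert v V hv ih =>
    obtain ⟨ξ, h1, h2⟩ := ih
    by_cases h : a < x v
    · refine ⟨min ξ ((a + x v) / 2), lt_min h1 (by linarith), ?_⟩
      intro w hw haw
      rcases Finset.mem_insert.1 hw with rfl | hw
      · exact lt_of_le_of_lt (min_le_right _ _) (by linarith)
      · exact lt_of_le_of_lt (min_le_left _ _) (h2 w hw haw)
    · refine ⟨ξ, h1, ?_⟩
      intro w hw haw
      rcases Finset.mem_insert.1 hw with rfl | hw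
      · exact absurd haw h
      · exact h2 w hw haw

theorem planar_bound {α ι : Type*}
    (x y : α → ℝ) (V : Finset α)
    (hV : ∀ u ∈ V, ∀ v ∈ V, x u = x v → y u = y v → u = v)
    (E : Finset ι) (s t : ι → α) (f : ι → ℝ → ℝ)
    (hs : ∀ e ∈ E, s e ∈ V) (ht : ∀ e ∈ E, t e ∈ V) (hlt : ∀ e ∈ E, x (s e) < x (t e))
    (hf : ∀ e ∈ E, Continuous (f e)) (hfs : ∀ e ∈ E, f e (x (s e)) = y (s e))
    (hft : ∀ e ∈ E, f e (x (t e)) = y (t e))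
    (hint : ∀ e ∈ E, ∀ v ∈ V, x (s e) < x v → x v < x (t e) → f e (x v) ≠ y v)
    (hpar : ∀ e ∈ E, ∀ e' ∈ E, s e = s e' → t e = t e' → e = e')
    (hcr : ∀ e ∈ E, ∀ e' ∈ E, e ≠ e' → ∀ z, x (s e) < z → z < x (t e) → x (s e') < z →
      z < x (t e') → f e z ≠ f e' z) :
    E.card ≤ 3 * V.card := by
  classical
  -- persistence, weak
  have keepw : ∀ e ∈ E, ∀ e' ∈ E, ∀ z z', x (s e) < z → z < x (t e) → x (s e') < z → z < x (t e') →
      x (s e) ≤ z' → z' ≤ x (t e) → x (s e') ≤ z' → z' ≤ x (t e') → f e z < f e' z →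
      f e z' ≤ f e' z' := by
    intro e he e' he' z z' a1 a2 a3 a4 b1 b2 b3 b4 h
    by_contra hcon
    push Not at hcon
    obtain ⟨c, c1, c2, c3⟩ := ivt_between _ _ (hf e he) (hf e' he') z z' h hcon
    have hne : e ≠ e' := by rintro rfl; exact lt_irrefl _ h
    refine hcr e he e' he' hne c ?_ ?_ ?_ ?_ c3
    · exact lt_of_le_of_lt (le_min a1.le b1) c1
    · exact lt_of_lt_of_le c2 (max_le a2.le b2)
    · exact lt_of_le_of_lt (le_min a3.le b3) c1
    · exact lt_of_lt_of_le c2 (max_le a4.le b4)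
  have keep : ∀ e ∈ E, ∀ e' ∈ E, ∀ z z', x (s e) < z → z < x (t e) → x (s e') < z → z < x (t e') →
      x (s e) < z' → z' < x (t e) → x (s e') < z' → z' < x (t e') → f e z < f e' z →
      f e z' < f e' z' := by
    intro e he e' he' z z' a1 a2 a3 a4 b1 b2 b3 b4 h
    have hne : e ≠ e' := by rintro rfl; exact lt_irrefl _ h
    exact lt_of_le_of_ne (keepw e he e' he' z z' a1 a2 a3 a4 b1.le b2.le b3.le b4.le h)
      (hcr e he e' he' hne z' b1 b2 b3 b4)
  let A1 : ι → Prop := fun e => ∃ e' ∈ E, s e' = s e ∧ ∃ z, x (s e) < z ∧ z < x (t e) ∧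
    z < x (t e') ∧ f e z < f e' z
  let A2 : ι → Prop := fun e => ∃ e' ∈ E, t e' = t e ∧ ∃ z, x (s e) < z ∧ z < x (t e) ∧
    x (s e') < z ∧ f e z < f e' z
  have c1 : (E.filter (fun e => ¬ A1 e)).card ≤ V.card := by
    refine Finset.card_le_card_of_injOn s (fun e he => hs e (Finset.mem_filter.1 he).1) ?_
    intro e he e' he' hss
    have he := Finset.mem_filter.1 he
    have he' := Finset.mem_filter.1 he'
    by_contra hne
    have l1 := hlt e he.1
    have l2 := hlt e' he'.1
    rw [← hss] at l2
    obtain ⟨z, hz1, hz2⟩ := exists_between (lt_min l1 l2)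
    have hz3 := lt_of_lt_of_le hz2 (min_le_left _ _)
    have hz4 := lt_of_lt_of_le hz2 (min_le_right _ _)
    rcases lt_or_gt_of_ne (hcr e he.1 e' he'.1 hne z hz1 hz3 (hss ▸ hz1) hz4) with h | h
    · exact he.2 ⟨e', he'.1, hss.symm, z, hz1, hz3, hz4, h⟩
    · exact he'.2 ⟨e, he.1, hss, z, hss ▸ hz1, hz4, hz3, h⟩
  have c2 : (E.filter (fun e => ¬ A2 e)).card ≤ V.card := by
    refine Finset.card_le_card_of_injOn t (fun e he => ht e (Finset.mem_filter.1 he).1) ?_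
    intro e he e' he' hss
    have he := Finset.mem_filter.1 he
    have he' := Finset.mem_filter.1 he'
    by_contra hne
    have l1 := hlt e he.1
    have l2 := hlt e' he'.1
    rw [← hss] at l2
    obtain ⟨z, hz1, hz2⟩ := exists_between (max_lt l1 l2)
    have hz3 := lt_of_le_of_lt (le_max_left _ _) hz1
    have hz4 := lt_of_le_of_lt (le_max_right _ _) hz1
    rcases lt_or_gt_of_ne (hcr e he.1 e' he'.1 hne z hz3 hz2 hz4 (hss ▸ hz2)) with h | h
    · exact he.2 ⟨e', he'.1, hss.symm, z, hz3, hz2, hz4, h⟩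
    · exact he'.2 ⟨e, he.1, hss, z, hz4, hss ▸ hz2, hz3, h⟩
  have key : ∀ e ∈ E, A1 e → A2 e → ∃ w ∈ V, x (s e) < x w ∧ x w < x (t e) ∧ f e (x w) < y w ∧
      ∀ g ∈ E, x (s g) < x w → x w < x (t g) → f e (x w) < f g (x w) → ¬ f g (x w) < y w := by
    intro e he h1 h2
    obtain ⟨ξ, hξ, hξV⟩ := exists_gap x V (x (s e))
    have hS : (E.filter (fun e' => s e' = s e ∧ f e ξ < f e' ξ)).Nonempty := by
      obtain ⟨e', he', hse, z, z1, z2, z3, hz⟩ := h1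
      refine ⟨e', Finset.mem_filter.2 ⟨he', hse, ?_⟩⟩
      have l2 := hlt e' he'
      exact keep e he e' he' z ξ z1 z2 (hse ▸ z1) z3 hξ (hξV _ (ht e he) (hlt e he))
        (hse ▸ hξ) (hξV _ (ht e' he') (hse ▸ l2)) hz
    obtain ⟨e', he'S, hmin⟩ := Finset.exists_min_image _ (fun e' => f e' ξ) hS
    obtain ⟨he', hse, hee'⟩ := Finset.mem_filter.1 he'S
    have l1 := hlt e he
    have l2 := hlt e' he'
    have hξ1 := hξV _ (ht e he) l1
    have hξ2 := hξV _ (ht e' he') (hse ▸ l2)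
    have hne : e ≠ e' := by rintro rfl; exact lt_irrefl _ hee'
    rw [hse] at l2
    -- the wedge
    let W := V.filter (fun w => x (s e) < x w ∧ x w < x (t e) ∧ x w ≤ x (t e') ∧ f e (x w) < y w ∧
      y w ≤ f e' (x w))
    have habove : ∀ z, x (s e) < z → z < x (t e) → z < x (t e') → f e z < f e' z := by
      intro z z1 z2 z3
      exact keep e he e' he' ξ z hξ hξ1 (hse ▸ hξ) hξ2 z1 z2 (hse ▸ z1) z3 hee'
    have habovew : ∀ z, x (s e) ≤ z → z ≤ x (t e) → z ≤ x (t e') → f e z ≤ f e' z := by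
      intro z z1 z2 z3
      exact keepw e he e' he' ξ z hξ hξ1 (hse ▸ hξ) hξ2 z1 z2 (hse ▸ z1) z3 hee'
    have hW : W.Nonempty := by
      rcases lt_or_ge (x (t e')) (x (t e)) with hlt1 | hge1
      · refine ⟨t e', Finset.mem_filter.2 ⟨ht e' he', l2, hlt1, le_rfl, ?_, (hft e' he').ge⟩⟩
        refine lt_of_le_of_ne ?_ (hint e he _ (ht e' he') l2 hlt1)
        rw [← hft e' he']
        exact habovew _ l2.le hlt1.le le_rfl
      · -- f e' at x (t e) strictly above
        have hv : y (t e) < f e' (x (t e)) := by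
          have hle : y (t e) ≤ f e' (x (t e)) := by
            rw [← hft e he]; exact habovew _ l1.le le_rfl hge1
          refine lt_of_le_of_ne hle ?_
          intro heq
          rcases lt_or_eq_of_le hge1 with h | h
          · exact hint e' he' _ (ht e he) (hse ▸ l1) h heq.symm
          · have : t e = t e' := by
              refine hV _ (ht e he) _ (ht e' he') h ?_
              rw [heq, h, hft e' he']
            exact hne (hpar e he e' he' hse.symm this)
        obtain ⟨e2, he2, hte2, z, z1, z2, z3, hz⟩ := h2
        have m1 := hlt e2 he2
        rw [hte2] at m1
        have hne2 : e ≠ e2 := by rintro rfl; exact lt_irrefl _ hz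
        have hne3 : e2 ≠ e' := by
          rintro rfl
          exact hne (hpar e he e2 he2 hse.symm hte2.symm)
        -- e2 below e' on common part
        have hb : ∀ z, x (s e) ≤ z → x (s e2) ≤ z → z < x (t e) → f e2 z ≤ f e' z := by
          intro z z1 z2 z3
          by_contra hcon
          push Not at hcon
          have hend : f e2 (x (t e)) < f e' (x (t e)) := by
            rw [← hte2, hft e2 he2, hte2]; exact hv
          obtain ⟨c, c1, c2, c3⟩ := ivt_between _ _ (hf e2 he2) (hf e' he') _ _ hend hcon
          rw [min_eq_right z3.le] at c1
          rw [max_eq_left z3.le] at c2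
          exact hcr e2 he2 e' he' hne3 c (lt_of_le_of_lt z2 c1) (hte2 ▸ c2)
            (hse ▸ lt_of_le_of_lt z1 c1) (lt_of_lt_of_le c2 hge1) c3
        have ha : ∀ z', x (s e) ≤ z' → x (s e2) ≤ z' → z' < x (t e) → f e z' ≤ f e2 z' := by
          intro z' y1 y2 y3
          exact keepw e he e2 he2 z z' z1 z2 z3 (hte2 ▸ z2) y1 y3.le y2 (hte2 ▸ y3.le) hz
        rcases lt_or_ge (x (s e)) (x (s e2)) with hlt2 | hge2
        · refine ⟨s e2, Finset.mem_filter.2 ⟨hs e2 he2, hlt2, m1, m1.le.trans hge1, ?_, ?_⟩⟩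
          · refine lt_of_le_of_ne ?_ (hint e he _ (hs e2 he2) hlt2 m1)
            rw [← hfs e2 he2]
            exact ha _ hlt2.le le_rfl m1
          · rw [← hfs e2 he2]
            exact hb _ hlt2.le le_rfl m1
        · exfalso
          have q1 := ha (x (s e)) le_rfl hge2 l1
          have q2 := hb (x (s e)) le_rfl hge2 l1
          rw [hfs e he] at q1
          have : f e' (x (s e)) = y (s e) := by rw [← hse]; exact hfs e' he'
          rw [this] at q2
          have q3 := le_antisymm q2 q1
          rcases lt_or_eq_of_le hge2 with h | h
          · exact hint e2 he2 _ (hs e he) h (hte2 ▸ l1) q3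
          · have : s e2 = s e := by
              refine hV _ (hs e2 he2) _ (hs e he) h ?_
              rw [← q3, ← h, hfs e2 he2]
            exact hne2 (hpar e he e2 he2 this.symm hte2.symm)
    -- choose leftmost, lowest
    obtain ⟨w, hwW, hwmin⟩ := Finset.exists_min_image W x hW
    obtain ⟨hwV, w1, w2, w3, w4, w5⟩ := Finset.mem_filter.1 hwW
    refine ⟨w, hwV, w1, w2, w4, ?_⟩
    intro g hg g1 g2 g3 g4
    have hge : e ≠ g := by rintro rfl; exact lt_irrefl _ g3
    have g5 : f g (x w) < f e' (x w) := lt_of_lt_of_le g4 w5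
    have hge' : g ≠ e' := by rintro rfl; exact lt_irrefl _ g5
    have up : ∀ z, x (s e) ≤ z → x (s g) ≤ z → z ≤ x w → f e z ≤ f g z := by
      intro z z1 z2 z3
      exact keepw e he g hg (x w) z w1 w2 g1 g2 z1 (z3.trans w2.le) z2 (z3.trans g2.le) g3
    have dn : ∀ z, x (s e) ≤ z → x (s g) ≤ z → z ≤ x w → f g z ≤ f e' z := by
      intro z z1 z2 z3
      by_contra hcon
      push Not at hcon
      obtain ⟨c, c1, c2, c3⟩ := ivt_between _ _ (hf g hg) (hf e' he') _ _ g5 hcon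
      rw [min_eq_right z3] at c1
      rw [max_eq_left z3] at c2
      exact hcr g hg e' he' hge' c (lt_of_le_of_lt z2 c1) (c2.trans g2)
        (hse ▸ lt_of_le_of_lt z1 c1) (lt_of_lt_of_le c2 w3) c3
    rcases lt_or_ge (x (s e)) (x (s g)) with hlt2 | hge2
    · have : s g ∈ W := by
        refine Finset.mem_filter.2 ⟨hs g hg, hlt2, g1.trans w2, g1.le.trans w3, ?_, ?_⟩
        · refine lt_of_le_of_ne ?_ (hint e he _ (hs g hg) hlt2 (g1.trans w2))
          rw [← hfs g hg]
          exact up _ hlt2.le le_rfl g1.le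
        · rw [← hfs g hg]
          exact dn _ hlt2.le le_rfl g1.le
      exact absurd (hwmin _ this) (not_le.2 g1)
    · have q1 := up (x (s e)) le_rfl hge2 w1.le
      have q2 := dn (x (s e)) le_rfl hge2 w1.le
      rw [hfs e he] at q1
      have : f e' (x (s e)) = y (s e) := by rw [← hse]; exact hfs e' he'
      rw [this] at q2
      have q3 := le_antisymm q2 q1
      rcases lt_or_eq_of_le hge2 with h | h
      · exact hint g hg _ (hs e he) h (w1.trans g2) q3
      · have hsg : s g = s e := by
          refine hV _ (hs g hg) _ (hs e he) h ?_
          rw [← q3, ← h, hfs g hg]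
        have lg := hlt g hg
        have hξ3 := hξV _ (ht g hg) (hsg ▸ lg)
        have r1 : f e ξ < f g ξ :=
          keep e he g hg (x w) ξ w1 w2 g1 g2 hξ hξ1 (hsg ▸ hξ) hξ3 g3
        have hξw : ξ < x w := hξV _ hwV w1
        have r2 : f g ξ ≤ f e' ξ := dn ξ hξ.le (h ▸ hξ.le) hξw.le
        have r3 := hmin g (Finset.mem_filter.2 ⟨hg, hsg, r1⟩)
        exact hcr g hg e' he' hge' ξ (hsg ▸ hξ) hξ3 (hse ▸ hξ) hξ2 (le_antisymm r2 r3)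
  have c3 : (E.filter (fun e => A1 e ∧ A2 e)).card ≤ V.card := by
    rcases E.eq_empty_or_nonempty with hE | ⟨e0, _⟩
    · simp [hE]
    haveI : Nonempty α := ⟨s e0⟩
    choose! w hw using key
    refine Finset.card_le_card_of_injOn w ?_ ?_
    · intro e he
      obtain ⟨he, a1, a2⟩ := Finset.mem_filter.1 he
      exact (hw e he a1 a2).1
    · intro e he g hg heq
      obtain ⟨he, a1, a2⟩ := Finset.mem_filter.1 he
      obtain ⟨hg, b1, b2⟩ := Finset.mem_filter.1 hg
      obtain ⟨_, p1, p2, p3, p4⟩ := hw e he a1 a2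
      obtain ⟨_, q1, q2, q3, q4⟩ := hw g hg b1 b2
      by_contra hne
      rw [← heq] at q1 q2 q3 q4
      rcases lt_or_gt_of_ne (hcr e he g hg hne _ p1 p2 q1 q2) with h | h
      · exact p4 g hg q1 q2 h q3
      · exact q4 e he p1 p2 h p3
  have hun : E ⊆ (E.filter (fun e => ¬ A1 e) ∪ E.filter (fun e => ¬ A2 e)) ∪
      E.filter (fun e => A1 e ∧ A2 e) := by
    intro e he
    simp only [Finset.mem_union, Finset.mem_filter]
    by_cases b1 : A1 e <;> by_cases b2 : A2 e <;> simp [he, b1, b2]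
  have := Finset.card_le_card hun
  have u1 := Finset.card_union_le (E.filter (fun e => ¬ A1 e) ∪ E.filter (fun e => ¬ A2 e)) (E.filter (fun e => A1 e ∧ A2 e))
  have u2 := Finset.card_union_le (E.filter (fun e => ¬ A1 e)) (E.filter (fun e => ¬ A2 e))
  omega


theorem count_colorings {α : Type*} [DecidableEq α] (V S : Finset α) (hS : S ⊆ V) (q : ℕ) [NeZero q] :
    (Finset.univ.filter (fun c : V → Fin q => ∀ v : V, (v : α) ∈ S → c v = 0)).card * q ^ S.card
      = q ^ V.card := by
  have h : Finset.univ.filter (fun c : V → Fin q => ∀ v : V, (v : α) ∈ S → c v = 0)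
      = Fintype.piFinset (fun v : V => if (v : α) ∈ S then ({0} : Finset (Fin q)) else Finset.univ) := by
    ext c
    simp only [Finset.mem_filter, Finset.mem_univ, true_and, Fintype.mem_piFinset]
    refine forall_congr' fun v => ?_
    by_cases hv : (v : α) ∈ S <;> simp [hv]
  rw [h, Fintype.card_piFinset]
  have h1 : ∀ v : V, (if (v : α) ∈ S then ({0} : Finset (Fin q)) else Finset.univ).card
      = if (v : α) ∈ S then 1 else q := by
    intro v; split_ifs <;> simp
  simp only [h1]
  rw [Finset.prod_coe_sort V (fun v => if v ∈ S then 1 else q), Finset.prod_ite]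
  simp only [Finset.prod_const_one, one_mul, Finset.prod_const]
  rw [← pow_add]
  congr 1
  have := Finset.card_filter_add_card_filter_not (s := V) (fun v => v ∈ S)
  have h2 : V.filter (fun v => v ∈ S) = S := by
    ext v; simp only [Finset.mem_filter]; exact ⟨fun h => h.2, fun h => ⟨hS h, h⟩⟩
  rw [h2] at this
  omega

theorem sum_sample {α β : Type*} [DecidableEq α] (V : Finset α) (q : ℕ) [NeZero q]
    (X : Finset β) (S : β → Finset α) (j : ℕ) (hS : ∀ e ∈ X, S e ⊆ V) (hj : ∀ e ∈ X, (S e).card = j) :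
    (∑ c : V → Fin q, (X.filter (fun e => ∀ v : V, (v : α) ∈ S e → c v = 0)).card) * q ^ j
      = X.card * q ^ V.card := by
  simp only [Finset.card_filter]
  rw [Finset.sum_comm, Finset.sum_mul, Finset.card_eq_sum_ones, Finset.sum_mul]
  refine Finset.sum_congr rfl fun e he => ?_
  rw [← Finset.card_filter, ← hj e he, count_colorings V (S e) (hS e he) q, one_mul]

open Classical in
theorem crossing_ineq {α ι : Type*}
    (x y : α → ℝ) (V : Finset α)
    (hV : ∀ u ∈ V, ∀ v ∈ V, x u = x v → y u = y v → u = v)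
    (E : Finset ι) (s t : ι → α) (f : ι → ℝ → ℝ)
    (hs : ∀ e ∈ E, s e ∈ V) (ht : ∀ e ∈ E, t e ∈ V) (hlt : ∀ e ∈ E, x (s e) < x (t e))
    (hf : ∀ e ∈ E, Continuous (f e)) (hfs : ∀ e ∈ E, f e (x (s e)) = y (s e))
    (hft : ∀ e ∈ E, f e (x (t e)) = y (t e))
    (hint : ∀ e ∈ E, ∀ v ∈ V, x (s e) < x v → x v < x (t e) → f e (x v) ≠ y v)
    (Cr : ι → ι → Prop)
    (hCr : ∀ e e', Cr e e' ↔ ∃ z, x (s e) < z ∧ z < x (t e) ∧ x (s e') < z ∧ z < x (t e') ∧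
      f e z = f e' z) (q : ℕ) (hq : 0 < q) :
    E.card * q ^ 2 ≤ 3 * V.card * q ^ 3
      + ((E ×ˢ E).filter (fun p => p.1 ≠ p.2 ∧ s p.1 = s p.2 ∧ t p.1 = t p.2)).card * q ^ 2
      + ((E ×ˢ E).filter (fun p => p.1 ≠ p.2 ∧ Cr p.1 p.2 ∧ ((s p.1 = s p.2 ∧ t p.1 ≠ t p.2) ∨
          (s p.1 ≠ s p.2 ∧ t p.1 = t p.2)))).card * q
      + ((E ×ˢ E).filter (fun p => p.1 ≠ p.2 ∧ Cr p.1 p.2 ∧ s p.1 ≠ s p.2 ∧ t p.1 ≠ t p.2)).card := by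
  haveI : NeZero q := ⟨hq.ne'⟩
  set Par := (E ×ˢ E).filter (fun p => p.1 ≠ p.2 ∧ s p.1 = s p.2 ∧ t p.1 = t p.2) with hPar
  set Adj := (E ×ˢ E).filter (fun p => p.1 ≠ p.2 ∧ Cr p.1 p.2 ∧ ((s p.1 = s p.2 ∧ t p.1 ≠ t p.2) ∨
          (s p.1 ≠ s p.2 ∧ t p.1 = t p.2))) with hAdj
  set Ind := (E ×ˢ E).filter (fun p => p.1 ≠ p.2 ∧ Cr p.1 p.2 ∧ s p.1 ≠ s p.2 ∧ t p.1 ≠ t p.2) with hInd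
  let SE : ι → Finset α := fun e => {s e, t e}
  let SP : ι × ι → Finset α := fun p => {s p.1, t p.1} ∪ {s p.2, t p.2}
  have hSE : ∀ e ∈ E, SE e ⊆ V := by
    intro e he v hv
    simp only [SE, Finset.mem_insert, Finset.mem_singleton] at hv
    rcases hv with rfl | rfl
    · exact hs e he
    · exact ht e he
  have hSP : ∀ p ∈ E ×ˢ E, SP p ⊆ V := by
    intro p hp
    rw [Finset.mem_product] at hp
    exact Finset.union_subset (hSE _ hp.1) (hSE _ hp.2)
  have hst : ∀ e ∈ E, s e ≠ t e := fun e he h => by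
    have := hlt e he; rw [h] at this; exact lt_irrefl _ this
  have hdis : ∀ e e', Cr e e' → s e ≠ t e' := by
    intro e e' h h'
    obtain ⟨z, h1, h2, h3, h4, _⟩ := (hCr e e').1 h
    rw [h'] at h1; linarith
  have hdis' : ∀ e e', Cr e e' → t e ≠ s e' := by
    intro e e' h h'
    obtain ⟨z, h1, h2, h3, h4, _⟩ := (hCr e e').1 h
    rw [h'] at h2; linarith
  let R : (V → Fin q) → Finset α → Prop := fun c S => ∀ v : V, (v : α) ∈ S → c v = 0
  have hdet : ∀ c : V → Fin q, (E.filter (fun e => R c (SE e))).card ≤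
      3 * (V.filter (fun v => R c {v})).card + (Par.filter (fun p => R c (SP p))).card
      + (Adj.filter (fun p => R c (SP p))).card + (Ind.filter (fun p => R c (SP p))).card := by
    intro c
    set Bad := Par.filter (fun p => R c (SP p)) ∪ Adj.filter (fun p => R c (SP p)) ∪
      Ind.filter (fun p => R c (SP p)) with hBad
    set E1 := (E.filter (fun e => R c (SE e))) \ Bad.image Prod.fst with hE1
    have hE1E : ∀ e ∈ E1, e ∈ E ∧ R c (SE e) := fun e he => by
      have := (Finset.mem_sdiff.1 he).1
      exact Finset.mem_filter.1 this
    have hRu : ∀ e e', R c (SE e) → R c (SE e') → R c (SP (e, e')) := by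
      intro e e' h h' v hv
      rcases Finset.mem_union.1 hv with hv | hv
      · exact h v hv
      · exact h' v hv
    have hnb : ∀ e ∈ E1, ∀ e', (e, e') ∉ Bad := by
      intro e he e' hb
      exact (Finset.mem_sdiff.1 he).2 (Finset.mem_image.2 ⟨_, hb, rfl⟩)
    have hV1 : V.filter (fun v => R c {v}) ⊆ V := Finset.filter_subset _ _
    have hbound : E1.card ≤ 3 * (V.filter (fun v => R c {v})).card := by
      refine planar_bound x y _ (fun u hu v hv => hV u (hV1 hu) v (hV1 hv)) E1 s t f ?_ ?_
        (fun e he => hlt e (hE1E e he).1) (fun e he => hf e (hE1E e he).1)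
        (fun e he => hfs e (hE1E e he).1) (fun e he => hft e (hE1E e he).1)
        (fun e he v hv => hint e (hE1E e he).1 v (hV1 hv)) ?_ ?_
      · intro e he
        refine Finset.mem_filter.2 ⟨hs e (hE1E e he).1, fun v hv => (hE1E e he).2 v ?_⟩
        rw [Finset.mem_singleton] at hv; simp [SE, hv]
      · intro e he
        refine Finset.mem_filter.2 ⟨ht e (hE1E e he).1, fun v hv => (hE1E e he).2 v ?_⟩
        rw [Finset.mem_singleton] at hv; simp [SE, hv]
      · intro e he e' he' h1 h2
        by_contra hne
        refine hnb e he e' ?_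
        refine Finset.mem_union_left _ (Finset.mem_union_left _ (Finset.mem_filter.2 ⟨?_, hRu e e' (hE1E e he).2 (hE1E e' he').2⟩))
        exact Finset.mem_filter.2 ⟨Finset.mem_product.2 ⟨(hE1E e he).1, (hE1E e' he').1⟩, hne, h1, h2⟩
      · intro e he e' he' hne z z1 z2 z3 z4 z5
        have hc : Cr e e' := (hCr e e').2 ⟨z, z1, z2, z3, z4, z5⟩
        refine hnb e he e' ?_
        have hR := hRu e e' (hE1E e he).2 (hE1E e' he').2
        have hp : (e, e') ∈ E ×ˢ E := Finset.mem_product.2 ⟨(hE1E e he).1, (hE1E e' he').1⟩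
        simp only [hBad, hPar, hAdj, hInd, Finset.mem_union, Finset.mem_filter, hp, hR, true_and, and_true]
        by_cases h1 : s e = s e' <;> by_cases h2 : t e = t e' <;> simp [h1, h2, hne, hc]
    have hsub : E.filter (fun e => R c (SE e)) ⊆ E1 ∪ Bad.image Prod.fst := by
      intro e he
      by_cases h : e ∈ Bad.image Prod.fst
      · exact Finset.mem_union_right _ h
      · exact Finset.mem_union_left _ (Finset.mem_sdiff.2 ⟨he, h⟩)
    have k1 := Finset.card_le_card hsub
    have k2 := Finset.card_union_le E1 (Bad.image Prod.fst)
    have k3 : (Bad.image Prod.fst).card ≤ Bad.card := Finset.card_image_le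
    have k4 : Bad.card ≤ _ := Finset.card_union_le _ _
    have k5 := Finset.card_union_le (Par.filter (fun p => R c (SP p))) (Adj.filter (fun p => R c (SP p)))
    omega
  have hsum := Finset.sum_le_sum (fun c (_ : c ∈ (Finset.univ : Finset (V → Fin q))) => hdet c)
  simp only [Finset.sum_add_distrib, ← Finset.mul_sum] at hsum
  have e1 := sum_sample V q E SE 2 hSE (fun e he => Finset.card_pair (hst e he))
  have e2 := sum_sample V q V (fun v => {v}) 1 (fun v hv => Finset.singleton_subset_iff.2 hv)
    (fun v _ => Finset.card_singleton v)
  have e3 := sum_sample V q Par SP 2 (fun p hp => hSP p (Finset.mem_filter.1 hp).1) (by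
    intro p hp
    obtain ⟨hp, _, h1, h2⟩ := Finset.mem_filter.1 hp
    simp only [SP, h1, h2, Finset.union_self]
    exact Finset.card_pair (hst _ (Finset.mem_product.1 hp).2))
  have e4 := sum_sample V q Adj SP 3 (fun p hp => hSP p (Finset.mem_filter.1 hp).1) (by
    intro p hp
    obtain ⟨hp, _, hc, h⟩ := Finset.mem_filter.1 hp
    have a1 := hst _ (Finset.mem_product.1 hp).1
    have a2 := hst _ (Finset.mem_product.1 hp).2
    have a3 := hdis _ _ hc
    have a4 := hdis' _ _ hc
    rcases h with ⟨h1, h2⟩ | ⟨h1, h2⟩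
    · have : SP p = {s p.1, t p.1, t p.2} := by
        ext v; simp only [SP, Finset.mem_union, Finset.mem_insert, Finset.mem_singleton, h1]; tauto
      rw [this]
      exact Finset.card_eq_three.2 ⟨_, _, _, a1, a3, h2, rfl⟩
    · have : SP p = {s p.1, t p.1, s p.2} := by
        ext v; simp only [SP, Finset.mem_union, Finset.mem_insert, Finset.mem_singleton, h2]; tauto
      rw [this]
      exact Finset.card_eq_three.2 ⟨_, _, _, a1, h1, a4, rfl⟩)
  have e5 := sum_sample V q Ind SP 4 (fun p hp => hSP p (Finset.mem_filter.1 hp).1) (by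
    intro p hp
    obtain ⟨hp, _, hc, h1, h2⟩ := Finset.mem_filter.1 hp
    have a1 := hst _ (Finset.mem_product.1 hp).1
    have a2 := hst _ (Finset.mem_product.1 hp).2
    have a3 := hdis _ _ hc
    have a4 := hdis' _ _ hc
    simp only [SP]
    rw [Finset.card_union_of_disjoint, Finset.card_pair a1, Finset.card_pair a2]
    rw [Finset.disjoint_left]
    intro v hv hv'
    simp only [Finset.mem_insert, Finset.mem_singleton] at hv hv'
    rcases hv with rfl | rfl <;> rcases hv' with h | h
    · exact h1 h
    · exact a3 h
    · exact a4 h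
    · exact h2 h)
  have hpos : 0 < q ^ V.card := pow_pos hq _
  refine Nat.le_of_mul_le_mul_right ?_ hpos
  have hmul := Nat.mul_le_mul_right (q ^ 4) hsum
  simp only [R] at hmul
  set s1 := ∑ c : V → Fin q, (E.filter (fun e => ∀ v : V, (v : α) ∈ SE e → c v = 0)).card
  set s2 := ∑ c : V → Fin q, (V.filter (fun e => ∀ v : V, (v : α) ∈ ({e} : Finset α) → c v = 0)).card
  set s3 := ∑ c : V → Fin q, (Par.filter (fun e => ∀ v : V, (v : α) ∈ SP e → c v = 0)).card
  set s4 := ∑ c : V → Fin q, (Adj.filter (fun e => ∀ v : V, (v : α) ∈ SP e → c v = 0)).card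
  set s5 := ∑ c : V → Fin q, (Ind.filter (fun e => ∀ v : V, (v : α) ∈ SP e → c v = 0)).card
  calc E.card * q ^ 2 * q ^ V.card = (E.card * q ^ V.card) * q ^ 2 := by ring
    _ = s1 * q ^ 4 := by rw [← e1]; ring
    _ ≤ (3 * s2 + s3 + s4 + s5) * q ^ 4 := hmul
    _ = 3 * (s2 * q ^ 1) * q ^ 3 + (s3 * q ^ 2) * q ^ 2 + (s4 * q ^ 3) * q + s5 * q ^ 4 := by ring
    _ = _ := by rw [e2, e3, e4, e5]; ring


open Classical in
/-- edges: (curve, left vertex) such that the curve has another vertex to the right -/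
noncomputable def edgeSet {α γ : Type*} (x y : α → ℝ) (V : Finset α) (Γ : Finset γ) (F : γ → ℝ → ℝ) :
    Finset (γ × α) :=
  (Γ ×ˢ V).filter (fun e => F e.1 (x e.2) = y e.2 ∧ ∃ v ∈ V, F e.1 (x v) = y v ∧ x e.2 < x v)

theorem exists_tgt {α γ : Type*} (x y : α → ℝ) (V : Finset α) (Γ : Finset γ) (F : γ → ℝ → ℝ) :
    ∃ tgt : γ × α → α, ∀ e ∈ edgeSet x y V Γ F, tgt e ∈ V ∧ F e.1 (x (tgt e)) = y (tgt e) ∧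
      x e.2 < x (tgt e) ∧ ∀ v ∈ V, F e.1 (x v) = y v → x e.2 < x v → x (tgt e) ≤ x v := by
  classical
  have h : ∀ e : γ × α, ∃ w, e ∈ edgeSet x y V Γ F → w ∈ V ∧ F e.1 (x w) = y w ∧
      x e.2 < x w ∧ ∀ v ∈ V, F e.1 (x v) = y v → x e.2 < x v → x w ≤ x v := by
    intro e
    by_cases he : e ∈ edgeSet x y V Γ F
    · obtain ⟨_, h1, v, hv, h2, h3⟩ := Finset.mem_filter.1 he
      obtain ⟨w, hw, hmin⟩ := Finset.exists_min_image
        (V.filter (fun v => F e.1 (x v) = y v ∧ x e.2 < x v)) x ⟨v, Finset.mem_filter.2 ⟨hv, h2, h3⟩⟩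
      obtain ⟨w1, w2, w3⟩ := Finset.mem_filter.1 hw
      exact ⟨w, fun _ => ⟨w1, w2, w3, fun v hv h h' => hmin v (Finset.mem_filter.2 ⟨hv, h, h'⟩)⟩⟩
    · exact ⟨e.2, fun h => absurd h he⟩
  choose tgt ht using h
  exact ⟨tgt, ht⟩

open Classical in
theorem edgeSet_card {α γ : Type*} (x y : α → ℝ) (V : Finset α) (Γ : Finset γ) (F : γ → ℝ → ℝ)
    (hV : ∀ u ∈ V, ∀ v ∈ V, x u = x v → y u = y v → u = v) :
    ((Γ ×ˢ V).filter (fun e => F e.1 (x e.2) = y e.2)).card ≤ (edgeSet x y V Γ F).card + Γ.card := by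
  set I := (Γ ×ˢ V).filter (fun e => F e.1 (x e.2) = y e.2) with hI
  have hsub : I ⊆ edgeSet x y V Γ F ∪ I \ edgeSet x y V Γ F := by
    intro e he
    by_cases h : e ∈ edgeSet x y V Γ F
    · exact Finset.mem_union_left _ h
    · exact Finset.mem_union_right _ (Finset.mem_sdiff.2 ⟨he, h⟩)
  have h2 : (I \ edgeSet x y V Γ F).card ≤ Γ.card := by
    refine Finset.card_le_card_of_injOn Prod.fst ?_ ?_
    · intro e he
      have := (Finset.mem_filter.1 (Finset.mem_sdiff.1 he).1).1
      exact (Finset.mem_product.1 this).1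
    · have key : ∀ e ∈ I \ edgeSet x y V Γ F, ∀ e' ∈ I \ edgeSet x y V Γ F, e.1 = e'.1 →
          ¬ x e.2 < x e'.2 := by
        intro e he e' he' h hlt
        obtain ⟨h1, h2⟩ := Finset.mem_sdiff.1 he
        obtain ⟨h1', h2'⟩ := Finset.mem_sdiff.1 he'
        obtain ⟨a, b⟩ := Finset.mem_filter.1 h1
        obtain ⟨a', b'⟩ := Finset.mem_filter.1 h1'
        exact h2 (Finset.mem_filter.2 ⟨a, b, e'.2, (Finset.mem_product.1 a').2, h ▸ b', hlt⟩)
      intro e he e' he' h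
      have hx : x e.2 = x e'.2 := le_antisymm (not_lt.1 (key e' he' e he h.symm)) (not_lt.1 (key e he e' he' h))
      obtain ⟨a, b⟩ := Finset.mem_filter.1 (Finset.mem_sdiff.1 he).1
      obtain ⟨a', b'⟩ := Finset.mem_filter.1 (Finset.mem_sdiff.1 he').1
      refine Prod.ext h (hV _ (Finset.mem_product.1 a).2 _ (Finset.mem_product.1 a').2 hx ?_)
      rw [← b, ← b', h, hx]
  have h1 := Finset.card_le_card hsub
  have h3 := Finset.card_union_le (edgeSet x y V Γ F) (I \ edgeSet x y V Γ F)
  omega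

theorem edge_unique {α γ : Type*} (x y : α → ℝ) (V : Finset α) (Γ : Finset γ) (F : γ → ℝ → ℝ)
    (hV : ∀ u ∈ V, ∀ v ∈ V, x u = x v → y u = y v → u = v) (tgt : γ × α → α)
    (htgt : ∀ e ∈ edgeSet x y V Γ F, tgt e ∈ V ∧ F e.1 (x (tgt e)) = y (tgt e) ∧
      x e.2 < x (tgt e) ∧ ∀ v ∈ V, F e.1 (x v) = y v → x e.2 < x v → x (tgt e) ≤ x v)
    (e e' : γ × α) (he : e ∈ edgeSet x y V Γ F) (he' : e' ∈ edgeSet x y V Γ F) (hg : e.1 = e'.1)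
    (z : ℝ) (h1 : x e.2 < z) (h2 : z < x (tgt e)) (h3 : x e'.2 < z) (h4 : z < x (tgt e')) : e = e' := by
  classical
  obtain ⟨a, b, _⟩ := Finset.mem_filter.1 he
  obtain ⟨a', b', _⟩ := Finset.mem_filter.1 he'
  have A := (Finset.mem_product.1 a).2
  have A' := (Finset.mem_product.1 a').2
  have hx : x e.2 = x e'.2 := by
    rcases lt_trichotomy (x e.2) (x e'.2) with h | h | h
    · have := (htgt e he).2.2.2 _ A' (hg ▸ b') h
      linarith
    · exact h
    · have := (htgt e' he').2.2.2 _ A (hg ▸ b) h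
      linarith
  refine Prod.ext hg (hV _ A _ A' hx ?_)
  rw [← b, ← b', hg, hx]

open Classical in
theorem cross_card {α γ : Type*} (x y : α → ℝ) (V : Finset α) (Γ : Finset γ) (F : γ → ℝ → ℝ)
    (hV : ∀ u ∈ V, ∀ v ∈ V, x u = x v → y u = y v → u = v) (tgt : γ × α → α)
    (htgt : ∀ e ∈ edgeSet x y V Γ F, tgt e ∈ V ∧ F e.1 (x (tgt e)) = y (tgt e) ∧
      x e.2 < x (tgt e) ∧ ∀ v ∈ V, F e.1 (x v) = y v → x e.2 < x v → x (tgt e) ≤ x v)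
    (D : ℕ) (hD : ∀ g ∈ Γ, ∀ g' ∈ Γ, g ≠ g' → ∀ S : Finset ℝ,
      (∀ z ∈ S, F g z = F g' z ∧ (∃ u ∈ V, x u < z) ∧ ∃ v ∈ V, z < x v) → S.card ≤ D)
    (X : Finset ((γ × α) × (γ × α)))
    (hX : ∀ p ∈ X, p.1 ∈ edgeSet x y V Γ F ∧ p.2 ∈ edgeSet x y V Γ F ∧ p.1 ≠ p.2 ∧
      ∃ z, x p.1.2 < z ∧ z < x (tgt p.1) ∧ x p.2.2 < z ∧ z < x (tgt p.2) ∧ F p.1.1 z = F p.2.1 z) :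
    X.card ≤ D * Γ.card ^ 2 := by
  have hX' : ∀ p : (γ × α) × (γ × α), ∃ z, p ∈ X → x p.1.2 < z ∧ z < x (tgt p.1) ∧ x p.2.2 < z ∧ z < x (tgt p.2) ∧ F p.1.1 z = F p.2.1 z := by
    intro p
    by_cases hp : p ∈ X
    · obtain ⟨_, _, _, z, hz⟩ := hX p hp
      exact ⟨z, fun _ => hz⟩
    · exact ⟨0, fun h => absurd h hp⟩
  choose Z hZ using hX'
  have hmem : ∀ e ∈ edgeSet x y V Γ F, e.1 ∈ Γ ∧ e.2 ∈ V := fun e he =>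
    Finset.mem_product.1 (Finset.mem_filter.1 he).1
  have := Finset.card_le_mul_card_image_of_maps_to (s := X) (t := Γ ×ˢ Γ) (f := fun p => (p.1.1, p.2.1))
    (fun p hp => Finset.mem_product.2 ⟨(hmem _ (hX p hp).1).1, (hmem _ (hX p hp).2.1).1⟩) D ?_
  · rw [Finset.card_product] at this
    calc X.card ≤ _ := this
      _ = _ := by ring
  · rintro ⟨g, g'⟩ hgg
    obtain ⟨hg, hg'⟩ := Finset.mem_product.1 hgg
    set Y := X.filter (fun p => (p.1.1, p.2.1) = (g, g')) with hY
    have hYX : ∀ p ∈ Y, p ∈ X ∧ p.1.1 = g ∧ p.2.1 = g' := by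
      intro p hp
      obtain ⟨h1, h2⟩ := Finset.mem_filter.1 hp
      exact ⟨h1, (Prod.mk.inj h2).1, (Prod.mk.inj h2).2⟩
    rcases Y.eq_empty_or_nonempty with h0 | ⟨p0, hp0⟩
    · simp [h0]
    have hne : g ≠ g' := by
      rintro rfl
      obtain ⟨h1, h2, h3⟩ := hYX p0 hp0
      obtain ⟨k1, k2, k3, _⟩ := hX p0 h1
      obtain ⟨z1, z2, z3, z4, _⟩ := hZ p0 h1
      exact k3 (edge_unique x y V Γ F hV tgt htgt _ _ k1 k2 (h2.trans h3.symm) _ z1 z2 z3 z4)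
    have hinj : Set.InjOn Z Y := by
      intro p hp p' hp' hpp
      obtain ⟨h1, h2, h3⟩ := hYX p hp
      obtain ⟨h1', h2', h3'⟩ := hYX p' hp'
      obtain ⟨z1, z2, z3, z4, _⟩ := hZ p h1
      obtain ⟨z1', z2', z3', z4', _⟩ := hZ p' h1'
      rw [← hpp] at z1' z2' z3' z4'
      refine Prod.ext ?_ ?_
      · exact edge_unique x y V Γ F hV tgt htgt _ _ (hX p h1).1 (hX p' h1').1 (h2.trans h2'.symm) _ z1 z2 z1' z2'
      · exact edge_unique x y V Γ F hV tgt htgt _ _ (hX p h1).2.1 (hX p' h1').2.1 (h3.trans h3'.symm) _ z3 z4 z3' z4'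
    rw [← Finset.card_image_of_injOn hinj]
    refine hD g hg g' hg' hne _ ?_
    intro z hz
    obtain ⟨p, hp, rfl⟩ := Finset.mem_image.1 hz
    obtain ⟨h1, h2, h3⟩ := hYX p hp
    obtain ⟨z1, z2, z3, z4, z5⟩ := hZ p h1
    refine ⟨by rw [← h2, ← h3]; exact z5, ⟨_, (hmem _ (hX p h1).1).2, z1⟩, ⟨_, (htgt _ (hX p h1).1).1, z2⟩⟩

open Classical in
theorem curve_ineq {α γ : Type*} (x y : α → ℝ) (V : Finset α) (Γ : Finset γ) (F : γ → ℝ → ℝ)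
    (hV : ∀ u ∈ V, ∀ v ∈ V, x u = x v → y u = y v → u = v) (hF : ∀ g, Continuous (F g))
    (tgt : γ × α → α)
    (htgt : ∀ e ∈ edgeSet x y V Γ F, tgt e ∈ V ∧ F e.1 (x (tgt e)) = y (tgt e) ∧
      x e.2 < x (tgt e) ∧ ∀ v ∈ V, F e.1 (x v) = y v → x e.2 < x v → x (tgt e) ≤ x v)
    (Cr : γ × α → γ × α → Prop)
    (hCr : ∀ e e', Cr e e' ↔ ∃ z, x e.2 < z ∧ z < x (tgt e) ∧ x e'.2 < z ∧ z < x (tgt e') ∧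
      F e.1 z = F e'.1 z)
    (E : Finset (γ × α)) (hE : E ⊆ edgeSet x y V Γ F)
    (Par Adj Ind : Finset ((γ × α) × (γ × α)))
    (hPar : ∀ e ∈ E, ∀ e' ∈ E, e ≠ e' → e.2 = e'.2 → tgt e = tgt e' → (e, e') ∈ Par)
    (hAdj : ∀ e ∈ E, ∀ e' ∈ E, e ≠ e' → Cr e e' → (e.2 = e'.2 ∨ tgt e = tgt e') → (e, e') ∈ Adj)
    (hInd : ∀ e ∈ E, ∀ e' ∈ E, e ≠ e' → Cr e e' → (e, e') ∈ Ind)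
    (q : ℕ) (hq : 0 < q) :
    E.card * q ^ 2 ≤ 3 * V.card * q ^ 3 + Par.card * q ^ 2 + Adj.card * q + Ind.card := by
  refine (crossing_ineq x y V hV E Prod.snd tgt (fun e => F e.1) ?_ ?_ ?_ (fun e _ => hF e.1) ?_ ?_ ?_ Cr hCr q hq).trans ?_
  · exact fun e he => (Finset.mem_product.1 (Finset.mem_filter.1 (hE he)).1).2
  · exact fun e he => (htgt e (hE he)).1
  · exact fun e he => (htgt e (hE he)).2.2.1
  · exact fun e he => (Finset.mem_filter.1 (hE he)).2.1
  · exact fun e he => (htgt e (hE he)).2.1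
  · intro e he v hv h1 h2 h3
    have := (htgt e (hE he)).2.2.2 v hv h3 h1
    linarith
  · gcongr
    · rintro ⟨e, e'⟩ hp
      simp only [Finset.mem_filter] at hp
      obtain ⟨hp, h1, h2, h3⟩ := hp
      exact hPar e (Finset.mem_product.1 hp).1 e' (Finset.mem_product.1 hp).2 h1 h2 h3
    · rintro ⟨e, e'⟩ hp
      simp only [Finset.mem_filter] at hp
      obtain ⟨hp, h1, h2, h3⟩ := hp
      refine hAdj e (Finset.mem_product.1 hp).1 e' (Finset.mem_product.1 hp).2 h1 h2 ?_
      rcases h3 with h3 | h3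
      · exact Or.inl h3.1
      · exact Or.inr h3.2
    · rintro ⟨e, e'⟩ hp
      simp only [Finset.mem_filter] at hp
      obtain ⟨hp, h1, h2, h3⟩ := hp
      exact hInd e (Finset.mem_product.1 hp).1 e' (Finset.mem_product.1 hp).2 h1 h2

theorem line_unique (g g' : ℝ × ℝ) (z w : ℝ) (hzw : z ≠ w) (h1 : g.1 * z + g.2 = g'.1 * z + g'.2)
    (h2 : g.1 * w + g.2 = g'.1 * w + g'.2) : g = g' := by
  have h3 : (g.1 - g'.1) * (z - w) = 0 := by linarith
  have h4 : g.1 = g'.1 := by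
    rcases mul_eq_zero.1 h3 with h | h
    · linarith
    · exact absurd (by linarith) hzw
  refine Prod.ext h4 ?_
  rw [h4] at h1; linarith

open Classical in
theorem szemeredi_trotter {α : Type*} (x y : α → ℝ) (V : Finset α)
    (hV : ∀ u ∈ V, ∀ v ∈ V, x u = x v → y u = y v → u = v)
    (Γ : Finset (ℝ × ℝ)) (k : ℕ) (hk : 2 ≤ k)
    (hrich : ∀ g ∈ Γ, k ≤ (V.filter (fun v => g.1 * x v + g.2 = y v)).card) :
    (((Γ ×ˢ V).filter (fun e => e.1.1 * x e.2 + e.1.2 = y e.2)).card : ℝ) ≤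
      2304 * (V.card : ℝ) ^ 2 / (k : ℝ) ^ 2 + 24 * V.card := by
  set F : ℝ × ℝ → ℝ → ℝ := fun g z => g.1 * z + g.2 with hFdef
  set I := ((Γ ×ˢ V).filter (fun e => e.1.1 * x e.2 + e.1.2 = y e.2)).card with hI
  have hkI : Γ.card * k ≤ I := by
    have : I = ∑ g ∈ Γ, (V.filter (fun v => g.1 * x v + g.2 = y v)).card := by
      rw [hI, Finset.card_filter, Finset.sum_product]
      simp only [Finset.card_filter]
    rw [this, ← smul_eq_mul]
    exact Finset.card_nsmul_le_sum _ _ _ hrich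
  obtain ⟨tgt, htgt⟩ := exists_tgt x y V Γ F
  set E := edgeSet x y V Γ F with hEdef
  have hE1 : I ≤ E.card + Γ.card := edgeSet_card x y V Γ F hV
  let Cr : (ℝ × ℝ) × α → (ℝ × ℝ) × α → Prop := fun e e' =>
    ∃ z, x e.2 < z ∧ z < x (tgt e) ∧ x e'.2 < z ∧ z < x (tgt e') ∧ F e.1 z = F e'.1 z
  have hmain : ∀ q : ℕ, 0 < q → E.card * q ^ 2 ≤ 3 * V.card * q ^ 3 + Γ.card ^ 2 := by
    intro q hq
    have hon : ∀ e ∈ E, F e.1 (x e.2) = y e.2 := fun e he => (Finset.mem_filter.1 he).2.1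
    have h := curve_ineq x y V Γ F hV (fun g => by simp only [F]; fun_prop) tgt htgt Cr (fun _ _ => Iff.rfl) E subset_rfl
      ∅ ∅ ((E ×ˢ E).filter (fun p => p.1 ≠ p.2 ∧ Cr p.1 p.2)) (by
      intro e he e' he' h1 h2 h3
      exfalso
      have t1 := htgt e he
      have t2 := htgt e' he'
      refine h1 (Prod.ext (line_unique e.1 e'.1 (x e.2) (x (tgt e)) t1.2.2.1.ne ?_ ?_) h2)
      · have := hon e he; have h' := hon e' he'
        rw [← h2] at h'; exact this.trans h'.symm
      · have := t1.2.1; have h' := t2.2.1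
        rw [← h3] at h'; exact this.trans h'.symm) (by
      rintro e he e' he' h1 ⟨z, z1, z2, z3, z4, z5⟩ h3
      exfalso
      have t1 := htgt e he
      have t2 := htgt e' he'
      have hg : e.1 = e'.1 := by
        rcases h3 with h2 | h2
        · refine line_unique e.1 e'.1 (x e.2) z z1.ne ?_ z5
          have := hon e he; have h' := hon e' he'
          rw [← h2] at h'; exact this.trans h'.symm
        · refine line_unique e.1 e'.1 (x (tgt e)) z z2.ne' ?_ z5
          have := t1.2.1; have h' := t2.2.1
          rw [← h2] at h'; exact this.trans h'.symm
      exact h1 (edge_unique x y V Γ F hV tgt htgt e e' he he' hg z z1 z2 z3 z4))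
      (by
      intro e he e' he' h1 h2
      exact Finset.mem_filter.2 ⟨Finset.mem_product.2 ⟨he, he'⟩, h1, h2⟩) q hq
    have hI := cross_card x y V Γ F hV tgt htgt 1 (by
      intro g _ g' _ hne S hS
      rw [Finset.card_le_one]
      intro a ha b hb
      by_contra hab
      exact hne (line_unique g g' a b hab (hS a ha).1 (hS b hb).1))
      ((E ×ˢ E).filter (fun p => p.1 ≠ p.2 ∧ Cr p.1 p.2)) (by
      intro p hp
      obtain ⟨h1, h2, h3⟩ := Finset.mem_filter.1 hp
      exact ⟨(Finset.mem_product.1 h1).1, (Finset.mem_product.1 h1).2, h2, h3⟩)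
    simp only [Finset.card_empty, zero_mul, add_zero, one_mul] at h hI
    omega
  -- arithmetic
  have hkR : (2:ℝ) ≤ k := by exact_mod_cast hk
  have hk0 : (0:ℝ) < k := by linarith
  set r := Real.sqrt I with hr
  have hr0 : 0 ≤ r := Real.sqrt_nonneg _
  have hr2 : r ^ 2 = I := Real.sq_sqrt (Nat.cast_nonneg _)
  set m : ℝ := (V.card : ℝ) with hm
  have hm0 : 0 ≤ m := Nat.cast_nonneg _
  have hbase : 0 ≤ 2304 * m ^ 2 / (k : ℝ) ^ 2 := by positivity
  rcases Nat.eq_zero_or_pos I with h0 | hpos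
  · rw [h0]; push_cast; linarith
  have hIpos : (0:ℝ) < I := by exact_mod_cast hpos
  have hrpos : 0 < r := Real.sqrt_pos.2 hIpos
  set q := ⌈2 * r / k⌉₊ with hq
  have hq0 : 0 < q := Nat.ceil_pos.2 (by positivity)
  have hq1 : 2 * r / k ≤ q := Nat.le_ceil _
  have hq2 : (q:ℝ) < 2 * r / k + 1 := Nat.ceil_lt_add_one (by positivity)
  have hM : (E.card : ℝ) * q ^ 2 ≤ 3 * m * q ^ 3 + (Γ.card : ℝ) ^ 2 := by rw [hm]; exact_mod_cast hmain q hq0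
  have hkI' : (Γ.card : ℝ) * k ≤ I := by exact_mod_cast hkI
  have hE1' : (I : ℝ) ≤ E.card + Γ.card := by exact_mod_cast hE1
  have hqR : (0:ℝ) < q := by exact_mod_cast hq0
  have hΓ0 : (0:ℝ) ≤ Γ.card := Nat.cast_nonneg _
  have hE2 : (I : ℝ) / 2 ≤ E.card := by nlinarith
  have hqk : 2 * r ≤ q * k := by rwa [div_le_iff₀ hk0] at hq1
  have hΓ : (Γ.card : ℝ) ^ 2 ≤ I / 4 * q ^ 2 := by
    have h1 : (Γ.card : ℝ) * k * (2 * r) ≤ I * (q * k) := by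
      apply mul_le_mul hkI' hqk (by positivity) hIpos.le
    have h2 : (Γ.card : ℝ) * 2 * r ≤ r ^ 2 * q := by
      rw [hr2]
      have : ((Γ.card : ℝ) * 2 * r) * k ≤ (I * q) * k := by linarith
      exact le_of_mul_le_mul_right this hk0
    have h3 : (Γ.card : ℝ) * 2 ≤ r * q := by
      have : ((Γ.card : ℝ) * 2) * r ≤ (r * q) * r := by linarith
      exact le_of_mul_le_mul_right this hrpos
    rw [← hr2]
    nlinarith
  have h4 : (I : ℝ) / 4 ≤ 3 * m * q := by
    have h5 : (I:ℝ) / 2 * q ^ 2 ≤ E.card * q ^ 2 := by gcongr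
    have : (I : ℝ) / 4 * q ^ 2 ≤ (3 * m * q) * q ^ 2 := by nlinarith
    exact le_of_mul_le_mul_right this (by positivity)
  rcases le_or_gt (2 * r / k) 1 with hc | hc
  · have : (q:ℝ) ≤ 2 := by linarith
    have : m * q ≤ m * 2 := by gcongr
    linarith
  · have h6 : (q:ℝ) ≤ 4 * r / k := by
      have : 4 * r / k = 2 * (2 * r / k) := by ring
      linarith
    have h7 : r ^ 2 ≤ 12 * m * (4 * r / k) := by
      rw [hr2]
      have : m * q ≤ m * (4 * r / k) := by gcongr
      linarith
    have h8 : r ≤ 48 * m / k := by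
      have : r * r ≤ (48 * m / k) * r := by
        calc r * r = r ^ 2 := by ring
          _ ≤ _ := h7
          _ = _ := by ring
      exact le_of_mul_le_mul_right this hrpos
    have h9 : r ^ 2 ≤ (48 * m / k) ^ 2 := by gcongr
    rw [hr2] at h9
    have : (48 * m / k) ^ 2 = 2304 * m ^ 2 / (k:ℝ) ^ 2 := by ring
    linarith


noncomputable def sgd (p l : ℝ × ℝ) : ℝ := l.2 - (p.1 * Real.cos l.1 + p.2 * Real.sin l.1)

noncomputable def tcurve (g : (ℝ × ℝ) × ℝ) (z : ℝ) : ℝ :=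
  g.1.1 * Real.cos z + g.1.2 * Real.sin z + g.2

theorem mid_lemma (a b z w : ℝ) (hz : 0 ≤ z) (hzw : z < w) (hw : w ≤ Real.pi)
    (h : a * Real.cos z + b * Real.sin z = a * Real.cos w + b * Real.sin w) :
    a * Real.sin ((z + w) / 2) = b * Real.cos ((z + w) / 2) := by
  have h1 := Real.cos_sub_cos z w
  have h2 := Real.sin_sub_sin z w
  have h3 : Real.sin ((w - z) / 2) ≠ 0 :=
    (Real.sin_pos_of_pos_of_lt_pi (by linarith) (by linarith [Real.pi_pos])).ne'
  have h4 : (z - w) / 2 = -((w - z) / 2) := by ring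
  rw [h4, Real.sin_neg] at h1 h2
  have h5 : Real.sin ((w - z) / 2) * (a * Real.sin ((z + w) / 2) - b * Real.cos ((z + w) / 2)) = 0 := by
    have : a * (Real.cos z - Real.cos w) + b * (Real.sin z - Real.sin w) = 0 := by linarith
    rw [h1, h2] at this
    linarith
  rcases mul_eq_zero.1 h5 with h | h
  · exact absurd h h3
  · linarith

theorem mid_unique (a b M M' : ℝ) (hab : a ≠ 0 ∨ b ≠ 0) (h0 : 0 < M) (h1 : M < Real.pi) (h0' : 0 < M')
    (h1' : M' < Real.pi) (h : a * Real.sin M = b * Real.cos M)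
    (h' : a * Real.sin M' = b * Real.cos M') : M = M' := by
  have hs : Real.sin (M - M') = 0 := by
    rw [Real.sin_sub]
    rcases hab with ha | hb
    · have : a * (Real.sin M * Real.cos M' - Real.cos M * Real.sin M') = 0 := by
        linear_combination Real.cos M' * h - Real.cos M * h'
      exact (mul_eq_zero.1 this).resolve_left ha
    · have : b * (Real.sin M * Real.cos M' - Real.cos M * Real.sin M') = 0 := by
        linear_combination Real.sin M' * h - Real.sin M * h'
      exact (mul_eq_zero.1 this).resolve_left hb
  have := (Real.sin_eq_zero_iff_of_lt_of_lt (by linarith) (by linarith)).1 hs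
  linarith

theorem pair_ne {p p' : ℝ × ℝ} (h : p ≠ p') : p.1 - p'.1 ≠ 0 ∨ p.2 - p'.2 ≠ 0 := by
  by_contra hc
  push Not at hc
  exact h (Prod.ext (by linarith [hc.1]) (by linarith [hc.2]))

open Classical in
theorem tangency_ineq (P L : Finset (ℝ × ℝ)) (hL : ∀ l ∈ L, 0 ≤ l.1 ∧ l.1 < Real.pi) (T : ℕ)
    (hT : ∀ p ∈ P, (L.image (sgd p)).card ≤ T) (k K q : ℕ) (hk : 2 ≤ k) (hK : 0 < K) (hq : 0 < q) :
    ∃ E R : ℕ, P.card * L.card ≤ E + R + P.card * T ∧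
      (R : ℝ) ≤ T * (2304 * (P.card : ℝ) ^ 2 / (k : ℝ) ^ 2 + 25 * P.card) ∧
      E * q ^ 2 * K ≤ 3 * L.card * q ^ 3 * K ^ 2 + E * k * q ^ 2 + 2 * (P.card ^ 2 * T) * q
        + 2 * (P.card * T) ^ 2 := by
  haveI : NeZero K := ⟨hK.ne'⟩
  set Γ : Finset ((ℝ × ℝ) × ℝ) := P.biUnion (fun p => (L.image (sgd p)).image (fun ρ => (p, ρ))) with hΓ
  have hΓP : ∀ g ∈ Γ, g.1 ∈ P ∧ g.2 ∈ L.image (sgd g.1) := by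
    intro g hg
    obtain ⟨p, hp, h⟩ := Finset.mem_biUnion.1 hg
    obtain ⟨ρ, hρ, rfl⟩ := Finset.mem_image.1 h
    exact ⟨hp, hρ⟩
  have hΓcard : Γ.card ≤ P.card * T :=
    Finset.card_biUnion_le_card_mul _ _ _ (fun p hp => Finset.card_image_le.trans (hT p hp))
  have hV : ∀ u ∈ L, ∀ v ∈ L, Prod.fst u = Prod.fst v → Prod.snd u = Prod.snd v → u = v :=
    fun u _ v _ h1 h2 => Prod.ext h1 h2
  obtain ⟨tgt, htgt⟩ := exists_tgt Prod.fst Prod.snd L Γ tcurve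
  set EE := edgeSet Prod.fst Prod.snd L Γ tcurve with hEE
  have huniq := edge_unique Prod.fst Prod.snd L Γ tcurve hV tgt htgt
  have hmem : ∀ e ∈ EE, e.1 ∈ Γ ∧ e.2 ∈ L ∧ tcurve e.1 e.2.1 = e.2.2 := fun e he =>
    ⟨(Finset.mem_product.1 (Finset.mem_filter.1 he).1).1,
      (Finset.mem_product.1 (Finset.mem_filter.1 he).1).2, (Finset.mem_filter.1 he).2.1⟩
  have hon : ∀ (g : (ℝ × ℝ) × ℝ) (l : ℝ × ℝ), tcurve g l.1 = l.2 ↔ g.2 = sgd g.1 l := by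
    intro g l
    unfold tcurve sgd
    constructor <;> intro h <;> linarith
  -- number of edges
  have hcount : P.card * L.card ≤ EE.card + P.card * T := by
    have h1 := edgeSet_card Prod.fst Prod.snd L Γ tcurve hV
    have h2 : (P ×ˢ L).card ≤ ((Γ ×ˢ L).filter (fun e => tcurve e.1 (Prod.fst e.2) = Prod.snd e.2)).card := by
      refine Finset.card_le_card_of_injOn (fun a => ((a.1, sgd a.1 a.2), a.2)) ?_ ?_
      · intro a ha
        obtain ⟨a1, a2⟩ := Finset.mem_product.1 ha
        simp only [Finset.coe_filter, Set.mem_setOf_eq]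
        refine ⟨Finset.mem_product.2 ⟨?_, a2⟩, (hon _ _).2 rfl⟩
        exact Finset.mem_biUnion.2 ⟨a.1, a1, Finset.mem_image.2 ⟨_, Finset.mem_image_of_mem _ a2, rfl⟩⟩
      · intro a _ b _ hab
        simp only [Prod.mk.injEq] at hab
        exact Prod.ext hab.1.1 hab.2
    rw [Finset.card_product] at h2
    exact h2.trans (h1.trans (Nat.add_le_add_left hΓcard _))
  -- midpoints
  have hmidrange : ∀ e ∈ EE, 0 ≤ e.2.1 ∧ e.2.1 < (tgt e).1 ∧ (tgt e).1 < Real.pi := by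
    intro e he
    exact ⟨(hL _ (hmem e he).2.1).1, (htgt e he).2.2.1, (hL _ (htgt e he).1).2⟩
  have heq2 : ∀ (g g' : (ℝ × ℝ) × ℝ) (z w : ℝ), 0 ≤ z → z < w → w ≤ Real.pi →
      tcurve g z = tcurve g' z → tcurve g w = tcurve g' w →
      (g.1.1 - g'.1.1) * Real.sin ((z + w) / 2) = (g.1.2 - g'.1.2) * Real.cos ((z + w) / 2) := by
    intro g g' z w h0 h1 h2 h3 h4
    refine mid_lemma _ _ z w h0 h1 h2 ?_
    unfold tcurve at h3 h4
    linarith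
  have hsamep : ∀ (g g' : (ℝ × ℝ) × ℝ) (z : ℝ), tcurve g z = tcurve g' z → g.1 = g'.1 → g = g' := by
    intro g g' z h1 h2
    refine Prod.ext h2 ?_
    unfold tcurve at h1
    rw [h2] at h1; linarith
  let Cr : ((ℝ × ℝ) × ℝ) × (ℝ × ℝ) → ((ℝ × ℝ) × ℝ) × (ℝ × ℝ) → Prop := fun e e' =>
    ∃ z, Prod.fst e.2 < z ∧ z < Prod.fst (tgt e) ∧ Prod.fst e'.2 < z ∧ z < Prod.fst (tgt e') ∧
      tcurve e.1 z = tcurve e'.1 z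
  have hCrp : ∀ e ∈ EE, ∀ e' ∈ EE, e ≠ e' → Cr e e' → e.1.1 ≠ e'.1.1 := by
    rintro e he e' he' hne ⟨z, z1, z2, z3, z4, z5⟩ hp
    exact hne (huniq e e' he he' (hsamep _ _ z z5 hp) z z1 z2 z3 z4)
  -- rich edges
  let Bs : ((ℝ × ℝ) × ℝ) × (ℝ × ℝ) → Finset (ℝ × ℝ) := fun e =>
    P.filter (fun p => sgd p e.2 = sgd p (tgt e))
  set E := EE.filter (fun e => (Bs e).card < k) with hE
  set Rch := EE.filter (fun e => ¬ (Bs e).card < k) with hRch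
  have hER : E.card + Rch.card = EE.card := Finset.card_filter_add_card_filter_not _
  have hEsub : ∀ e ∈ E, e ∈ EE := fun e he => (Finset.mem_filter.1 he).1
  refine ⟨E.card, Rch.card, by omega, ?_, ?_⟩
  · -- Szemeredi-Trotter part
    let M : ((ℝ × ℝ) × ℝ) × (ℝ × ℝ) → ℝ := fun e => (e.2.1 + (tgt e).1) / 2
    have hM : ∀ e ∈ EE, 0 < M e ∧ M e < Real.pi ∧ e.2.1 < M e ∧ M e < (tgt e).1 := by
      intro e he
      obtain ⟨h1, h2, h3⟩ := hmidrange e he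
      simp only [M]
      refine ⟨?_, ?_, ?_, ?_⟩ <;> linarith
    have hMu : ∀ e ∈ EE, ∀ e' ∈ EE, e.1 = e'.1 → M e = M e' → e = e' := by
      intro e he e' he' h1 h2
      obtain ⟨_, _, a, b⟩ := hM e he
      obtain ⟨_, _, a', b'⟩ := hM e' he'
      rw [← h2] at a' b'
      exact huniq e e' he he' h1 (M e) a b a' b'
    set R1 := Rch.filter (fun e => Real.cos (M e) = 0) with hR1
    set R2 := Rch.filter (fun e => ¬ Real.cos (M e) = 0) with hR2
    have hR12 : R1.card + R2.card = Rch.card := Finset.card_filter_add_card_filter_not _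
    have hb1 : R1.card ≤ T * P.card := by
      refine Finset.card_le_mul_card_image_of_maps_to (f := fun e => e.1.1) ?_ T ?_
      · intro e he
        have he := (Finset.mem_filter.1 (Finset.mem_filter.1 he).1).1
        exact (hΓP _ (hmem e he).1).1
      · intro p hp
        refine le_trans ?_ (hT p hp)
        refine Finset.card_le_card_of_injOn (fun e => e.1.2) ?_ ?_
        · intro e he
          obtain ⟨h1, h2⟩ := Finset.mem_filter.1 he
          have he := (Finset.mem_filter.1 (Finset.mem_filter.1 h1).1).1
          have := (hΓP _ (hmem e he).1).2
          rw [h2] at this; exact this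
        · intro e he e' he' hh
          obtain ⟨h1, h2⟩ := Finset.mem_filter.1 he
          obtain ⟨h1', h2'⟩ := Finset.mem_filter.1 he'
          obtain ⟨h3, h4⟩ := Finset.mem_filter.1 h1
          obtain ⟨h3', h4'⟩ := Finset.mem_filter.1 h1'
          have he := (Finset.mem_filter.1 h3).1
          have he' := (Finset.mem_filter.1 h3').1
          refine hMu e he e' he' (Prod.ext (h2.trans h2'.symm) hh) ?_
          obtain ⟨a, b, _⟩ := hM e he
          obtain ⟨a', b', _⟩ := hM e' he'
          exact mid_unique 0 1 _ _ (Or.inr one_ne_zero) a b a' b' (by rw [h4]; ring) (by rw [h4']; ring)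
    let ln : ((ℝ × ℝ) × ℝ) × (ℝ × ℝ) → ℝ × ℝ := fun e =>
      (Real.sin (M e) / Real.cos (M e), e.1.1.2 - Real.sin (M e) / Real.cos (M e) * e.1.1.1)
    set Γ' := R2.image ln with hΓ'
    have hST := szemeredi_trotter Prod.fst Prod.snd P (fun u _ v _ h1 h2 => Prod.ext h1 h2) Γ' k hk (by
      intro g hg
      obtain ⟨e, he, rfl⟩ := Finset.mem_image.1 hg
      obtain ⟨h3, h4⟩ := Finset.mem_filter.1 he
      obtain ⟨h5, h6⟩ := Finset.mem_filter.1 h3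
      refine (not_lt.1 h6).trans (Finset.card_le_card ?_)
      intro p hp
      obtain ⟨hpP, hp⟩ := Finset.mem_filter.1 hp
      refine Finset.mem_filter.2 ⟨hpP, ?_⟩
      obtain ⟨r1, r2, r3⟩ := hmidrange e h5
      have := heq2 (p, sgd p e.2) e.1 e.2.1 (tgt e).1 r1 r2 r3.le
        (by rw [(hmem e h5).2.2, hon]) (by rw [(htgt e h5).2.1, hon]; exact hp)
      simp only [ln]
      change (p.1 - e.1.1.1) * Real.sin (M e) = (p.2 - e.1.1.2) * Real.cos (M e) at this
      field_simp
      linarith)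
    have hb2 : R2.card ≤ T * ((Γ' ×ˢ P).filter (fun e => e.1.1 * Prod.fst e.2 + e.1.2 = Prod.snd e.2)).card := by
      refine Finset.card_le_mul_card_image_of_maps_to (f := fun e => (ln e, e.1.1)) ?_ T ?_
      · intro e he
        have hee := (Finset.mem_filter.1 (Finset.mem_filter.1 he).1).1
        refine Finset.mem_filter.2 ⟨Finset.mem_product.2 ⟨Finset.mem_image_of_mem _ he, (hΓP _ (hmem e hee).1).1⟩, ?_⟩
        simp only [ln]; ring
      · rintro ⟨g, p⟩ hgp
        have hp := (Finset.mem_product.1 (Finset.mem_filter.1 hgp).1).2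
        refine le_trans ?_ (hT p hp)
        refine Finset.card_le_card_of_injOn (fun e => e.1.2) ?_ ?_
        · intro e he
          obtain ⟨h1, h2⟩ := Finset.mem_filter.1 he
          have he := (Finset.mem_filter.1 (Finset.mem_filter.1 h1).1).1
          have := (hΓP _ (hmem e he).1).2
          rw [(Prod.mk.inj h2).2] at this; exact this
        · intro e he e' he' hh
          obtain ⟨h1, h2⟩ := Finset.mem_filter.1 he
          obtain ⟨h1', h2'⟩ := Finset.mem_filter.1 he'
          obtain ⟨h3, h4⟩ := Finset.mem_filter.1 h1
          obtain ⟨h3', h4'⟩ := Finset.mem_filter.1 h1'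
          have he := (Finset.mem_filter.1 h3).1
          have he' := (Finset.mem_filter.1 h3').1
          have h5 := (h2.trans h2'.symm)
          simp only [Prod.mk.injEq, ln] at h5
          refine hMu e he e' he' (Prod.ext h5.2 hh) ?_
          obtain ⟨a, b, _⟩ := hM e he
          obtain ⟨a', b', _⟩ := hM e' he'
          refine mid_unique 1 (Real.sin (M e) / Real.cos (M e)) _ _ (Or.inl one_ne_zero) a b a' b' ?_ ?_
          · field_simp
          · rw [h5.1.1]; field_simp
    have hb1' : (R1.card : ℝ) ≤ T * P.card := by exact_mod_cast hb1
    have hb2' : (R2.card : ℝ) ≤ T * (((Γ' ×ˢ P).filter (fun e => e.1.1 * Prod.fst e.2 + e.1.2 = Prod.snd e.2)).card : ℝ) := by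
      exact_mod_cast hb2
    have hb3 : (T : ℝ) * (((Γ' ×ˢ P).filter (fun e => e.1.1 * Prod.fst e.2 + e.1.2 = Prod.snd e.2)).card : ℝ)
      ≤ T * (2304 * (P.card : ℝ) ^ 2 / (k : ℝ) ^ 2 + 24 * P.card) := by gcongr
    have hb4 : (Rch.card : ℝ) = R1.card + R2.card := by rw [← hR12]; push_cast; ring
    rw [hb4]
    have : (T:ℝ) * (2304 * (P.card : ℝ) ^ 2 / (k : ℝ) ^ 2 + 25 * P.card) =
      T * (2304 * (P.card : ℝ) ^ 2 / (k : ℝ) ^ 2 + 24 * P.card) + T * P.card := by ring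
    linarith
  · -- crossing part
    set Par := (E ×ˢ E).filter (fun p => p.1 ≠ p.2 ∧ p.1.2 = p.2.2 ∧ tgt p.1 = tgt p.2) with hPar
    set Ind := (E ×ˢ E).filter (fun p => p.1 ≠ p.2 ∧ Cr p.1 p.2) with hInd
    set Adj := Ind.filter (fun p => p.1.2 = p.2.2 ∨ tgt p.1 = tgt p.2) with hAdj
    have hIndE : ∀ p ∈ Ind, p.1 ∈ E ∧ p.2 ∈ E ∧ p.1 ≠ p.2 ∧ Cr p.1 p.2 := by
      intro p hp
      obtain ⟨h1, h2, h3⟩ := Finset.mem_filter.1 hp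
      exact ⟨(Finset.mem_product.1 h1).1, (Finset.mem_product.1 h1).2, h2, h3⟩
    have hParE : ∀ p ∈ Par, p.1 ∈ E ∧ p.2 ∈ E ∧ p.1.1.1 ≠ p.2.1.1 := by
      intro p hp
      obtain ⟨h1, h2, h3, h4⟩ := Finset.mem_filter.1 hp
      obtain ⟨h5, h6⟩ := Finset.mem_product.1 h1
      refine ⟨h5, h6, fun h => h2 (Prod.ext (hsamep _ _ p.1.2.1 ?_ h) h3)⟩
      rw [(hmem _ (hEsub _ h5)).2.2, h3, (hmem _ (hEsub _ h6)).2.2]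
    -- counts
    have hParc : Par.card ≤ k * E.card := by
      refine Finset.card_le_mul_card_image_of_maps_to (f := fun p => p.1) (fun p hp => (hParE p hp).1) k ?_
      intro e he
      refine le_trans ?_ (Finset.mem_filter.1 he).2.le
      refine Finset.card_le_card_of_injOn (fun p => p.2.1.1) ?_ ?_
      · intro p hp
        obtain ⟨h1, h2⟩ := Finset.mem_filter.1 hp
        obtain ⟨_, _, h3, h4⟩ := Finset.mem_filter.1 h1
        have h5 := hEsub _ (hParE p h1).2.1
        refine Finset.mem_filter.2 ⟨(hΓP _ (hmem _ h5).1).1, ?_⟩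
        have a := (hon _ _).1 (hmem _ h5).2.2
        have b := (hon _ _).1 (htgt _ h5).2.1
        rw [← h2, h3, h4, ← a, ← b]
      · intro p hp p' hp' hh
        obtain ⟨h1, h2⟩ := Finset.mem_filter.1 hp
        obtain ⟨_, _, h3, h4⟩ := Finset.mem_filter.1 h1
        obtain ⟨h1', h2'⟩ := Finset.mem_filter.1 hp'
        obtain ⟨_, _, h3', h4'⟩ := Finset.mem_filter.1 h1'
        have h5 := hEsub _ (hParE p h1).2.1
        have h5' := hEsub _ (hParE p' h1').2.1
        have a := (hon _ _).1 (hmem _ h5).2.2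
        have a' := (hon _ _).1 (hmem _ h5').2.2
        have h6 : p.2.2 = p'.2.2 := by rw [← h3, ← h3', h2, h2']
        refine Prod.ext (h2.trans h2'.symm) (Prod.ext (Prod.ext hh ?_) h6)
        simp only at hh
        rw [a, a', h6, hh]
    have hIndc : Ind.card ≤ 2 * Γ.card ^ 2 := by
      refine cross_card Prod.fst Prod.snd L Γ tcurve hV tgt htgt 2 ?_ Ind ?_
      · intro g hg g' hg' hne S hS
        by_contra hcon
        push Not at hcon
        obtain ⟨a, ha, b, hb, c, hc, hab, hac, hbc⟩ := Finset.two_lt_card.1 hcon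
        have hrange : ∀ z ∈ S, tcurve g z = tcurve g' z ∧ 0 < z ∧ z < Real.pi := by
          intro z hz
          obtain ⟨h1, ⟨u, hu, h2⟩, v, hv, h3⟩ := hS z hz
          exact ⟨h1, lt_of_le_of_lt (hL u hu).1 h2, h3.trans (hL v hv).2⟩
        have hp : g.1 ≠ g'.1 := fun h => hne (hsamep _ _ a (hrange a ha).1 h)
        have hm : ∀ z ∈ S, ∀ w ∈ S, z ≠ w → (g.1.1 - g'.1.1) * Real.sin ((z + w) / 2)
            = (g.1.2 - g'.1.2) * Real.cos ((z + w) / 2) := by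
          intro z hz w hw hzw
          obtain ⟨z1, z2, z3⟩ := hrange z hz
          obtain ⟨w1, w2, w3⟩ := hrange w hw
          rcases lt_or_gt_of_ne hzw with h | h
          · exact heq2 g g' z w z2.le h w3.le z1 w1
          · rw [add_comm]; exact heq2 g g' w z w2.le h z3.le w1 z1
        obtain ⟨_, a2, a3⟩ := hrange a ha
        obtain ⟨_, b2, b3⟩ := hrange b hb
        obtain ⟨_, c2, c3⟩ := hrange c hc
        have := mid_unique _ _ ((a + b) / 2) ((a + c) / 2) (pair_ne hp) (by linarith) (by linarith)
          (by linarith) (by linarith) (hm a ha b hb hab) (hm a ha c hc hac)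
        exact hbc (by linarith)
      · intro p hp
        obtain ⟨h1, h2, h3, h4⟩ := hIndE p hp
        exact ⟨hEsub _ h1, hEsub _ h2, h3, h4⟩
    -- each adjacent crossing pair has a common middle angle determined by the two centres
    have hAdjM : ∀ p ∈ Adj, ∃ M, 0 < M ∧ M < Real.pi ∧ p.1.2.1 < M ∧ M < (tgt p.1).1 ∧ p.2.2.1 < M ∧
        M < (tgt p.2).1 ∧ (p.1.1.1.1 - p.2.1.1.1) * Real.sin M = (p.1.1.1.2 - p.2.1.1.2) * Real.cos M := by
      intro p hp
      obtain ⟨h1, h2⟩ := Finset.mem_filter.1 hp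
      obtain ⟨e1, e2, h3, z, z1, z2, z3, z4, z5⟩ := hIndE p h1
      have e1 := hEsub _ e1
      have e2 := hEsub _ e2
      obtain ⟨r1, r2, r3⟩ := hmidrange _ e1
      obtain ⟨s1, s2, s3⟩ := hmidrange _ e2
      rcases h2 with h2 | h2
      · refine ⟨(p.1.2.1 + z) / 2, by linarith, by linarith, by linarith, by linarith, by rw [← h2]; linarith, by linarith, ?_⟩
        refine heq2 p.1.1 p.2.1 _ _ r1 z1 (by linarith) ?_ z5
        rw [(hmem _ e1).2.2, h2, (hmem _ e2).2.2]
      · refine ⟨(z + (tgt p.1).1) / 2, by linarith, by linarith, by linarith, by linarith, by linarith, by rw [← h2]; linarith, ?_⟩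
        refine heq2 p.1.1 p.2.1 _ _ (by linarith) z2 r3.le z5 ?_
        rw [(htgt _ e1).2.1, h2, (htgt _ e2).2.1]
    have hAdjinj : ∀ p ∈ Adj, ∀ p' ∈ Adj, p.1.1 = p'.1.1 → p.2.1.1 = p'.2.1.1 → p.1 = p'.1 ∧
        (p.2.1 = p'.2.1 → p.2 = p'.2) := by
      intro p hp p' hp' h1 h2
      obtain ⟨M, m1, m2, m3, m4, m5, m6, m7⟩ := hAdjM p hp
      obtain ⟨M', m1', m2', m3', m4', m5', m6', m7'⟩ := hAdjM p' hp'
      obtain ⟨e1, e2, h3, h4⟩ := hIndE p (Finset.mem_filter.1 hp).1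
      obtain ⟨e1', e2', h3', h4'⟩ := hIndE p' (Finset.mem_filter.1 hp').1
      rw [← h1, ← h2] at m7'
      have hMM := mid_unique _ _ M M' (pair_ne (hCrp _ (hEsub _ e1) _ (hEsub _ e2) h3 h4)) m1 m2 m1' m2' m7 m7'
      rw [← hMM] at m3' m4' m5' m6'
      exact ⟨huniq _ _ (hEsub _ e1) (hEsub _ e1') h1 M m3 m4 m3' m4',
        fun h => huniq _ _ (hEsub _ e2) (hEsub _ e2') h M m5 m6 m5' m6'⟩
    have hAdjmaps : ∀ p ∈ Adj, (p.1.1, p.2.1.1) ∈ Γ ×ˢ P := by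
      intro p hp
      obtain ⟨e1, e2, h3, h4⟩ := hIndE p (Finset.mem_filter.1 hp).1
      exact Finset.mem_product.2 ⟨(hmem _ (hEsub _ e1)).1, (hΓP _ (hmem _ (hEsub _ e2)).1).1⟩
    have hAdjc : Adj.card ≤ 2 * (Γ.card * P.card) := by
      have hA1 : (Adj.filter (fun p => p.1.2 = p.2.2)).card ≤ Γ.card * P.card := by
        rw [← Finset.card_product]
        refine Finset.card_le_card_of_injOn (fun p => (p.1.1, p.2.1.1)) (fun p hp => hAdjmaps p (Finset.mem_filter.1 hp).1) ?_
        intro p hp p' hp' hh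
        obtain ⟨h1, h2⟩ := Finset.mem_filter.1 hp
        obtain ⟨h1', h2'⟩ := Finset.mem_filter.1 hp'
        obtain ⟨hh1, hh2⟩ := Prod.mk.inj hh
        obtain ⟨k1, k2⟩ := hAdjinj p h1 p' h1' hh1 hh2
        have e2 := hEsub _ (hIndE p (Finset.mem_filter.1 h1).1).2.1
        have e2' := hEsub _ (hIndE p' (Finset.mem_filter.1 h1').1).2.1
        refine Prod.ext k1 (k2 (Prod.ext hh2 ?_))
        rw [(hon _ _).1 (hmem _ e2).2.2, (hon _ _).1 (hmem _ e2').2.2, hh2, ← h2, ← h2', k1]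
      have hA2 : (Adj.filter (fun p => ¬ p.1.2 = p.2.2)).card ≤ Γ.card * P.card := by
        rw [← Finset.card_product]
        refine Finset.card_le_card_of_injOn (fun p => (p.1.1, p.2.1.1)) (fun p hp => hAdjmaps p (Finset.mem_filter.1 hp).1) ?_
        intro p hp p' hp' hh
        obtain ⟨h1, h2⟩ := Finset.mem_filter.1 hp
        obtain ⟨h1', h2'⟩ := Finset.mem_filter.1 hp'
        have h2 := (Finset.mem_filter.1 h1).2.resolve_left h2
        have h2' := (Finset.mem_filter.1 h1').2.resolve_left h2'
        obtain ⟨hh1, hh2⟩ := Prod.mk.inj hh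
        obtain ⟨k1, k2⟩ := hAdjinj p h1 p' h1' hh1 hh2
        have e2 := hEsub _ (hIndE p (Finset.mem_filter.1 h1).1).2.1
        have e2' := hEsub _ (hIndE p' (Finset.mem_filter.1 h1').1).2.1
        refine Prod.ext k1 (k2 (Prod.ext hh2 ?_))
        rw [(hon _ _).1 (htgt _ e2).2.1, (hon _ _).1 (htgt _ e2').2.1, hh2, ← h2, ← h2', k1]
      have := Finset.card_filter_add_card_filter_not (s := Adj) (fun p => p.1.2 = p.2.2)
      omega
    -- sampling the centres
    let SE : ((ℝ × ℝ) × ℝ) × (ℝ × ℝ) → Finset (ℝ × ℝ) := fun e => {e.1.1}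
    let SP : (((ℝ × ℝ) × ℝ) × (ℝ × ℝ)) × (((ℝ × ℝ) × ℝ) × (ℝ × ℝ)) → Finset (ℝ × ℝ) := fun p => {p.1.1.1, p.2.1.1}
    let Rr : (P → Fin K) → Finset (ℝ × ℝ) → Prop := fun c S => ∀ v : P, (v : ℝ × ℝ) ∈ S → c v = 0
    have hEP : ∀ e ∈ E, e.1.1 ∈ P := fun e he => (hΓP _ (hmem _ (hEsub _ he)).1).1
    have hRu : ∀ c e e', Rr c (SE e) → Rr c (SE e') → Rr c (SP (e, e')) := by
      intro c e e' h h' v hv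
      simp only [SP, Finset.mem_insert, Finset.mem_singleton] at hv
      rcases hv with hv | hv
      · exact h v (by simp [SE, hv])
      · exact h' v (by simp [SE, hv])
    have hdet : ∀ c : P → Fin K, (E.filter (fun e => Rr c (SE e))).card * q ^ 2 ≤ 3 * L.card * q ^ 3
        + (Par.filter (fun p => Rr c (SP p))).card * q ^ 2 + (Adj.filter (fun p => Rr c (SP p))).card * q
        + (Ind.filter (fun p => Rr c (SP p))).card := by
      intro c
      refine curve_ineq Prod.fst Prod.snd L Γ tcurve hV (fun g => by unfold tcurve; fun_prop) tgt htgt Cr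
        (fun _ _ => Iff.rfl) _ ?_ _ _ _ ?_ ?_ ?_ q hq
      · intro e he; exact hEsub _ (Finset.mem_filter.1 he).1
      · intro e he e' he' h1 h2 h3
        obtain ⟨he, hr⟩ := Finset.mem_filter.1 he
        obtain ⟨he', hr'⟩ := Finset.mem_filter.1 he'
        exact Finset.mem_filter.2 ⟨Finset.mem_filter.2 ⟨Finset.mem_product.2 ⟨he, he'⟩, h1, h2, h3⟩, hRu c e e' hr hr'⟩
      · intro e he e' he' h1 h2 h3
        obtain ⟨he, hr⟩ := Finset.mem_filter.1 he
        obtain ⟨he', hr'⟩ := Finset.mem_filter.1 he'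
        exact Finset.mem_filter.2 ⟨Finset.mem_filter.2 ⟨Finset.mem_filter.2 ⟨Finset.mem_product.2 ⟨he, he'⟩, h1, h2⟩, h3⟩, hRu c e e' hr hr'⟩
      · intro e he e' he' h1 h2
        obtain ⟨he, hr⟩ := Finset.mem_filter.1 he
        obtain ⟨he', hr'⟩ := Finset.mem_filter.1 he'
        exact Finset.mem_filter.2 ⟨Finset.mem_filter.2 ⟨Finset.mem_product.2 ⟨he, he'⟩, h1, h2⟩, hRu c e e' hr hr'⟩
    have hsum := Finset.sum_le_sum (fun c (_ : c ∈ (Finset.univ : Finset (P → Fin K))) => hdet c)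
    simp only [Finset.sum_add_distrib, ← Finset.sum_mul, Finset.sum_const, Finset.card_univ, Fintype.card_fun,
      Fintype.card_fin, Fintype.card_coe, smul_eq_mul] at hsum
    have hSP : ∀ p : (((ℝ × ℝ) × ℝ) × (ℝ × ℝ)) × (((ℝ × ℝ) × ℝ) × (ℝ × ℝ)), p.1 ∈ E → p.2 ∈ E → SP p ⊆ P := by
      intro p h1 h2 v hv
      simp only [SP, Finset.mem_insert, Finset.mem_singleton] at hv
      rcases hv with rfl | rfl
      · exact hEP _ h1
      · exact hEP _ h2
    have e1 := sum_sample P K E SE 1 (fun e he => Finset.singleton_subset_iff.2 (hEP e he))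
      (fun e _ => Finset.card_singleton _)
    have e3 := sum_sample P K Par SP 2 (fun p hp => hSP p (hParE p hp).1 (hParE p hp).2.1)
      (fun p hp => Finset.card_pair (hParE p hp).2.2)
    have e5 := sum_sample P K Ind SP 2 (fun p hp => hSP p (hIndE p hp).1 (hIndE p hp).2.1)
      (fun p hp => by
        obtain ⟨h1, h2, h3, h4⟩ := hIndE p hp
        exact Finset.card_pair (hCrp _ (hEsub _ h1) _ (hEsub _ h2) h3 h4))
    have e4 := sum_sample P K Adj SP 2 (fun p hp => by
        obtain ⟨h1, h2, h3, h4⟩ := hIndE p (Finset.mem_filter.1 hp).1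
        exact hSP p h1 h2)
      (fun p hp => by
        obtain ⟨h1, h2, h3, h4⟩ := hIndE p (Finset.mem_filter.1 hp).1
        exact Finset.card_pair (hCrp _ (hEsub _ h1) _ (hEsub _ h2) h3 h4))
    have hfin : E.card * q ^ 2 * K ≤ 3 * L.card * q ^ 3 * K ^ 2 + Par.card * q ^ 2 + Adj.card * q + Ind.card := by
      have hpos : 0 < K ^ P.card := pow_pos hK _
      refine Nat.le_of_mul_le_mul_right ?_ hpos
      have hmul := Nat.mul_le_mul_right (K ^ 2) hsum
      simp only [Rr] at hmul
      set s1 := ∑ c : P → Fin K, (E.filter (fun e => ∀ v : P, (v : ℝ × ℝ) ∈ SE e → c v = 0)).card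
      set s3 := ∑ c : P → Fin K, (Par.filter (fun e => ∀ v : P, (v : ℝ × ℝ) ∈ SP e → c v = 0)).card
      set s4 := ∑ c : P → Fin K, (Adj.filter (fun e => ∀ v : P, (v : ℝ × ℝ) ∈ SP e → c v = 0)).card
      set s5 := ∑ c : P → Fin K, (Ind.filter (fun e => ∀ v : P, (v : ℝ × ℝ) ∈ SP e → c v = 0)).card
      calc E.card * q ^ 2 * K * K ^ P.card = (E.card * K ^ P.card) * (q ^ 2 * K) := by ring
        _ = s1 * q ^ 2 * K ^ 2 := by rw [← e1]; ring
        _ ≤ (K ^ P.card * (3 * L.card * q ^ 3) + s3 * q ^ 2 + s4 * q + s5) * K ^ 2 :=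
          hmul.trans (le_of_eq (by ring))
        _ = K ^ P.card * (3 * L.card * q ^ 3) * K ^ 2 + (s3 * K ^ 2) * q ^ 2 + (s4 * K ^ 2) * q + s5 * K ^ 2 := by ring
        _ = _ := by rw [e3, e4, e5]; ring
    refine hfin.trans ?_
    have g1 : Par.card * q ^ 2 ≤ E.card * k * q ^ 2 := by
      rw [mul_comm E.card k]; gcongr
    have g2 : Adj.card * q ≤ 2 * (P.card ^ 2 * T) * q := by
      refine Nat.mul_le_mul_right _ (hAdjc.trans ?_)
      have : Γ.card * P.card ≤ P.card * T * P.card := by gcongr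
      calc 2 * (Γ.card * P.card) ≤ 2 * (P.card * T * P.card) := by gcongr
        _ = _ := by ring
    have g3 : Ind.card ≤ 2 * (P.card * T) ^ 2 := hIndc.trans (by gcongr)
    omega


theorem arith_core (m n T k K q s E R A : ℝ) (hA : A = 18432) (hm : 10 ^ 6 ≤ m) (hT : 1 ≤ T) (hn : 1000 * T ≤ n)
    (hs : 0 ≤ s) (hs2 : s ^ 2 * n = A * T * m) (hks : s ≤ k) (hk2 : 2 ≤ k) (hK : K = 4 * k)
    (hq1 : q * (24 * K) ≤ m) (hq2 : m ≤ 2 * (q * (24 * K))) (hq : 1 ≤ q) (hE : 0 ≤ E)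
    (h1 : m * n ≤ E + R + m * T) (h2 : R ≤ T * (2304 * m ^ 2 / k ^ 2 + 25 * m))
    (h3 : E * q ^ 2 * K ≤ 3 * n * q ^ 3 * K ^ 2 + E * k * q ^ 2 + 2 * (m ^ 2 * T) * q + 2 * (m * T) ^ 2) :
    m * n ≤ 200000 * K * T ^ 2 := by
  subst hA
  have hm0 : 0 < m := by linarith
  have hn0 : 0 < n := by linarith
  have hk0 : 0 < k := by linarith
  have hq0 : 0 < q := by linarith
  have hK0 : 0 < K := by linarith
  -- R bound
  have hkk : s ^ 2 ≤ k ^ 2 := by gcongr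
  have hR1 : T * (2304 * m ^ 2 / k ^ 2) ≤ m * n / 8 := by
    rw [← mul_div_assoc, div_le_iff₀ (by positivity)]
    have : 18432 * T * m ≤ k ^ 2 * n := by rw [← hs2]; gcongr
    nlinarith [mul_le_mul_of_nonneg_left this hm0.le]
  have hR2 : m * T * 1000 ≤ m * n := by nlinarith
  have hE2 : m * n / 2 ≤ E := by
    have : R ≤ m * n / 8 + 25 * (m * T) := by nlinarith
    have h0 : 0 < m * n := by positivity
    linarith
  -- divide
  have a1 : 3 * n * q ^ 3 * K ^ 2 ≤ (m * n / 8) * (q ^ 2 * K) := by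
    have e : 3 * n * q ^ 3 * K ^ 2 = (n / 8 * (q ^ 2 * K)) * (q * (24 * K)) := by ring
    rw [e]
    calc _ ≤ (n / 8 * (q ^ 2 * K)) * m := by gcongr
      _ = _ := by ring
  have a2 : E * k * q ^ 2 = E / 4 * (q ^ 2 * K) := by rw [hK]; ring
  have a3 : 2 * (m ^ 2 * T) * q ≤ (m * n / 8) * (q ^ 2 * K) := by
    have : m * (16 * T) ≤ n * (q * K) := by nlinarith [mul_pos hn0 (mul_pos hq0 hK0), mul_pos hm0 hn0]
    have := mul_le_mul_of_nonneg_left this (mul_pos hm0 hq0).le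
    nlinarith
  have a4 : (m * n / 8) * (q ^ 2 * K) ≤ 2 * (m * T) ^ 2 := by
    have : m * n / 2 * (3 / 4 * (q ^ 2 * K)) ≤ E * (3 / 4 * (q ^ 2 * K)) := by gcongr
    nlinarith
  -- multiply by 48^2 K
  have a5 : m ^ 2 ≤ (48 * (q * K)) ^ 2 := by
    apply pow_le_pow_left₀ hm0.le; linarith
  have a6 : (m * n) * m ^ 2 ≤ (200000 * K * T ^ 2) * m ^ 2 := by
    calc (m * n) * m ^ 2 ≤ (m * n) * (48 * (q * K)) ^ 2 := by gcongr
      _ = 8 * 2304 * K * ((m * n / 8) * (q ^ 2 * K)) := by ring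
      _ ≤ 8 * 2304 * K * (2 * (m * T) ^ 2) := by gcongr
      _ = (36864 * K * T ^ 2) * m ^ 2 := by ring
      _ ≤ _ := by gcongr; norm_num
  exact le_of_mul_le_mul_right a6 (by positivity)

theorem arith_fin (m n T k K s : ℝ) (hm : 1 ≤ m) (hn : 1 ≤ n) (hT : 1 ≤ T)
    (hnm : n ≤ m ^ 2)
    (hs : 0 ≤ s) (hs2 : s ^ 2 * n = 18432 * T * m) (hks : k ≤ s + 2) (hK : K = 4 * k) (hk : 0 ≤ k)
    (h : m * n ≤ 200000 * K * T ^ 2) : m * n ^ 3 ≤ 10 ^ 42 * T ^ 5 := by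
  have hm0 : 0 < m := by linarith
  have hn0 : 0 < n := by linarith
  rcases le_total 2 s with h2 | h2
  · have hKs : K ≤ 8 * s := by linarith
    have b1 : m * n ≤ 1600000 * s * T ^ 2 := by
      calc m * n ≤ 200000 * K * T ^ 2 := h
        _ ≤ 200000 * (8 * s) * T ^ 2 := by gcongr
        _ = _ := by ring
    have b2 : (m * n) ^ 2 ≤ (1600000 * s * T ^ 2) ^ 2 := by
      apply pow_le_pow_left₀ (by positivity) b1
    have b3 : (m * n ^ 3) * m ≤ (10 ^ 42 * T ^ 5) * m := by
      calc (m * n ^ 3) * m = (m * n) ^ 2 * n := by ring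
        _ ≤ (1600000 * s * T ^ 2) ^ 2 * n := by gcongr
        _ = 1600000 ^ 2 * T ^ 4 * (s ^ 2 * n) := by ring
        _ = (1600000 ^ 2 * 18432) * T ^ 5 * m := by rw [hs2]; ring
        _ ≤ _ := by gcongr; norm_num
    exact le_of_mul_le_mul_right b3 hm0
  · have hKs : K ≤ 16 := by linarith
    have b1 : m * n ≤ 3200000 * T ^ 2 := by
      calc m * n ≤ 200000 * K * T ^ 2 := h
        _ ≤ 200000 * 16 * T ^ 2 := by gcongr
        _ = _ := by ring
    have b2 : (m * n) ^ 5 ≤ (3200000 * T ^ 2) ^ 5 := by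
      apply pow_le_pow_left₀ (by positivity) b1
    have b4 : n ≤ m ^ 3 := hnm.trans (pow_le_pow_right₀ hm (by norm_num))
    have b3 : (m * n ^ 3) ^ 2 ≤ (10 ^ 42 * T ^ 5) ^ 2 := by
      calc (m * n ^ 3) ^ 2 = m ^ 2 * n ^ 5 * n := by ring
        _ ≤ m ^ 2 * n ^ 5 * m ^ 3 := by gcongr
        _ = (m * n) ^ 5 := by ring
        _ ≤ (3200000 * T ^ 2) ^ 5 := b2
        _ = 3200000 ^ 5 * T ^ 10 := by ring
        _ ≤ (10 ^ 42) ^ 2 * T ^ 10 := by gcongr; norm_num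
        _ = _ := by ring
    exact le_of_sq_le_sq b3 (by positivity)

theorem main_bound (P L : Finset (ℝ × ℝ)) (hL : ∀ l ∈ L, 0 ≤ l.1 ∧ l.1 < Real.pi) (T : ℕ)
    (hT : ∀ p ∈ P, (L.image (sgd p)).card ≤ T) (hT1 : 1 ≤ T) (hm : 0 < P.card) (hn : 0 < L.card)
    (h1 : P.card ≤ L.card ^ 2) (h2 : L.card ≤ P.card ^ 2) :
    (P.card : ℝ) * (L.card : ℝ) ^ 3 ≤ 10 ^ 42 * (T : ℝ) ^ 5 := by
  have key := tangency_ineq P L hL T (by convert hT)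
  generalize P.card = m at *
  generalize L.card = n at *
  have hT1' : (1 : ℝ) ≤ T := by exact_mod_cast hT1
  have h1' : (m : ℝ) ≤ (n : ℝ) ^ 2 := by exact_mod_cast h1
  have h2' : (n : ℝ) ≤ (m : ℝ) ^ 2 := by exact_mod_cast h2
  have hm' : (1 : ℝ) ≤ m := by exact_mod_cast hm
  have hn' : (1 : ℝ) ≤ n := by exact_mod_cast hn
  rcases lt_or_ge (m : ℝ) (10 ^ 6) with hc | hc
  · calc (m : ℝ) * (n : ℝ) ^ 3 ≤ m * (m ^ 2) ^ 3 := by gcongr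
      _ = (m : ℝ) ^ 7 := by ring
      _ ≤ (10 ^ 6) ^ 7 := by gcongr
      _ = 10 ^ 42 * 1 ^ 5 := by norm_num
      _ ≤ _ := by gcongr
  rcases lt_or_ge (n : ℝ) (1000 * T) with hc2 | hc2
  · calc (m : ℝ) * (n : ℝ) ^ 3 ≤ (n : ℝ) ^ 2 * n ^ 3 := by gcongr
      _ = (n : ℝ) ^ 5 := by ring
      _ ≤ (1000 * T) ^ 5 := by gcongr
      _ = 1000 ^ 5 * (T : ℝ) ^ 5 := by ring
      _ ≤ _ := by gcongr; norm_num
  have hn0 : (0 : ℝ) < n := by linarith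
  obtain ⟨s, hs, hs2⟩ : ∃ s : ℝ, 0 ≤ s ∧ s ^ 2 * n = 18432 * T * m := by
    refine ⟨Real.sqrt (18432 * T * m / n), Real.sqrt_nonneg _, ?_⟩
    rw [Real.sq_sqrt (by positivity)]
    field_simp
  obtain ⟨k, hk1, hk2, hk3⟩ : ∃ k : ℕ, 2 ≤ k ∧ s ≤ k ∧ (k : ℝ) ≤ s + 2 := by
    refine ⟨⌊s⌋₊ + 2, by omega, ?_, ?_⟩
    · push_cast; linarith [Nat.lt_floor_add_one s]
    · push_cast; linarith [Nat.floor_le hs]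
  have hsm : s ^ 2 ≤ 19 * m := by
    have : s ^ 2 * n ≤ 19 * m * n := by
      rw [hs2]; nlinarith
    exact le_of_mul_le_mul_right this hn0
  have hkm : 96 * (k : ℝ) ≤ m := by
    have : 96 * s + 192 ≤ m := by nlinarith [sq_nonneg (s - 1824)]
    linarith
  have hk0 : (2 : ℝ) ≤ k := by exact_mod_cast hk1
  obtain ⟨q, hq0, hq1, hq2⟩ : ∃ q : ℕ, 0 < q ∧ (q : ℝ) * (24 * (4 * k)) ≤ m ∧ (m : ℝ) ≤ 2 * (q * (24 * (4 * k))) := by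
    have hpos : (0 : ℝ) < 24 * (4 * k) := by linarith
    have hge : (1 : ℝ) ≤ m / (24 * (4 * k)) := by
      rw [le_div_iff₀ hpos]; linarith
    have hq : 0 < ⌊(m : ℝ) / (24 * (4 * k))⌋₊ := Nat.floor_pos.2 hge
    refine ⟨⌊(m : ℝ) / (24 * (4 * k))⌋₊, hq, ?_, ?_⟩
    · rw [← le_div_iff₀ hpos]; exact Nat.floor_le (by positivity)
    · have := Nat.lt_floor_add_one ((m : ℝ) / (24 * (4 * k)))
      rw [div_lt_iff₀ hpos] at this
      have h1 : (1 : ℝ) ≤ ⌊(m : ℝ) / (24 * (4 * k))⌋₊ := by exact_mod_cast hq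
      nlinarith
  obtain ⟨E, R, e1, e2, e3⟩ := key k (4 * k) q hk1 (by omega) hq0
  have e1' : (m : ℝ) * n ≤ E + R + m * T := by exact_mod_cast e1
  have e3' : (E : ℝ) * q ^ 2 * (4 * k) ≤ 3 * n * q ^ 3 * (4 * k) ^ 2 + E * k * q ^ 2
      + 2 * ((m : ℝ) ^ 2 * T) * q + 2 * ((m : ℝ) * T) ^ 2 := by exact_mod_cast e3
  have := arith_core m n T k (4 * k) q s E R 18432 rfl hc hT1' hc2 hs hs2 hk2 hk0 rfl hq1 hq2
    (by exact_mod_cast hq0) (by positivity) e1' e2 e3'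
  exact arith_fin m n T k (4 * k) s hm' hn' hT1' h2' hs hs2 hk3 rfl (by positivity) this

theorem polar_half (x y : ℝ) (h : x ≠ 0 ∨ y ≠ 0) :
    ∃ θ r : ℝ, 0 ≤ θ ∧ θ < Real.pi ∧ r ≠ 0 ∧ x = r * Real.cos θ ∧ y = r * Real.sin θ := by
  set z : ℂ := ⟨x, y⟩ with hz
  have hz0 : z ≠ 0 := by
    intro h0
    have h1 : x = 0 := congrArg Complex.re h0
    have h2 : y = 0 := congrArg Complex.im h0
    tauto
  have hr : ‖z‖ ≠ 0 := norm_ne_zero_iff.2 hz0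
  have hx : x = ‖z‖ * Real.cos z.arg := by rw [Complex.norm_mul_cos_arg]
  have hy : y = ‖z‖ * Real.sin z.arg := by rw [Complex.norm_mul_sin_arg]
  have hpi := Real.pi_pos
  have l1 := Complex.neg_pi_lt_arg z
  have l2 := Complex.arg_le_pi z
  rcases lt_or_ge z.arg 0 with h0 | h0
  · refine ⟨z.arg + Real.pi, -‖z‖, by linarith, by linarith, neg_ne_zero.2 hr, ?_, ?_⟩
    · rw [Real.cos_add_pi]; linarith
    · rw [Real.sin_add_pi]; linarith
  · rcases lt_or_eq_of_le l2 with h3 | h3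
    · exact ⟨z.arg, ‖z‖, h0, h3, hr, hx, hy⟩
    · refine ⟨0, -‖z‖, le_refl _, hpi, neg_ne_zero.2 hr, ?_, ?_⟩
      · rw [h3, Real.cos_pi] at hx; rw [Real.cos_zero]; linarith
      · rw [h3, Real.sin_pi] at hy; rw [Real.sin_zero]; linarith

theorem line_form (l : Set Pt2) (hl : IsLine2 l) :
    ∃ w : ℝ × ℝ, (0 ≤ w.1 ∧ w.1 < Real.pi) ∧
      l = {x : Pt2 | x 0 * Real.cos w.1 + x 1 * Real.sin w.1 = w.2} ∧
      ∀ p : Pt2, Metric.infDist p l = |sgd (p 0, p 1) w| := by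
  obtain ⟨a, v, hv, hl⟩ := hl
  have hv' : v 1 ≠ 0 ∨ - v 0 ≠ 0 := by
    by_contra hc
    push Not at hc
    apply hv
    ext i
    fin_cases i
    · simpa using hc.2
    · simpa using hc.1
  obtain ⟨θ, r, h0, h1, hr, e1, e2⟩ := polar_half _ _ hv'
  have hcs := Real.sin_sq_add_cos_sq θ
  have hform : l = {x : Pt2 | x 0 * Real.cos θ + x 1 * Real.sin θ = a 0 * Real.cos θ + a 1 * Real.sin θ} := by
    rw [hl]
    ext x
    constructor
    · rintro ⟨t, rfl⟩
      show (a + t • v) 0 * Real.cos θ + (a + t • v) 1 * Real.sin θ = a 0 * Real.cos θ + a 1 * Real.sin θ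
      have e3 : v 0 = - (r * Real.sin θ) := by linarith
      simp only [PiLp.add_apply, PiLp.smul_apply, smul_eq_mul, e1, e3]
      ring
    · intro hx
      have hx' : x 0 * Real.cos θ + x 1 * Real.sin θ = a 0 * Real.cos θ + a 1 * Real.sin θ := hx
      have e3 : v 0 = - (r * Real.sin θ) := by linarith
      refine ⟨(-(x 0 - a 0) * Real.sin θ + (x 1 - a 1) * Real.cos θ) / r, ?_⟩
      ext i
      fin_cases i
      · show x 0 = (a + _ • v) 0
        simp only [PiLp.add_apply, PiLp.smul_apply, smul_eq_mul, e3]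
        field_simp
        linear_combination Real.cos θ * hx' - (x 0 - a 0) * hcs
      · show x 1 = (a + _ • v) 1
        simp only [PiLp.add_apply, PiLp.smul_apply, smul_eq_mul, e1]
        field_simp
        linear_combination Real.sin θ * hx' - (x 1 - a 1) * hcs
  refine ⟨(θ, a 0 * Real.cos θ + a 1 * Real.sin θ), ⟨h0, h1⟩, hform, ?_⟩
  intro p
  set σ := sgd (p 0, p 1) (θ, a 0 * Real.cos θ + a 1 * Real.sin θ) with hσ
  have hσ' : σ = (a 0 * Real.cos θ + a 1 * Real.sin θ) - (p 0 * Real.cos θ + p 1 * Real.sin θ) := rfl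
  have hf : (!₂[p 0 + σ * Real.cos θ, p 1 + σ * Real.sin θ] : Pt2) ∈ l := by
    rw [hform]
    show (p 0 + σ * Real.cos θ) * Real.cos θ + (p 1 + σ * Real.sin θ) * Real.sin θ = _
    linear_combination σ * hcs + hσ'
  apply le_antisymm
  · refine (Metric.infDist_le_dist_of_mem hf).trans (le_of_eq ?_)
    rw [EuclideanSpace.dist_eq, Fin.sum_univ_two, Real.dist_eq, Real.dist_eq, sq_abs, sq_abs, ← Real.sqrt_sq_eq_abs]
    congr 1
    show (p 0 - (p 0 + σ * Real.cos θ)) ^ 2 + (p 1 - (p 1 + σ * Real.sin θ)) ^ 2 = σ ^ 2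
    linear_combination σ ^ 2 * hcs
  · rw [Metric.le_infDist ⟨_, hf⟩]
    intro y hy
    rw [hform] at hy
    have hy' : y 0 * Real.cos θ + y 1 * Real.sin θ = a 0 * Real.cos θ + a 1 * Real.sin θ := hy
    rw [EuclideanSpace.dist_eq, Fin.sum_univ_two, Real.dist_eq, Real.dist_eq, sq_abs, sq_abs, ← Real.sqrt_sq_eq_abs]
    apply Real.sqrt_le_sqrt
    have : σ = -((p 0 - y 0) * Real.cos θ + (p 1 - y 1) * Real.sin θ) := by
      rw [hσ', ← hy']; ring
    have h2 : (p 0 - y 0) ^ 2 + (p 1 - y 1) ^ 2 - σ ^ 2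
        = ((p 0 - y 0) * Real.sin θ - (p 1 - y 1) * Real.cos θ) ^ 2 := by
      rw [this]
      linear_combination (-(p 0 - y 0) ^ 2 - (p 1 - y 1) ^ 2) * hcs
    nlinarith [sq_nonneg ((p 0 - y 0) * Real.sin θ - (p 1 - y 1) * Real.cos θ)]

open Classical in
theorem geo_bound (P : Finset Pt2) (L : Finset (Set Pt2)) (hL : ∀ l ∈ L, IsLine2 l) (T : ℕ)
    (hT : ∀ p ∈ P, 2 * ({d : ℝ | ∃ l ∈ L, d = Metric.infDist p l}).ncard ≤ T)
    (hm : 0 < P.card) (hn : 0 < L.card)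
    (h1 : P.card ≤ L.card ^ 2) (h2 : L.card ≤ P.card ^ 2) :
    (P.card : ℝ) * (L.card : ℝ) ^ 3 ≤ 10 ^ 42 * (T : ℝ) ^ 5 := by
  have hex : ∀ l : Set Pt2, ∃ w : ℝ × ℝ, l ∈ L → (0 ≤ w.1 ∧ w.1 < Real.pi) ∧
      l = {x : Pt2 | x 0 * Real.cos w.1 + x 1 * Real.sin w.1 = w.2} ∧
      ∀ p : Pt2, Metric.infDist p l = |sgd (p 0, p 1) w| := by
    intro l
    by_cases h : l ∈ L
    · obtain ⟨w, hw⟩ := line_form l (hL l h)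
      exact ⟨w, fun _ => hw⟩
    · exact ⟨0, fun h' => absurd h' h⟩
  choose φ hφ using hex
  have hinj : Set.InjOn φ L := by
    intro l hl l' hl' h
    rw [(hφ l hl).2.1, (hφ l' hl').2.1, h]
  have hinjP : Function.Injective (fun p : Pt2 => ((p 0, p 1) : ℝ × ℝ)) := by
    intro p p' h
    have h3 := congrArg Prod.fst h
    have h4 := congrArg Prod.snd h
    ext i
    fin_cases i
    · exact h3
    · exact h4
  have cL : (L.image φ).card = L.card := Finset.card_image_of_injOn hinj
  have cP : (P.image (fun p : Pt2 => ((p 0, p 1) : ℝ × ℝ))).card = P.card :=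
    Finset.card_image_of_injective _ hinjP
  have hset : ∀ p : Pt2, ({d : ℝ | ∃ l ∈ L, d = Metric.infDist p l}).ncard
      = (L.image (fun l => Metric.infDist p l)).card := by
    intro p
    rw [← Set.ncard_coe_finset]
    congr 1
    ext d
    simp only [Finset.coe_image, Set.mem_image, Finset.mem_coe]
    constructor
    · rintro ⟨l, hl, rfl⟩; exact ⟨l, hl, rfl⟩
    · rintro ⟨l, hl, rfl⟩; exact ⟨l, hl, rfl⟩
  have hT' : ∀ p ∈ P.image (fun p : Pt2 => ((p 0, p 1) : ℝ × ℝ)),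
      ((L.image φ).image (sgd p)).card ≤ T := by
    intro p' hp'
    obtain ⟨p, hp, rfl⟩ := Finset.mem_image.1 hp'
    refine le_trans ?_ (hT p hp)
    rw [hset p]
    set D := L.image (fun l => Metric.infDist p l) with hD
    have hsub : (L.image φ).image (sgd (p 0, p 1)) ⊆ D ∪ D.image (fun x => -x) := by
      intro x hx
      obtain ⟨w, hw, rfl⟩ := Finset.mem_image.1 hx
      obtain ⟨l, hl, rfl⟩ := Finset.mem_image.1 hw
      have hd := (hφ l hl).2.2 p
      have hmem : Metric.infDist p l ∈ D := Finset.mem_image_of_mem _ hl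
      rcases abs_choice (sgd (p 0, p 1) (φ l)) with h | h
      · rw [h] at hd
        rw [← hd]
        exact Finset.mem_union_left _ hmem
      · rw [h] at hd
        refine Finset.mem_union_right _ (Finset.mem_image.2 ⟨_, hmem, ?_⟩)
        rw [hd, neg_neg]
    calc _ ≤ (D ∪ D.image (fun x => -x)).card := Finset.card_le_card hsub
      _ ≤ D.card + (D.image (fun x => -x)).card := Finset.card_union_le _ _
      _ ≤ D.card + D.card := Nat.add_le_add_left Finset.card_image_le _
      _ = _ := by ring
  have hT1 : 1 ≤ T := by
    obtain ⟨p, hp⟩ := Finset.card_pos.1 hm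
    obtain ⟨l, hl⟩ := Finset.card_pos.1 hn
    have := hT p hp
    rw [hset p] at this
    have h3 : 0 < (L.image (fun l => Metric.infDist p l)).card :=
      Finset.card_pos.2 ⟨_, Finset.mem_image_of_mem _ hl⟩
    omega
  have := main_bound (P.image (fun p : Pt2 => ((p 0, p 1) : ℝ × ℝ))) (L.image φ) (by
    intro w hw
    obtain ⟨l, hl, rfl⟩ := Finset.mem_image.1 hw
    exact (hφ l hl).1) T (by convert hT') hT1 (by rw [cP]; exact hm) (by rw [cL]; exact hn)
    (by rw [cP, cL]; exact h1) (by rw [cP, cL]; exact h2)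
  rwa [cP, cL] at this

theorem distinct_distances_from_single_point :
    ∃ c : ℝ, 0 < c ∧
      ∀ (m n : ℕ), 0 < m → 0 < n →
        (m : ℝ) ^ ((1 : ℝ) / 2) ≤ (n : ℝ) → (n : ℝ) ≤ (m : ℝ) ^ 2 →
        ∀ (P : Finset Pt2) (L : Finset (Set Pt2)),
          P.card = m → L.card = n → (∀ l ∈ L, IsLine2 l) →
          ∃ p ∈ P,
            c * (m : ℝ) ^ ((1 : ℝ) / 5) * (n : ℝ) ^ ((3 : ℝ) / 5) ≤
              (({d : ℝ | ∃ l ∈ L, d = Metric.infDist p l}).ncard : ℝ) := by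
  refine ⟨1 / (4 * 10 ^ 42), by positivity, ?_⟩
  intro m n hm hn h1 h2 P L hP hL hlines
  by_contra hcon
  push Not at hcon
  have hm0 : (0 : ℝ) < m := by exact_mod_cast hm
  have hn0 : (0 : ℝ) < n := by exact_mod_cast hn
  set B : ℝ := (m : ℝ) ^ ((1 : ℝ) / 5) * (n : ℝ) ^ ((3 : ℝ) / 5) with hB
  have hB0 : 0 < B := by positivity
  have hB5 : B ^ 5 = m * (n : ℝ) ^ 3 := by
    rw [hB, mul_pow, ← Real.rpow_natCast ((m : ℝ) ^ ((1 : ℝ) / 5)), ← Real.rpow_natCast ((n : ℝ) ^ ((3 : ℝ) / 5)),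
      ← Real.rpow_mul hm0.le, ← Real.rpow_mul hn0.le, ← Real.rpow_natCast (n : ℝ) 3]
    norm_num
  have h1' : m ≤ n ^ 2 := by
    have : ((m : ℝ) ^ ((1 : ℝ) / 2)) ^ 2 ≤ (n : ℝ) ^ 2 := by gcongr
    rw [← Real.sqrt_eq_rpow, Real.sq_sqrt hm0.le] at this
    exact_mod_cast this
  have h2' : n ≤ m ^ 2 := by exact_mod_cast h2
  set c : ℝ := 1 / (4 * 10 ^ 42) with hc
  have hc0 : 0 < c := by positivity
  have hgeo := geo_bound P L hlines ⌊2 * (c * B)⌋₊ (by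
    intro p hp
    have h3 := hcon p hp
    apply Nat.le_floor
    push_cast
    rw [mul_assoc, ← hB] at h3
    linarith) (by omega) (by omega) (by rw [hP, hL]; exact h1') (by rw [hP, hL]; exact h2')
  rw [hP, hL, ← hB5] at hgeo
  have hfl : ((⌊2 * (c * B)⌋₊ : ℕ) : ℝ) ≤ 2 * (c * B) := Nat.floor_le (by positivity)
  have h5 : B ^ 5 ≤ 10 ^ 42 * (2 * (c * B)) ^ 5 := hgeo.trans (by gcongr)
  have h6 : 10 ^ 42 * (2 * (c * B)) ^ 5 = (10 ^ 42 * 32 * c ^ 5) * B ^ 5 := by ring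
  rw [h6] at h5
  have h7 : (10 ^ 42 * 32 * c ^ 5) < 1 := by
    rw [hc]; norm_num
  have h8 : 0 < B ^ 5 := by positivity
  nlinarith
end
end
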